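/- arXiv:1609.05776 — 4 statements merged into one kernel-verified Lean document; each statement's English description precedes it below -/
import Mathlib

section
/- (Dirichlet) Let p be a prime with p ≡ 3 (mod 4). Then the sum of the Legendre symbols (n/p) for n ranging from 1 to (p−1)/2 is strictly positive. -/
open Polynomial

/-- The Euler operator `X d/dX` on polynomials. -/
noncomputable def eulerOp (R : Type*) [CommRing R] : R[X] →ₗ[R] R[X] :=
  (LinearMap.mulLeft R (X : R[X])) ∘ₗ (derivative : R[X] →ₗ[R] R[X])

lemma eulerOp_apply {R : Type*} [CommRing R] (f : R[X]) : eulerOp R f = X * derivative f := rfl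

lemma eulerOp_pow_X_pow {R : Type*} [CommRing R] (n j : ℕ) :
    ((eulerOp R) ^ n) (X ^ j) = C ((j : R) ^ n) * X ^ j := by
  induction n with
  | zero => simp
  | succ n ih =>
    rw [pow_succ', Module.End.mul_apply, ih, eulerOp_apply]
    rcases j with _ | j
    · rw [pow_zero, mul_one, derivative_C]; simp
    · simp only [derivative_C_mul, derivative_X_pow, Nat.add_sub_cancel]
      simp only [C_pow, map_natCast, map_add, map_one, Nat.cast_add, Nat.cast_one]
      ring

lemma eulerOp_pow_eval {R : Type*} [CommRing R] (n : ℕ) : ∀ Q : R[X],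
    eval 1 (((eulerOp R) ^ n) ((X - 1) ^ n * Q)) = (n.factorial : R) * eval 1 Q := by
  induction n with
  | zero => simp
  | succ n ih =>
    intro Q
    rw [pow_succ, Module.End.mul_apply, eulerOp_apply]
    have : (X : R[X]) * derivative ((X - 1) ^ (n + 1) * Q)
        = (X - 1) ^ n * (((n + 1 : ℕ) : R[X]) * X * Q + (X - 1) * (X * derivative Q)) := by
      simp only [derivative_mul, derivative_pow, derivative_sub, derivative_X, derivative_one,
        Nat.add_sub_cancel, map_natCast]
      push_cast
      ring
    rw [this, ih]
    simp only [eval_add, eval_mul, eval_sub, eval_X, eval_one, eval_natCast, Nat.factorial_succ]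
    push_cast
    ring

lemma prod_factor {R : Type*} [CommRing R] (m p : ℕ) :
    ∏ k ∈ Finset.range m, ((X : R[X]) ^ (k + 1) - X ^ (p - (k + 1))) = (X - 1) ^ m *
      ∏ k ∈ Finset.range m,
        (∑ i ∈ Finset.range (k + 1), (X : R[X]) ^ i - ∑ i ∈ Finset.range (p - (k + 1)), X ^ i) := by
  have h : (X - 1 : R[X]) ^ m = ∏ k ∈ Finset.range m, (X - 1) := by simp
  rw [h, ← Finset.prod_mul_distrib]
  refine Finset.prod_congr rfl fun k _ => ?_
  rw [mul_sub, mul_geom_sum, mul_geom_sum]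
  ring

/-- `(m!)^2 = 1` mod `p = 2 m + 1`, `m` odd. -/
lemma half_factorial_sq (p m : ℕ) [Fact p.Prime] (hp : p = 2 * m + 1) (hm : Odd m) :
    ((m.factorial : ZMod p)) ^ 2 = 1 := by
  have h := ZMod.wilsons_lemma p
  have h2 : (p - 1).factorial = m.factorial * ∏ k ∈ Finset.range m, (p - (k + 1)) := by
    have : p - 1 = m + m := by omega
    rw [this, ← Nat.factorial_mul_ascFactorial, Nat.ascFactorial_eq_prod_range,
      ← Finset.prod_range_reflect]
    congr 1
    refine Finset.prod_congr rfl fun k hk => ?_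
    have := Finset.mem_range.1 hk
    omega
  have h3 : ((∏ k ∈ Finset.range m, (p - (k + 1)) : ℕ) : ZMod p) = - (m.factorial : ZMod p) := by
    rw [← Finset.prod_range_add_one_eq_factorial]
    push_cast
    have : ∀ k ∈ Finset.range m, ((p - (k + 1) : ℕ) : ZMod p) = (-1) * ((k : ZMod p) + 1) := by
      intro k hk
      have := Finset.mem_range.1 hk
      rw [Nat.cast_sub (by omega)]
      simp
    rw [Finset.prod_congr rfl this, Finset.prod_mul_distrib]
    simp [hm.neg_one_pow]
  rw [h2, Nat.cast_mul, h3] at h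
  linear_combination -h

lemma sign_aux (p m : ℕ) [Fact p.Prime] (hp : p = 2 * m + 1) (hm : Odd m) (ε : ℤ) (ζ : ℂ)
    (hζ : IsPrimitiveRoot ζ p)
    (h : ∑ j ∈ Finset.range p, ((legendreSym p j : ℤ) : ℂ) * ζ ^ j
      = ε * ∏ k ∈ Finset.range m, (ζ ^ (k + 1) - ζ ^ (p - (k + 1)))) :
    ((ε * legendreSym p 2 : ℤ) : ZMod p) = -1 := by
  have hpp : p.Prime := Fact.out
  set f : ℤ[X] := ∑ j ∈ Finset.range p, C (legendreSym p j) * X ^ j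
      - C ε * ∏ k ∈ Finset.range m, (X ^ (k + 1) - X ^ (p - (k + 1))) with hf
  have hroot : aeval ζ f = 0 := by
    simp only [hf, map_sub, map_sum, map_mul, map_prod, map_pow, aeval_X, aeval_C]
    simp only [algebraMap_int_eq, eq_intCast]
    rw [h]; ring
  have hdvd : cyclotomic p ℤ ∣ f := by
    rw [cyclotomic_eq_minpoly hζ hpp.pos]
    exact minpoly.isIntegrallyClosed_dvd (hζ.isIntegral hpp.pos) hroot
  have hd2 : (X - 1 : (ZMod p)[X]) ^ (p - 1) ∣ f.map (Int.castRingHom (ZMod p)) := by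
    have := Polynomial.map_dvd (Int.castRingHom (ZMod p)) hdvd
    rw [map_cyclotomic] at this
    have h1 := cyclotomic_mul_prime_eq_pow_of_not_dvd (ZMod p) (p := p) (n := 1)
      (by simpa using hpp.one_lt.ne')
    rw [one_mul, cyclotomic_one] at h1
    rwa [h1] at this
  have hm0 : 0 < m := hm.pos
  obtain ⟨Q, hQ⟩ := (pow_dvd_pow (X - 1 : (ZMod p)[X]) (show m + 1 ≤ p - 1 by
    omega)).trans hd2
  have key := eulerOp_pow_eval (R := ZMod p) m ((X - 1) * Q)
  rw [← mul_assoc, ← pow_succ, ← hQ, hf] at key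
  simp only [Polynomial.map_sub, Polynomial.map_sum, Polynomial.map_mul, Polynomial.map_prod,
    Polynomial.map_pow, map_X, map_C] at key
  rw [prod_factor] at key
  rw [map_sub, eval_sub, map_sum, eval_finsetSum] at key
  simp only [← smul_eq_C_mul, map_smul, eval_smul, eulerOp_pow_eval, eulerOp_pow_X_pow] at key
  have hs : ∀ j ∈ Finset.range p, (Int.castRingHom (ZMod p)) (legendreSym p j) •
      ((j : ZMod p) ^ m • (1 : ZMod p)) = if j = 0 then 0 else 1 := by
    intro j hj
    have hj' := Finset.mem_range.1 hj
    rw [eq_intCast, legendreSym.eq_pow]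
    have : p / 2 = m := by omega
    rw [this]
    split_ifs with h0
    · simp [h0, hm0.ne']
    · have : (j : ZMod p) ≠ 0 := by
        rw [Ne, ZMod.natCast_eq_zero_iff]
        exact Nat.not_dvd_of_pos_of_lt (Nat.pos_of_ne_zero h0) hj'
      have h2 := ZMod.pow_card_sub_one_eq_one this
      simp only [Int.cast_natCast, smul_eq_mul, mul_one]
      rw [← pow_add, ← h2]; congr 1; omega
  simp only [eval_pow, eval_X, one_pow, eval_mul, eval_sub, eval_one, sub_self,
    zero_mul, mul_zero, eval_prod, eval_finsetSum, Finset.sum_const, Finset.card_range] at key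
  rw [Finset.sum_congr rfl hs] at key
  have hs2 : ∑ j ∈ Finset.range p, (if j = 0 then (0 : ZMod p) else 1) = -1 := by
    rw [show Finset.range p = Finset.range (2 * m + 1) by rw [← hp], Finset.sum_range_succ']
    have : ((2 * m + 1 : ℕ) : ZMod p) = 0 := by rw [← hp]; simp
    push_cast at this
    simp
    linear_combination this
  have hs3 : ∏ k ∈ Finset.range m, ((k + 1) • (1 : ZMod p) - (p - (k + 1)) • (1 : ZMod p))
      = 2 ^ m * (m.factorial : ZMod p) := by
    rw [← Finset.prod_range_add_one_eq_factorial, Nat.cast_prod]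
    have h2 : (2 : ZMod p) ^ m = ∏ k ∈ Finset.range m, 2 := by simp
    rw [h2, ← Finset.prod_mul_distrib]
    refine Finset.prod_congr rfl fun k hk => ?_
    have := Finset.mem_range.1 hk
    rw [nsmul_one, nsmul_one, Nat.cast_sub (by omega)]
    simp
    ring
  have h4 := half_factorial_sq p m hp hm
  have h5 := legendreSym.eq_pow p 2
  have h6 : p / 2 = m := by omega
  rw [h6] at h5
  push_cast at h5 ⊢
  rw [hs2, hs3, smul_eq_mul, eq_intCast] at key
  rw [h5]
  linear_combination (-key) - (ε : ZMod p) * 2 ^ m * h4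
lemma sum_zmod_val {M : Type*} [AddCommMonoid M] (p : ℕ) [NeZero p] (f : ℕ → M) :
    ∑ a : ZMod p, f a.val = ∑ j ∈ Finset.range p, f j := by
  refine Finset.sum_bij (fun a _ => a.val) (fun a _ => ?_) (fun a _ b _ h => ?_)
    (fun b hb => ?_) (fun a _ => rfl)
  · exact Finset.mem_range.2 (ZMod.val_lt a)
  · exact ZMod.val_injective p h
  · exact ⟨(b : ZMod p), Finset.mem_univ _, ZMod.val_cast_of_lt (Finset.mem_range.1 hb)⟩

/-- The quadratic character with complex values. -/
noncomputable def qC (p : ℕ) [Fact p.Prime] : MulChar (ZMod p) ℂ :=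
  (quadraticChar (ZMod p)).ringHomComp (Int.castRingHom ℂ)

lemma qC_apply (p : ℕ) [Fact p.Prime] (a : ZMod p) :
    qC p a = ((legendreSym p a.val : ℤ) : ℂ) := by
  simp [qC, legendreSym, MulChar.ringHomComp_apply]

lemma qC_quad (p : ℕ) [Fact p.Prime] : (qC p).IsQuadratic :=
  (quadraticChar_isQuadratic (ZMod p)).comp _

lemma qC_ne_one (p : ℕ) [Fact p.Prime] (hp : p ≠ 2) : qC p ≠ 1 := by
  refine (MulChar.ringHomComp_ne_one_iff (RingHom.injective_int _)).2 ?_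
  exact quadraticChar_ne_one (by rwa [ZMod.ringChar_zmod_n])

lemma std_eq (p : ℕ) [NeZero p] (a : ZMod p) :
    ZMod.stdAddChar a = Complex.exp (2 * Real.pi * Complex.I / p) ^ a.val := by
  rw [ZMod.stdAddChar_apply, ZMod.toCircle_apply, ← Complex.exp_nat_mul]
  congr 1; ring

lemma gauss_eq (p : ℕ) [Fact p.Prime] : gaussSum (qC p) ZMod.stdAddChar
    = ∑ j ∈ Finset.range p, ((legendreSym p j : ℤ) : ℂ) *
      Complex.exp (2 * Real.pi * Complex.I / p) ^ j := by
  rw [← sum_zmod_val p (fun j => ((legendreSym p j : ℤ) : ℂ) *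
      Complex.exp (2 * Real.pi * Complex.I / p) ^ j)]
  simp only [gaussSum, qC_apply, std_eq]

lemma qC_neg_one (p : ℕ) [Fact p.Prime] (hmod : p % 4 = 3) : qC p (-1) = -1 := by
  have := legendreSym.at_neg_one (p := p) (by omega)
  rw [ZMod.χ₄_nat_three_mod_four hmod] at this
  simp only [legendreSym, Int.cast_neg, Int.cast_one] at this
  simp [qC, MulChar.ringHomComp_apply, this]

lemma gauss_sq (p : ℕ) [Fact p.Prime] (hmod : p % 4 = 3) :
    gaussSum (qC p) ZMod.stdAddChar ^ 2 = -(p : ℂ) := by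
  rw [gaussSum_sq (qC_ne_one p (by omega)) (qC_quad p) (ZMod.isPrimitive_stdAddChar p),
    qC_neg_one p hmod, ZMod.card]
  ring

lemma prod_sq (p m : ℕ) [Fact p.Prime] (hp : p = 2 * m + 1) (hm : Odd m) (ζ : ℂ)
    (hζ : IsPrimitiveRoot ζ p) :
    (∏ k ∈ Finset.range m, (ζ ^ (k + 1) - ζ ^ (p - (k + 1)))) ^ 2 = -(p : ℂ) := by
  have hμ : IsPrimitiveRoot (ζ ^ 2) (m + m + 1) := by
    have : m + m + 1 = p := by omega
    rw [this]
    refine hζ.pow_of_coprime 2 ?_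
    rw [hp]; simp
  have h := hμ.prod_one_sub_pow_eq_order
  rw [Finset.prod_range_add, ← Finset.prod_range_reflect (fun x => 1 - (ζ ^ 2) ^ (m + x + 1)),
    ← Finset.prod_mul_distrib] at h
  have h1 : ∀ k ∈ Finset.range m, (1 - (ζ ^ 2) ^ (k + 1)) * (1 - (ζ ^ 2) ^ (m + (m - 1 - k) + 1))
      = (-1) * (ζ ^ (k + 1) - ζ ^ (p - (k + 1))) ^ 2 := by
    intro k hk
    have hk := Finset.mem_range.1 hk
    have e : m + (m - 1 - k) + 1 = p - (k + 1) := by omega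
    have e2 : ζ ^ (k + 1) * ζ ^ (p - (k + 1)) = 1 := by
      rw [← pow_add, show k + 1 + (p - (k + 1)) = p by omega, hζ.pow_eq_one]
    rw [e, ← pow_mul, ← pow_mul, mul_comm 2, mul_comm 2, pow_mul, pow_mul]
    linear_combination (ζ ^ (k + 1) * ζ ^ (p - (k + 1)) + 1 - 2) * e2
  rw [Finset.prod_congr rfl h1, Finset.prod_mul_distrib, Finset.prod_pow] at h
  simp only [Finset.prod_const, Finset.card_range, hm.neg_one_pow] at h
  have hpc : (p : ℂ) = 2 * m + 1 := by rw [hp]; push_cast; ring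
  rw [hpc]
  push_cast at h
  linear_combination -h

lemma prod_pos (p m : ℕ) (hp : p = 2 * m + 1) :
    ∃ s : ℝ, 0 < s ∧ ∏ k ∈ Finset.range m, (Complex.exp (2 * Real.pi * Complex.I / p) ^ (k + 1)
      - Complex.exp (2 * Real.pi * Complex.I / p) ^ (p - (k + 1))) = s * Complex.I ^ m := by
  refine ⟨∏ k ∈ Finset.range m, 2 * Real.sin (2 * Real.pi * (k + 1) / p), ?_, ?_⟩
  · refine Finset.prod_pos fun k hk => mul_pos two_pos (Real.sin_pos_of_pos_of_lt_pi ?_ ?_)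
    · have : (0 : ℝ) < p := by rw [hp]; positivity
      positivity
    · have : (0 : ℝ) < p := by rw [hp]; positivity
      rw [div_lt_iff₀ this]
      have hk : k + 1 ≤ m := Finset.mem_range.1 hk
      have hk' : (k : ℝ) + 1 ≤ m := by exact_mod_cast hk
      have : (p : ℝ) = 2 * m + 1 := by rw [hp]; push_cast; ring
      rw [this]
      nlinarith [Real.pi_pos]
  · have : Complex.I ^ m = ∏ k ∈ Finset.range m, Complex.I := by simp
    rw [this]
    push_cast
    rw [← Finset.prod_mul_distrib]
    refine Finset.prod_congr rfl fun k hk => ?_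
    have hk : k < m := Finset.mem_range.1 hk
    have hp0 : (p : ℂ) ≠ 0 := by
      rw [hp]; exact Nat.cast_ne_zero.2 (by omega)
    rw [← Complex.exp_nat_mul, ← Complex.exp_nat_mul, Complex.sin, Nat.cast_sub (by omega)]
    have e1 : ((k + 1 : ℕ) : ℂ) * (2 * Real.pi * Complex.I / p)
      = 2 * Real.pi * (k + 1) / p * Complex.I := by push_cast; ring
    have e2 : ((p : ℂ) - (k + 1 : ℕ)) * (2 * Real.pi * Complex.I / p)
      = -(2 * Real.pi * (k + 1) / p) * Complex.I + 2 * Real.pi * Complex.I := by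
      push_cast; field_simp; ring
    rw [e1, e2, Complex.exp_add, Complex.exp_two_pi_mul_I]
    linear_combination (-Complex.exp (-(2 * Real.pi * (k + 1) / p) * Complex.I)
      + Complex.exp (2 * Real.pi * (k + 1) / p * Complex.I)) * Complex.I_sq

lemma gauss_pos (p : ℕ) [Fact p.Prime] (hmod : p % 4 = 3) :
    ∃ y : ℝ, 0 < y ∧ gaussSum (qC p) ZMod.stdAddChar = y * Complex.I := by
  obtain ⟨m, hp⟩ : ∃ m, p = 2 * m + 1 := ⟨p / 2, by omega⟩
  have hm : Odd m := by rw [Nat.odd_iff]; omega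
  have hp0 : p ≠ 0 := by omega
  have hζ := Complex.isPrimitiveRoot_exp p hp0
  obtain ⟨s, hs, hP⟩ := prod_pos p m hp
  have hP2 := prod_sq p m hp hm _ hζ
  have hG2 := gauss_sq p hmod
  have hε : ∃ ε : ℤ, (ε = 1 ∨ ε = -1) ∧ gaussSum (qC p) ZMod.stdAddChar
      = ε * ∏ k ∈ Finset.range m, (Complex.exp (2 * Real.pi * Complex.I / p) ^ (k + 1)
      - Complex.exp (2 * Real.pi * Complex.I / p) ^ (p - (k + 1))) := by
    rcases sq_eq_sq_iff_eq_or_eq_neg.1 (hG2.trans hP2.symm) with h | h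
    · exact ⟨1, Or.inl rfl, by rw [h]; simp⟩
    · exact ⟨-1, Or.inr rfl, by rw [h]; simp⟩
  obtain ⟨ε, hε, hG⟩ := hε
  have h1 := sign_aux p m hp hm ε _ hζ (by rw [← gauss_eq, hG])
  have h2 := legendreSym.at_two (p := p) (by omega)
  rw [ZMod.χ₈_nat_eq_if_mod_eight, if_neg (by omega)] at h2
  have h11 : (1 : ZMod p) ≠ -1 := by
    have : Fact (2 < p) := ⟨by omega⟩
    exact (ZMod.neg_one_ne_one).symm
  have hm4 : m % 4 = 1 ∨ m % 4 = 3 := by omega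
  refine ⟨s, hs, ?_⟩
  rw [hG, hP, ← Nat.div_add_mod m 4, pow_add, pow_mul, Complex.I_pow_four, one_pow]
  rcases hm4 with hm4 | hm4
  · rw [if_neg (by omega)] at h2
    rw [h2] at h1
    rcases hε with rfl | rfl
    · simp [hm4]
    · simp at h1; exact absurd h1 h11
  · rw [if_pos (by omega)] at h2
    rw [h2] at h1
    rcases hε with rfl | rfl
    · simp at h1; exact absurd h1 h11
    · simp [hm4, Complex.I_pow_three]
open Filter Topology in
lemma by_parts (f g : ℕ → ℝ) (N : ℕ) :
    ∑ k ∈ Finset.range N, f k * g k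
      = ∑ k ∈ Finset.range N, (∑ i ∈ Finset.range (k + 1), f i) * (g k - g (k + 1))
        + (∑ i ∈ Finset.range N, f i) * g N := by
  induction N with
  | zero => simp
  | succ N ih =>
    rw [Finset.sum_range_succ, ih, Finset.sum_range_succ _ N, Finset.sum_range_succ f N]
    ring

lemma g_diff (s : ℝ) (h1 : 1 ≤ s) (h2 : s ≤ 2) (k : ℕ) :
    |((k + 1 : ℕ) : ℝ) ^ (-s) - ((k + 1 + 1 : ℕ) : ℝ) ^ (-s)| ≤ 2 * (1 / ((k + 1 : ℕ) : ℝ) ^ 2) := by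
  set n : ℝ := ((k + 1 : ℕ) : ℝ) with hn
  have hn1 : 1 ≤ n := by rw [hn]; push_cast; linarith [(Nat.cast_nonneg k : (0 : ℝ) ≤ k)]
  have hn0 : 0 < n := by linarith
  have e : ((k + 1 + 1 : ℕ) : ℝ) = n + 1 := by rw [hn]; push_cast; ring
  rw [e]
  have hle : (n + 1) ^ (-s) ≤ n ^ (-s) :=
    Real.rpow_le_rpow_of_nonpos hn0 (by linarith) (by linarith)
  rw [abs_of_nonneg (by linarith)]
  have hq : (n + 1) ^ (-s) = n ^ (-s) * (n / (n + 1)) ^ s := by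
    rw [Real.div_rpow hn0.le (by linarith), Real.rpow_neg hn0.le, Real.rpow_neg (by linarith)]
    have := (Real.rpow_pos_of_pos hn0 s).ne'
    field_simp
  have hq2 : (n / (n + 1)) ^ (2 : ℝ) ≤ (n / (n + 1)) ^ s :=
    Real.rpow_le_rpow_of_exponent_ge (by positivity) (by rw [div_le_one (by linarith)]; linarith) h2
  have hq3 : 1 - (n / (n + 1)) ^ (2 : ℝ) ≤ 2 * (1 / n) := by
    rw [Real.rpow_two]
    have : 1 - (n / (n + 1)) ^ 2 = (2 * n + 1) / (n + 1) ^ 2 := by field_simp; ring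
    rw [this, mul_one_div, div_le_div_iff₀ (by positivity) hn0]
    nlinarith
  have hq4 : n ^ (-s) ≤ 1 / n := by
    have : n ^ (-s) ≤ n ^ (-1 : ℝ) := Real.rpow_le_rpow_of_exponent_le hn1 (by linarith)
    rwa [Real.rpow_neg_one, ← one_div] at this
  have hpos : 0 < n ^ (-s) := Real.rpow_pos_of_pos hn0 _
  calc n ^ (-s) - (n + 1) ^ (-s) = n ^ (-s) * (1 - (n / (n + 1)) ^ s) := by rw [hq]; ring
    _ ≤ n ^ (-s) * (2 * (1 / n)) := by
      apply mul_le_mul_of_nonneg_left _ hpos.le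
      linarith
    _ ≤ (1 / n) * (2 * (1 / n)) := by
      apply mul_le_mul_of_nonneg_right hq4; positivity
    _ = 2 * (1 / n ^ 2) := by field_simp

open Filter Topology in
lemma exists_L (χ : ℕ →*₀ ℝ) (hχ : ∀ n, |χ n| ≤ 1) (B : ℝ)
    (hB : ∀ N, |∑ k ∈ Finset.range N, χ (k + 1)| ≤ B) :
    ∃ L : ℝ, 0 ≤ L ∧
      Tendsto (fun N => ∑ k ∈ Finset.range N, χ (k + 1) * ((k + 1 : ℕ) : ℝ)⁻¹) atTop (𝓝 L) := by
  set g : ℝ → ℕ → ℝ := fun s k => ((k + 1 : ℕ) : ℝ) ^ (-s) with hg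
  set A : ℕ → ℝ := fun k => ∑ i ∈ Finset.range (k + 1), χ (i + 1) with hA
  set bd : ℕ → ℝ := fun k => B * (2 * (1 / ((k + 1 : ℕ) : ℝ) ^ 2)) with hbd
  have hB0 : 0 ≤ B := (abs_nonneg _).trans (hB 0)
  have hbds : Summable bd := by
    refine Summable.mul_left _ (Summable.mul_left _ ?_)
    exact (summable_nat_add_iff 1).2 (Real.summable_one_div_nat_pow.2 one_lt_two)
  have hterm : ∀ s, 1 ≤ s → s ≤ 2 → ∀ k, ‖A k * (g s k - g s (k + 1))‖ ≤ bd k := by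
    intro s h1 h2 k
    rw [Real.norm_eq_abs, abs_mul]
    exact mul_le_mul (hB _) (g_diff s h1 h2 k) (abs_nonneg _) hB0
  set D : ℝ → ℝ := fun s => ∑' k, A k * (g s k - g s (k + 1)) with hD
  have hg0 : ∀ s, 1 ≤ s → Tendsto (g s) atTop (𝓝 0) := by
    intro s h1
    exact ((tendsto_rpow_neg_atTop (by linarith)).comp tendsto_natCast_atTop_atTop).comp
      (tendsto_add_atTop_nat 1)
  have hconv : ∀ s, 1 ≤ s → s ≤ 2 →
      Tendsto (fun N => ∑ k ∈ Finset.range N, χ (k + 1) * g s k) atTop (𝓝 (D s)) := by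
    intro s h1 h2
    have hs : Summable fun k => A k * (g s k - g s (k + 1)) :=
      Summable.of_norm_bounded hbds (hterm s h1 h2)
    have ht := hs.hasSum.tendsto_sum_nat
    have ht2 : Tendsto (fun N => (∑ i ∈ Finset.range N, χ (i + 1)) * g s N) atTop (𝓝 0) := by
      refine squeeze_zero_norm (a := fun N => B * |g s N|) (fun N => ?_) ?_
      · rw [Real.norm_eq_abs, abs_mul]
        exact mul_le_mul_of_nonneg_right (hB N) (abs_nonneg _)
      · simpa using ((hg0 s h1).abs).const_mul B
    have := ht.add ht2
    rw [add_zero] at this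
    refine this.congr fun N => ?_
    exact (by_parts (fun i => χ (i + 1)) (g s) N).symm
  have hcont : Tendsto D (𝓝[>] 1) (𝓝 (D 1)) := by
    refine tendsto_tsum_of_dominated_convergence hbds (fun k => ?_) ?_
    · refine Tendsto.mono_left ?_ nhdsWithin_le_nhds
      have hc : ∀ j : ℕ, Continuous fun s : ℝ => g s j := by
        intro j
        have : ((j + 1 : ℕ) : ℝ) ≠ 0 := by positivity
        exact Continuous.rpow continuous_const continuous_neg (fun _ => Or.inl this)
      exact (continuous_const.mul ((hc k).sub (hc (k + 1)))).tendsto 1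
    · filter_upwards [Ioo_mem_nhdsGT (show (1 : ℝ) < 2 by norm_num)] with s hs k
      exact hterm s hs.1.le hs.2.le k
  have hpos : ∀ s, 1 < s → s ≤ 2 → 0 ≤ D s := by
    intro s h1 h2
    let F : ℕ →*₀ ℝ :=
      { toFun := fun n => χ n * (n : ℝ) ^ (-s)
        map_zero' := by simp
        map_one' := by simp
        map_mul' := fun a b => by
          rw [map_mul, Nat.cast_mul, Real.mul_rpow (Nat.cast_nonneg _) (Nat.cast_nonneg _)]
          ring }
    have hF : ∀ n, F n = χ n * (n : ℝ) ^ (-s) := fun n => rfl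
    have hle : ∀ n, ‖F n‖ ≤ (n : ℝ) ^ (-s) := by
      intro n
      have := Real.rpow_nonneg (Nat.cast_nonneg (α := ℝ) n) (-s)
      rw [hF, Real.norm_eq_abs, abs_mul, abs_of_nonneg this]
      simpa using mul_le_mul_of_nonneg_right (hχ n) this
    have hsum : Summable (‖F ·‖) :=
      Summable.of_nonneg_of_le (fun n => norm_nonneg _) hle
        (Real.summable_nat_rpow.2 (by linarith))
    have hprod := EulerProduct.eulerProduct_completely_multiplicative_hasProd hsum
    have hnn : 0 ≤ ∑' n, F n := by
      refine ge_of_tendsto' hprod fun S => Finset.prod_nonneg fun q _ => inv_nonneg.2 ?_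
      have h3 : (q : ℝ) ^ (-s) ≤ 1 :=
        Real.rpow_le_one_of_one_le_of_nonpos (by exact_mod_cast q.2.one_lt.le) (by linarith)
      have := (le_abs_self _).trans ((hle q).trans h3)
      linarith
    have ht := hsum.of_norm.hasSum.tendsto_sum_nat
    have ht := (tendsto_add_atTop_iff_nat 1).2 ht
    have : D s = ∑' n, F n := by
      refine tendsto_nhds_unique (hconv s h1.le h2) (ht.congr fun N => ?_)
      rw [Finset.sum_range_succ']
      simp [hF, hg]
    rwa [this]
  refine ⟨D 1, ?_, ?_⟩
  · refine ge_of_tendsto hcont ?_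
    filter_upwards [Ioo_mem_nhdsGT (show (1 : ℝ) < 2 by norm_num)] with s hs
    exact hpos s hs.1 hs.2.le
  · refine (hconv 1 le_rfl one_le_two).congr fun N => ?_
    simp only [hg, Real.rpow_neg_one]
lemma leg_sum_zero (p : ℕ) [Fact p.Prime] (hp : p ≠ 2) :
    ∑ j ∈ Finset.range p, legendreSym p j = 0 := by
  rw [← sum_zmod_val p (fun j => legendreSym p j)]
  rw [← quadraticChar_sum_zero (F := ZMod p) (by rwa [ZMod.ringChar_zmod_n])]
  refine Finset.sum_congr rfl fun a _ => ?_
  simp [legendreSym]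

/-- The Legendre symbol as a real-valued function on `ℕ`. -/
noncomputable def legR (p : ℕ) [Fact p.Prime] : ℕ →*₀ ℝ where
  toFun n := ((legendreSym p n : ℤ) : ℝ)
  map_zero' := by simp [legendreSym.at_zero]
  map_one' := by simp [legendreSym.at_one]
  map_mul' a b := by rw [Nat.cast_mul, legendreSym.mul]; push_cast; ring

lemma legR_apply (p : ℕ) [Fact p.Prime] (n : ℕ) : legR p n = ((legendreSym p n : ℤ) : ℝ) := rfl

lemma leg_abs (p : ℕ) [Fact p.Prime] (a : ℤ) : |legendreSym p a| ≤ 1 := by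
  rcases quadraticChar_isQuadratic (ZMod p) (a : ZMod p) with h | h | h <;>
    simp [legendreSym, h]

lemma legR_abs (p : ℕ) [Fact p.Prime] (n : ℕ) : |legR p n| ≤ 1 := by
  rw [legR_apply]; exact_mod_cast leg_abs p n

lemma legR_period (p : ℕ) [Fact p.Prime] (n : ℕ) : legR p (p + n) = legR p n := by
  simp [legR_apply, legendreSym]

lemma legR_bounded (p : ℕ) [Fact p.Prime] (hp : p ≠ 2) (N : ℕ) :
    |∑ k ∈ Finset.range N, legR p (k + 1)| ≤ p := by
  induction N using Nat.strong_induction_on with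
  | _ N ih =>
    rcases lt_or_ge N p with h | h
    · refine (Finset.abs_sum_le_sum_abs _ _).trans ?_
      refine (Finset.sum_le_sum (g := fun _ => (1 : ℝ)) fun k _ => legR_abs p _).trans ?_
      simp; exact h.le
    · obtain ⟨M, rfl⟩ := Nat.exists_eq_add_of_le h
      have hp0 : 0 < p := (Fact.out : p.Prime).pos
      have h0 : ∑ k ∈ Finset.range p, legR p (k + 1) = 0 := by
        have h1 := Finset.sum_range_succ' (fun k => legR p k) p
        rw [Finset.sum_range_succ] at h1
        have h2 : legR p p = legR p 0 := legR_period p 0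
        have h3 : ∑ j ∈ Finset.range p, legR p j = 0 := by
          have := leg_sum_zero p hp
          simp only [legR_apply]
          exact_mod_cast this
        linarith
      rw [Finset.sum_range_add, h0, zero_add]
      refine le_trans (le_of_eq ?_) (ih M (by omega))
      congr 1
      refine Finset.sum_congr rfl fun k _ => ?_
      rw [add_assoc, legR_period]

lemma qC_eq_legR (p : ℕ) [Fact p.Prime] (n : ℕ) : qC p (n : ZMod p) = (legR p n : ℂ) := by
  simp [qC, legR_apply, legendreSym, MulChar.ringHomComp_apply]

lemma qC_eq_legR' (p : ℕ) [Fact p.Prime] (a : ZMod p) : qC p a = (legR p a.val : ℂ) := by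
  rw [← qC_eq_legR, ZMod.natCast_zmod_val]

lemma qC_zero (p : ℕ) [Fact p.Prime] : qC p 0 = 0 := by
  rw [qC_eq_legR', ZMod.val_zero, map_zero, Complex.ofReal_zero]

lemma gauss_shift (p : ℕ) [Fact p.Prime] (hp : p ≠ 2) (a : ZMod p) :
    gaussSum (qC p) (AddChar.mulShift ZMod.stdAddChar a)
      = qC p a * gaussSum (qC p) ZMod.stdAddChar := by
  by_cases ha : a = 0
  · subst ha
    rw [AddChar.mulShift_zero, gaussSum_one_right (qC_ne_one p hp), qC_zero, zero_mul]
  · have := gaussSum_mulShift_eq (qC p) ZMod.stdAddChar (Units.mk0 a ha)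
    rwa [(qC_quad p).inv] at this

lemma std_norm (p : ℕ) [NeZero p] (a : ZMod p) : ‖(ZMod.stdAddChar a : ℂ)‖ = 1 := by
  rw [ZMod.stdAddChar_apply]; exact Circle.norm_coe _

lemma power_series (p : ℕ) [Fact p.Prime] (hp : p ≠ 2) (r : ℝ) (h0 : 0 ≤ r) (h1 : r < 1) :
    ((∑' n : ℕ, legR p n * (n : ℝ)⁻¹ * r ^ n : ℝ) : ℂ) * gaussSum (qC p) ZMod.stdAddChar
      = ∑ a : ZMod p, qC p a * -Complex.log (1 - r * ZMod.stdAddChar a) := by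
  have hs : HasSum (fun n : ℕ => ∑ a : ZMod p, qC p a * ((r * ZMod.stdAddChar a) ^ n / n))
      (∑ a : ZMod p, qC p a * -Complex.log (1 - r * ZMod.stdAddChar a)) := by
    refine hasSum_sum fun a _ => HasSum.mul_left _ ?_
    apply Complex.hasSum_taylorSeries_neg_log
    rw [norm_mul, std_norm, mul_one, Complex.norm_real, Real.norm_eq_abs, abs_of_nonneg h0]
    exact h1
  rw [Complex.ofReal_tsum, ← tsum_mul_right, ← hs.tsum_eq]
  refine tsum_congr fun n => ?_
  have h := gauss_shift p hp (n : ZMod p)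
  rw [qC_eq_legR] at h
  push_cast
  rw [show ((legR p n : ℂ) * (n : ℂ)⁻¹ * (r : ℂ) ^ n) * gaussSum (qC p) ZMod.stdAddChar
    = (r : ℂ) ^ n * (n : ℂ)⁻¹ * ((legR p n : ℂ) * gaussSum (qC p) ZMod.stdAddChar) by ring, ← h,
    gaussSum, Finset.mul_sum]
  refine Finset.sum_congr rfl fun a _ => ?_
  rw [AddChar.mulShift_apply, ← nsmul_eq_mul, AddChar.map_nsmul_eq_pow]
  ring

lemma one_sub_exp (θ : ℝ) : 1 - Complex.exp (θ * Complex.I)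
    = ((2 * Real.sin (θ / 2) : ℝ) : ℂ) * (Complex.cos ((θ - Real.pi) / 2 : ℝ)
      + Complex.sin ((θ - Real.pi) / 2 : ℝ) * Complex.I) := by
  have e : (θ - Real.pi) / 2 = θ / 2 - Real.pi / 2 := by ring
  rw [e, ← Complex.ofReal_cos, ← Complex.ofReal_sin, Real.cos_sub_pi_div_two,
    Real.sin_sub_pi_div_two, Complex.exp_mul_I, ← Complex.ofReal_cos, ← Complex.ofReal_sin]
  have h1 : Real.cos θ = 1 - 2 * Real.sin (θ / 2) ^ 2 := by
    have := Real.cos_two_mul (θ / 2)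
    rw [show 2 * (θ / 2) = θ by ring] at this
    have h := Real.sin_sq_add_cos_sq (θ / 2)
    linarith
  have h2 : Real.sin θ = 2 * Real.sin (θ / 2) * Real.cos (θ / 2) := by
    have := Real.sin_two_mul (θ / 2)
    rwa [show 2 * (θ / 2) = θ by ring] at this
  rw [h1, h2]
  push_cast
  ring

lemma arg_one_sub_exp (θ : ℝ) (h0 : 0 < θ) (h1 : θ < 2 * Real.pi) :
    Complex.arg (1 - Complex.exp (θ * Complex.I)) = (θ - Real.pi) / 2 := by
  rw [one_sub_exp]
  refine Complex.arg_mul_cos_add_sin_mul_I ?_ ⟨by linarith, by linarith⟩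
  have := Real.sin_pos_of_pos_of_lt_pi (x := θ / 2) (by linarith) (by linarith)
  linarith

lemma arg_one_sub_std (p : ℕ) [Fact p.Prime] (a : ZMod p) (ha : a ≠ 0) :
    Complex.arg (1 - ZMod.stdAddChar a) = Real.pi / p * a.val - Real.pi / 2 := by
  have hp0 : (0 : ℝ) < p := by exact_mod_cast (Fact.out : p.Prime).pos
  have hv : (0 : ℝ) < a.val := by
    exact_mod_cast Nat.pos_of_ne_zero (by rwa [Ne, ZMod.val_eq_zero])
  have hv2 : (a.val : ℝ) < p := by exact_mod_cast ZMod.val_lt a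
  have e : (ZMod.stdAddChar a : ℂ) = Complex.exp ((2 * Real.pi * a.val / p : ℝ) * Complex.I) := by
    rw [ZMod.stdAddChar_apply, ZMod.toCircle_apply]
    congr 1; push_cast; ring
  rw [e, arg_one_sub_exp]
  · ring
  · positivity
  · rw [div_lt_iff₀ hp0]
    nlinarith [Real.pi_pos]

lemma one_sub_slit (p : ℕ) [Fact p.Prime] (a : ZMod p) (ha : a ≠ 0) :
    1 - (ZMod.stdAddChar a : ℂ) ∈ Complex.slitPlane := by
  have hne : (ZMod.stdAddChar a : ℂ) ≠ 1 := by
    intro h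
    apply ha
    apply ZMod.injective_stdAddChar
    rw [h, AddChar.map_zero_eq_one]
  rw [Complex.mem_slitPlane_iff_arg]
  refine ⟨?_, fun h => hne (sub_eq_zero.1 h).symm⟩
  rw [arg_one_sub_std p a ha]
  have hp0 : (0 : ℝ) < p := by exact_mod_cast (Fact.out : p.Prime).pos
  have hv2 : (a.val : ℝ) < p := by exact_mod_cast ZMod.val_lt a
  have : Real.pi / p * a.val < Real.pi := by
    rw [div_mul_eq_mul_div, div_lt_iff₀ hp0]
    nlinarith [Real.pi_pos]
  linarith [Real.pi_pos]

open Filter Topology in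
lemma T_nonpos (p : ℕ) [Fact p.Prime] (hmod : p % 4 = 3) :
    ∑ j ∈ Finset.range p, legendreSym p j * (j : ℤ) ≤ 0 := by
  have hp2 : p ≠ 2 := by omega
  obtain ⟨L, hL0, hL⟩ := exists_L (legR p) (legR_abs p) p (legR_bounded p hp2)
  obtain ⟨y, hy, hG⟩ := gauss_pos p hmod
  have hL' : Tendsto (fun N => ∑ k ∈ Finset.range N, legR p k * (k : ℝ)⁻¹) atTop (𝓝 L) := by
    refine (tendsto_add_atTop_iff_nat 1).1 (hL.congr fun N => ?_)
    rw [Finset.sum_range_succ']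
    simp
  have habel := Real.tendsto_tsum_powerSeries_nhdsWithin_lt hL'
  have hc : Tendsto (fun r : ℝ => ((∑' n : ℕ, legR p n * (n : ℝ)⁻¹ * r ^ n : ℝ) : ℂ)
      * gaussSum (qC p) ZMod.stdAddChar) (𝓝[<] 1)
      (𝓝 ((L : ℂ) * gaussSum (qC p) ZMod.stdAddChar)) :=
    ((Complex.continuous_ofReal.tendsto L).comp habel).mul_const _
  have hd : Tendsto (fun r : ℝ => ∑ a : ZMod p, qC p a * -Complex.log (1 - r * ZMod.stdAddChar a))
      (𝓝[<] 1) (𝓝 (∑ a : ZMod p, qC p a * -Complex.log (1 - ZMod.stdAddChar a))) := by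
    refine tendsto_finsetSum _ fun a _ => ?_
    by_cases ha : a = 0
    · subst ha
      simp [qC_zero]
    · refine Tendsto.const_mul _ (Tendsto.neg (Tendsto.clog ?_ (one_sub_slit p a ha)))
      refine Tendsto.mono_left ?_ nhdsWithin_le_nhds
      have : Continuous fun r : ℝ => 1 - (r : ℂ) * ZMod.stdAddChar a := by fun_prop
      simpa using this.tendsto 1
  have heq := tendsto_nhds_unique (hc.congr' (by
    filter_upwards [Ioo_mem_nhdsLT (show (0 : ℝ) < 1 by norm_num)] with r hr
    exact power_series p hp2 r hr.1.le hr.2)) hd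
  rw [hG] at heq
  have him := congrArg Complex.im heq
  rw [Complex.im_sum] at him
  have ht : ∀ a : ZMod p, (qC p a * -Complex.log (1 - ZMod.stdAddChar a)).im
      = -(Real.pi / p) * (legR p a.val * a.val) + Real.pi / 2 * legR p a.val := by
    intro a
    by_cases ha : a = 0
    · subst ha; simp [qC_zero]
    · rw [qC_eq_legR', Complex.im_ofReal_mul, Complex.neg_im, Complex.log_im,
        arg_one_sub_std p a ha]
      ring
  rw [Finset.sum_congr rfl fun a _ => ht a, Finset.sum_add_distrib, ← Finset.mul_sum,
    ← Finset.mul_sum, sum_zmod_val p (fun j => legR p j * (j : ℝ)),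
    sum_zmod_val p (fun j => legR p j)] at him
  have h3 : ∑ j ∈ Finset.range p, legR p j = 0 := by
    have := leg_sum_zero p hp2
    simp only [legR_apply]
    exact_mod_cast this
  rw [h3] at him
  simp at him
  have hp0 : (0 : ℝ) < p := by exact_mod_cast (Fact.out : p.Prime).pos
  have h4 : ∑ j ∈ Finset.range p, legR p j * (j : ℝ) ≤ 0 := by
    have : 0 < Real.pi / p := by positivity
    have h5 : 0 ≤ L * y := by positivity
    by_contra hcon
    push Not at hcon
    have := mul_pos this hcon
    linarith
  simp only [legR_apply] at h4
  exact_mod_cast h4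

lemma val_two_mul (p m : ℕ) [Fact p.Prime] (hp : p = 2 * m + 1) (b : ZMod p) :
    ((2 * b).val : ℤ) = 2 * (b.val : ℤ) - p * (if m < b.val then 1 else 0) := by
  have hb := ZMod.val_lt b
  rw [two_mul, ZMod.val_add]
  split_ifs with h
  · rw [Nat.mod_eq_sub_mod (by omega), Nat.mod_eq_of_lt (by omega)]
    omega
  · rw [Nat.mod_eq_of_lt (by omega)]
    omega

lemma relation (p m : ℕ) [Fact p.Prime] (hp : p = 2 * m + 1) (hm : 0 < m) :
    legendreSym p 2 * ∑ j ∈ Finset.range p, legendreSym p j * (j : ℤ)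
      = 2 * ∑ j ∈ Finset.range p, legendreSym p j * (j : ℤ)
        + p * ∑ n ∈ Finset.Icc 1 m, legendreSym p (n : ℤ) := by
  have hp2 : p ≠ 2 := by omega
  have h20 : (2 : ZMod p) ≠ 0 := by
    intro h
    have : ((2 : ℕ) : ZMod p) = 0 := by exact_mod_cast h
    rw [ZMod.natCast_eq_zero_iff] at this
    have := Nat.le_of_dvd two_pos this
    omega
  have hsq : legendreSym p 2 * legendreSym p 2 = 1 := by
    rw [← sq]; exact legendreSym.sq_one p (by exact_mod_cast h20)
  have hS : ∑ j ∈ Finset.range p, legendreSym p j * (if m < j then 1 else 0)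
      = - ∑ n ∈ Finset.Icc 1 m, legendreSym p (n : ℤ) := by
    have h1 : ∑ n ∈ Finset.Icc 1 m, legendreSym p (n : ℤ)
        = ∑ j ∈ Finset.range p, legendreSym p j * (if m < j then 0 else 1) := by
      have e : ∀ j ∈ Finset.range p, legendreSym p j * (if m < j then 0 else 1)
          = if j ≤ m then legendreSym p j else 0 := by
        intro j _
        split_ifs <;> first | omega | simp
      rw [Finset.sum_congr rfl e, ← Finset.sum_filter]
      refine Finset.sum_subset ?_ ?_
      · intro x hx
        simp at hx ⊢
        omega
      · intro x hx hx'
        simp at hx hx'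
        have : x = 0 := by omega
        simp [this, legendreSym.at_zero]
    rw [h1, eq_neg_iff_add_eq_zero, ← Finset.sum_add_distrib]
    refine (Finset.sum_congr rfl fun j _ => ?_).trans (leg_sum_zero p hp2)
    split_ifs <;> simp
  have hT : ∑ j ∈ Finset.range p, legendreSym p j * (j : ℤ)
      = legendreSym p 2 * ∑ j ∈ Finset.range p,
        legendreSym p j * (2 * (j : ℤ) - p * (if m < j then 1 else 0)) := by
    rw [← sum_zmod_val p (fun j => legendreSym p j * (j : ℤ)),
      ← sum_zmod_val p (fun j => legendreSym p j * (2 * (j : ℤ) - p * (if m < j then 1 else 0))),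
      Finset.mul_sum, ← Equiv.sum_comp (Equiv.mulLeft₀ (2 : ZMod p) h20)]
    refine Finset.sum_congr rfl fun b _ => ?_
    change legendreSym p ((2 * b).val : ℕ) * (((2 * b).val : ℕ) : ℤ) = _
    have hl : legendreSym p ((2 * b).val : ℕ) = legendreSym p 2 * legendreSym p (b.val : ℕ) := by
      simp only [legendreSym, Int.cast_natCast, ZMod.natCast_zmod_val, Int.cast_ofNat, map_mul]
    rw [hl, val_two_mul p m hp b, mul_assoc]
  have hE : ∑ j ∈ Finset.range p, legendreSym p j * (2 * (j : ℤ) - p * (if m < j then 1 else 0))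
      = 2 * ∑ j ∈ Finset.range p, legendreSym p j * (j : ℤ)
        + p * ∑ n ∈ Finset.Icc 1 m, legendreSym p (n : ℤ) := by
    rw [← neg_neg (∑ n ∈ Finset.Icc 1 m, legendreSym p (n : ℤ)), ← hS, mul_neg, ← sub_eq_add_neg,
      Finset.mul_sum, Finset.mul_sum, ← Finset.sum_sub_distrib]
    refine Finset.sum_congr rfl fun j _ => ?_
    ring
  rw [← hE]
  nth_rewrite 1 [hT]
  rw [← mul_assoc, hsq, one_mul]

lemma S_odd (p m : ℕ) [Fact p.Prime] (hp : p = 2 * m + 1) (hm : Odd m) :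
    ∑ n ∈ Finset.Icc 1 m, legendreSym p (n : ℤ) ≠ 0 := by
  intro h
  have h1 := congrArg (Int.cast : ℤ → ZMod 2) h
  rw [Int.cast_sum] at h1
  have h2 : ∀ n ∈ Finset.Icc 1 m, ((legendreSym p (n : ℤ) : ℤ) : ZMod 2) = 1 := by
    intro n hn
    rw [Finset.mem_Icc] at hn
    have : ((n : ℤ) : ZMod p) ≠ 0 := by
      rw [Int.cast_natCast, Ne, ZMod.natCast_eq_zero_iff]
      exact Nat.not_dvd_of_pos_of_lt (by omega) (by omega)
    rcases legendreSym.eq_one_or_neg_one p this with h | h <;> rw [h] <;> decide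
  rw [Finset.sum_congr rfl h2] at h1
  simp at h1
  rw [ZMod.natCast_eq_zero_iff_even] at h1
  exact (Nat.not_even_iff_odd.2 hm) h1

/-- (Dirichlet) For a prime `p ≡ 3 (mod 4)`, the sum of the Legendre symbols
`(n/p)` for `n` from `1` to `(p-1)/2` is strictly positive. -/
theorem sum_legendreSym_pos_of_prime_mod_four_eq_three
    (p : ℕ) [Fact p.Prime] (hmod : p % 4 = 3) :
    0 < ∑ n ∈ Finset.Icc 1 ((p - 1) / 2), legendreSym p (n : ℤ) := by
  obtain ⟨m, hm⟩ : ∃ m, m = (p - 1) / 2 := ⟨_, rfl⟩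
  rw [← hm]
  have hp : p = 2 * m + 1 := by omega
  have hmo : Odd m := by rw [Nat.odd_iff]; omega
  have h1 := T_nonpos p hmod
  have h2 := relation p m hp hmo.pos
  have h3 := S_odd p m hp hmo
  have h4 := (abs_le.1 (leg_abs p 2)).2
  have hp0 : (0 : ℤ) < p := by omega
  refine lt_of_le_of_ne ?_ h3.symm
  by_contra hcon
  push Not at hcon
  nlinarith [mul_neg_of_pos_of_neg hp0 hcon]
end

section
/- Let p be a prime with p ≡ 3 (mod 4). Then the number of quadratic residues of p in [1, (p−1)/2] is strictly greater than the number of non-residues of p in [1, (p−1)/2], i.e. R_b(p) > N_b(p). -/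
namespace ResidueHelpers
open Polynomial
/-- the Euler operator `X d/dX` -/
noncomputable def eulerOp (R : Type) [CommRing R] (f : R[X]) : R[X] := X * derivative f

lemma eulerOp_iter_eval {R : Type} [CommRing R] (m : ℕ) : ∀ q : R[X],
    ((eulerOp R)^[m] ((X - 1) ^ m * q)).eval 1 = (m.factorial : R) * q.eval 1 := by
  induction m with
  | zero => intro q; simp
  | succ m ih =>
    intro q
    rw [Function.iterate_succ_apply]
    have : eulerOp R ((X - 1) ^ (m+1) * q) =
        (X - 1)^m * ((m+1 : R[X]) * X * q + (X - 1) * X * derivative q) := by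
      simp [eulerOp, derivative_pow]
      ring
    rw [this, ih]
    simp [Nat.factorial_succ]; ring

lemma eulerOp_iter_X_pow {R : Type} [CommRing R] (m k : ℕ) (c : R) :
    (eulerOp R)^[m] (C c * X ^ k) = C (c * (k:R)^m) * X ^ k := by
  induction m with
  | zero => simp
  | succ m ih =>
    rw [Function.iterate_succ_apply', ih]
    simp only [eulerOp, derivative_C_mul_X_pow]
    cases k with
    | zero => simp
    | succ k => simp only [Nat.add_sub_cancel, C_mul]; push_cast; ring_nf; simp [C_mul, C_add, C_pow]; ring

lemma eulerOp_iter_sub {R : Type} [CommRing R] (m : ℕ) (f g : R[X]) :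
    (eulerOp R)^[m] (f - g) = (eulerOp R)^[m] f - (eulerOp R)^[m] g := by
  induction m with
  | zero => simp
  | succ m ih =>
    rw [Function.iterate_succ_apply', ih, Function.iterate_succ_apply', Function.iterate_succ_apply']
    simp [eulerOp, mul_sub]

lemma eulerOp_iter_sum {R : Type} [CommRing R] {ι : Type} (m : ℕ) (s : Finset ι) (f : ι → R[X]) :
    (eulerOp R)^[m] (∑ i ∈ s, f i) = ∑ i ∈ s, (eulerOp R)^[m] (f i) := by
  induction m with
  | zero => simp
  | succ m ih =>
    rw [Function.iterate_succ_apply', ih]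
    simp [eulerOp, Function.iterate_succ_apply', Finset.mul_sum]

lemma sign_congr (p m : ℕ) [Fact p.Prime] (hpm : p = 2 * m + 1) (hm : 0 < m) (η : ℂ)
    (hη : IsPrimitiveRoot η p)
    (h : ∑ a : ZMod p, ((quadraticChar (ZMod p) a : ℤ) : ℂ) * η ^ (2 * a.val) =
      ∏ k ∈ Finset.range m, (η ^ (k+1) - η ^ (p - (k+1)))) :
    ((m.factorial : ZMod p)) ^ 2 = -1 := by
  have hp : p.Prime := Fact.out
  have h2 : (2 : ZMod p) ≠ 0 := by
    intro h
    have h' : ((2 : ℕ) : ZMod p) = 0 := by exact_mod_cast h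
    rw [ZMod.natCast_eq_zero_iff] at h'
    have := Nat.le_of_dvd (by norm_num) h'
    omega
  set f : ℤ[X] := ∑ a : ZMod p, C (quadraticChar (ZMod p) a : ℤ) * X ^ (2 * a.val) -
    ∏ k ∈ Finset.range m, (X ^ (k+1) - X ^ (p - (k+1))) with hf
  have h0 : aeval η f = 0 := by
    simp only [hf, map_sub, map_sum, map_prod, map_mul, map_pow, aeval_X, aeval_C]
    rw [sub_eq_zero, ← h]
    simp
  have hdvd : cyclotomic p ℤ ∣ f := by
    rw [cyclotomic_eq_minpoly hη hp.pos]
    exact minpoly.isIntegrallyClosed_dvd (hη.isIntegral hp.pos) h0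
  obtain ⟨u, hu⟩ := hdvd
  have hmap := congrArg (Polynomial.map (Int.castRingHom (ZMod p))) hu
  have hcyc : cyclotomic p (ZMod p) = (X - 1) ^ m * (X - 1) ^ m := by
    have := cyclotomic_mul_prime_eq_pow_of_not_dvd (ZMod p) (p := p) (n := 1)
      (by rw [Nat.dvd_one]; exact hp.one_lt.ne')
    rw [one_mul, cyclotomic_one] at this
    rw [this, ← pow_add]
    congr 1; omega
  rw [Polynomial.map_mul, map_cyclotomic, hcyc, mul_assoc] at hmap
  have hq : ∀ k ∈ Finset.range m, (X ^ (k+1) - X ^ (p - (k+1)) : (ZMod p)[X]) =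
      (X - 1) * (∑ i ∈ Finset.range (k+1), X ^ i - ∑ i ∈ Finset.range (p - (k+1)), X ^ i) := by
    intro k _
    rw [mul_sub, mul_geom_sum, mul_geom_sum]; ring
  have hmf : Polynomial.map (Int.castRingHom (ZMod p)) f =
      ∑ a : ZMod p, C (a ^ m) * X ^ (2 * a.val) - (X - 1) ^ m *
      ∏ k ∈ Finset.range m, (∑ i ∈ Finset.range (k+1), X ^ i - ∑ i ∈ Finset.range (p - (k+1)), X ^ i) := by
    simp only [hf, Polynomial.map_sub, Polynomial.map_sum, Polynomial.map_prod, Polynomial.map_mul,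
      Polynomial.map_pow, map_X, map_C]
    rw [Finset.prod_congr rfl hq, Finset.prod_mul_distrib, Finset.prod_const, Finset.card_range]
    congr 1
    refine Finset.sum_congr rfl fun a _ => ?_
    congr 2
    have := quadraticChar_eq_pow_of_char_ne_two' (F := ZMod p)
      (by rw [ZMod.ringChar_zmod_n]; omega) a
    rw [ZMod.card] at this
    rw [eq_intCast, this]
    congr 1; omega
  rw [hmf] at hmap
  have hev := congrArg (fun g => ((eulerOp (ZMod p))^[m] g).eval 1) hmap
  simp only [eulerOp_iter_sub, eulerOp_iter_sum, eval_sub, eulerOp_iter_eval, eval_finsetSum,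
    eulerOp_iter_X_pow, eval_prod, eval_mul, eval_pow, eval_X, eval_C, one_pow, mul_one, eval_one,
    sub_self, zero_pow hm.ne', zero_mul, mul_zero, Finset.sum_const, Finset.card_range,
    nsmul_eq_mul] at hev
  have e1 : ∑ a : ZMod p, a ^ m * ((2 * a.val : ℕ) : ZMod p) ^ m = - 2 ^ m := by
    have : ∀ a : ZMod p, a ^ m * ((2 * a.val : ℕ) : ZMod p) ^ m = 2 ^ m * (if a = 0 then 0 else 1) := by
      intro a
      push_cast
      rw [ZMod.natCast_zmod_val, mul_pow, mul_left_comm, ← pow_add]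
      congr 1
      split_ifs with ha
      · rw [ha, zero_pow (by omega)]
      · have := ZMod.pow_card_sub_one_eq_one ha
        rwa [show p - 1 = m + m by omega] at this
    rw [Finset.sum_congr rfl fun a _ => this a, ← Finset.mul_sum]
    have e3 : ∑ a : ZMod p, (if a = 0 then (0 : ZMod p) else 1) = -1 := by
      have : ∀ a : ZMod p, (if a = 0 then (0 : ZMod p) else 1) = 1 - if a = 0 then 1 else 0 := by
        intro a; split_ifs <;> simp
      simp [this]
    rw [e3]; ring
  have e2 : ∏ k ∈ Finset.range m, ((((k+1 : ℕ)) : ZMod p) - ((p - (k+1) : ℕ) : ZMod p)) =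
      2 ^ m * m.factorial := by
    have : ∀ k ∈ Finset.range m, ((((k+1 : ℕ)) : ZMod p) - ((p - (k+1) : ℕ) : ZMod p)) =
        2 * ((k+1 : ℕ) : ZMod p) := by
      intro k hk
      rw [Finset.mem_range] at hk
      rw [Nat.cast_sub (by omega)]; simp; ring
    rw [Finset.prod_congr rfl this, Finset.prod_mul_distrib, Finset.prod_const, Finset.card_range,
      ← Nat.cast_prod, Finset.prod_range_add_one_eq_factorial]
  rw [e1, e2] at hev
  have h2m : (2 : ZMod p) ^ m ≠ 0 := pow_ne_zero _ h2
  apply mul_left_cancel₀ h2m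
  linear_combination -hev

lemma prod_sq (p m : ℕ) (hpm : p = 2 * m + 1) (hm : Odd m) (η : ℂ)
    (hη : IsPrimitiveRoot η p) :
    (∏ k ∈ Finset.range m, (η ^ (k+1) - η ^ (p - (k+1)))) ^ 2 = -(p : ℂ) := by
  have hζ : IsPrimitiveRoot (η ^ 2) p := hη.pow_of_coprime 2 (by rw [hpm]; simp)
  have h1 : IsPrimitiveRoot (η ^ 2) (m + m + 1) := by
    rwa [show m + m + 1 = p by omega]
  have h2 := h1.prod_one_sub_pow_eq_order
  rw [Finset.prod_range_add, ← Finset.prod_range_reflect (fun x => (1 - (η^2)^(m+x+1))),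
    ← Finset.prod_mul_distrib] at h2
  have h3 : ∀ k ∈ Finset.range m, (η ^ (k+1) - η ^ (p - (k+1)))^2 =
      -1 * ((1 - (η ^ 2) ^ (k + 1)) * (1 - (η ^ 2) ^ (m + (m - 1 - k) + 1))) := by
    intro k hk
    rw [Finset.mem_range] at hk
    have e : m + (m - 1 - k) + 1 = p - (k+1) := by omega
    rw [e]
    have e2 : η ^ (k+1) * η ^ (p - (k+1)) = 1 := by
      rw [← pow_add, show k + 1 + (p - (k+1)) = p by omega, hη.pow_eq_one]
    rw [← pow_mul, ← pow_mul, mul_comm 2, mul_comm 2, pow_mul, pow_mul]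
    set x := η ^ (k+1)
    set y := η ^ (p - (k+1))
    linear_combination (-1 + x * y) * e2
  rw [← Finset.prod_pow, Finset.prod_congr rfl h3, Finset.prod_mul_distrib, h2, Finset.prod_const,
    Finset.card_range, hm.neg_one_pow, hpm]
  push_cast; ring

lemma prod_sgn (r : ℕ) : ∏ k ∈ Finset.range (2 * r + 1), ((-1 : ℂ) ^ (k+1) * Complex.I) = -Complex.I := by
  induction r with
  | zero => simp
  | succ r ih =>
    rw [show 2 * (r+1) + 1 = 2 * r + 1 + 1 + 1 by ring, Finset.prod_range_succ,
      Finset.prod_range_succ, ih]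
    have := Complex.I_sq
    have e : ((-1 : ℂ) ^ r) ^ 2 = 1 := by rw [← pow_mul, mul_comm, pow_mul]; simp
    simp only [pow_succ, pow_mul]
    simp
  
lemma prod_im (p m : ℕ) (hpm : p = 2 * m + 1) (hm : Odd m) (η : ℂ)
    (hη : η = -Complex.exp (Real.pi * Complex.I / p)) :
    ∃ y : ℝ, 0 < y ∧ ∏ k ∈ Finset.range m, (η ^ (k+1) - η ^ (p - (k+1))) = -(y * Complex.I) := by
  refine ⟨∏ k ∈ Finset.range m, (2 * Real.sin (Real.pi * (k+1) / p)), ?_, ?_⟩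
  · apply Finset.prod_pos
    intro k hk
    rw [Finset.mem_range] at hk
    have hp0 : (0:ℝ) < p := by rw [hpm]; positivity
    have : 0 < Real.sin (Real.pi * (k+1) / p) := by
      apply Real.sin_pos_of_pos_of_lt_pi
      · have := Real.pi_pos; positivity
      · rw [div_lt_iff₀ hp0]
        apply mul_lt_mul_of_pos_left _ Real.pi_pos
        have : k + 1 < p := by omega
        exact_mod_cast this
    positivity
  · obtain ⟨r, rfl⟩ := hm
    have hp0 : (p:ℂ) ≠ 0 := by exact Nat.cast_ne_zero.2 (by omega)
    have hp1 : η ^ p = 1 := by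
      rw [hη, Odd.neg_pow (by rw [hpm]; exact odd_two_mul_add_one _), ← Complex.exp_nat_mul,
        mul_div_cancel₀ _ hp0, Complex.exp_pi_mul_I]; simp
    have : ∀ k ∈ Finset.range (2 * r + 1), η ^ (k+1) - η ^ (p - (k+1)) =
      ((2 * Real.sin (Real.pi * (k+1) / p) : ℝ) : ℂ) * ((-1 : ℂ) ^ (k+1) * Complex.I) := by
      intro k hk
      rw [Finset.mem_range] at hk
      have hη0 : η ^ (k+1) ≠ 0 := by rw [hη]; simp [Complex.exp_ne_zero]
      have e2 : η ^ (p - (k+1)) = (η ^ (k+1))⁻¹ := by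
        apply eq_inv_of_mul_eq_one_left
        rw [← pow_add, show p - (k+1) + (k + 1) = p by omega, hp1]
      have e3 : η ^ (k+1) = (-1)^(k+1) * Complex.exp ((Real.pi * (k+1) / p : ℝ) * Complex.I) := by
        rw [hη, neg_pow, ← Complex.exp_nat_mul]
        congr 2; push_cast; ring
      rw [e2, e3, mul_inv, ← Complex.exp_neg, ← neg_mul, ← Complex.ofReal_neg, Complex.exp_mul_I,
        Complex.exp_mul_I, ← Complex.ofReal_cos, ← Complex.ofReal_sin, ← Complex.ofReal_cos,
        ← Complex.ofReal_sin, Real.cos_neg, Real.sin_neg, ← inv_pow, inv_neg, inv_one]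
      push_cast; ring
    rw [Finset.prod_congr rfl this, Finset.prod_mul_distrib, prod_sgn]
    push_cast; ring

/-- the quadratic character as a complex Dirichlet character -/
noncomputable def chiC (p : ℕ) [Fact p.Prime] : DirichletCharacter ℂ p :=
  (quadraticChar (ZMod p)).ringHomComp (Int.castRingHom ℂ)

lemma chiC_apply (p : ℕ) [Fact p.Prime] (a : ZMod p) :
    chiC p a = ((quadraticChar (ZMod p) a : ℤ) : ℂ) := rfl

lemma quadraticChar_neg_one_three (p : ℕ) [Fact p.Prime] (h3 : p % 4 = 3) :
    quadraticChar (ZMod p) (-1) = -1 := by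
  rw [quadraticChar_neg_one (by rw [ZMod.ringChar_zmod_n]; rintro rfl; omega), ZMod.card, ZMod.χ₄_nat_three_mod_four h3]

lemma chiC_ne_one (p : ℕ) [Fact p.Prime] (h3 : p % 4 = 3) : chiC p ≠ 1 :=
  (MulChar.ringHomComp_ne_one_iff (RingHom.injective_int _)).2
    (quadraticChar_ne_one (by rw [ZMod.ringChar_zmod_n]; rintro rfl; omega))

lemma chiC_quad (p : ℕ) [Fact p.Prime] : (chiC p).IsQuadratic :=
  (quadraticChar_isQuadratic _).comp _

lemma gauss_sign (p : ℕ) [Fact p.Prime] (h3 : p % 4 = 3) :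
    ∃ y : ℝ, 0 < y ∧ gaussSum (chiC p) ZMod.stdAddChar = y * Complex.I := by
  have hp : p.Prime := Fact.out
  obtain ⟨m, hpm⟩ : ∃ m, p = 2 * m + 1 := ⟨p / 2, by omega⟩
  have hm : Odd m := by rw [Nat.odd_iff]; omega
  have hp0 : (p:ℂ) ≠ 0 := by exact_mod_cast hp.ne_zero
  set η : ℂ := -Complex.exp (Real.pi * Complex.I / p) with hη
  have hsq : η ^ 2 = Complex.exp (2 * Real.pi * Complex.I / p) := by
    rw [hη, neg_sq, ← Complex.exp_nat_mul]; congr 1; push_cast; ring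
  have hp1 : η ^ p = 1 := by
    rw [hη, Odd.neg_pow (by rw [hpm]; exact odd_two_mul_add_one _), ← Complex.exp_nat_mul,
        mul_div_cancel₀ _ hp0, Complex.exp_pi_mul_I]; simp
  have hprim : IsPrimitiveRoot η p := by
    rw [IsPrimitiveRoot.iff_orderOf]
    apply orderOf_eq_prime hp1
    intro h1
    have := Complex.isPrimitiveRoot_exp p hp.ne_zero
    rw [← hsq, h1, one_pow] at this
    exact this.ne_one hp.one_lt rfl
  have hg : gaussSum (chiC p) ZMod.stdAddChar =
      ∑ a : ZMod p, ((quadraticChar (ZMod p) a : ℤ) : ℂ) * η ^ (2 * a.val) := by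
    refine Finset.sum_congr rfl fun a _ => ?_
    rw [chiC_apply]
    congr 1
    have := ZMod.stdAddChar_coe (N := p) (a.val : ℤ)
    rw [Int.cast_natCast, ZMod.natCast_zmod_val] at this
    rw [this, pow_mul, hsq, ← Complex.exp_nat_mul]
    congr 1; push_cast; ring
  have hchar : ringChar (ZMod p) ≠ 2 := by rw [ZMod.ringChar_zmod_n]; omega
  have hgsq : gaussSum (chiC p) ZMod.stdAddChar ^ 2 = -(p:ℂ) := by
    rw [gaussSum_sq (chiC_ne_one p h3) (chiC_quad p)
      (ZMod.isPrimitive_stdAddChar p), chiC_apply, quadraticChar_neg_one_three p h3, ZMod.card]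
    simp
  obtain ⟨y, hy, hP⟩ := prod_im p m hpm hm η hη
  refine ⟨y, hy, ?_⟩
  have h4 := prod_sq p m hpm hm η hprim
  rw [← hgsq] at h4
  rcases sq_eq_sq_iff_eq_or_eq_neg.1 h4 with h | h
  · exfalso
    rw [hg] at h
    have := sign_congr p m hpm hm.pos η hprim h.symm
    have h5 : IsSquare (-1 : ZMod p) := ⟨_, by rw [← this, sq]⟩
    rw [ZMod.exists_sq_eq_neg_one_iff] at h5
    exact h5 h3
  · rw [hP] at h
    linear_combination h
open Filter Topology
lemma abel_fin (c w : ℕ → ℝ) (C : ℝ) (hc : ∀ N, |∑ n ∈ Finset.range N, c n| ≤ C)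
    (hw : Antitone w) (hw0 : ∀ n, 0 ≤ w n) (M N : ℕ) (h : M ≤ N) :
    |∑ n ∈ Finset.range N, c n * w n - ∑ n ∈ Finset.range M, c n * w n| ≤ 2 * C * w M := by
  have key : ∀ N, M ≤ N → |∑ n ∈ Finset.range N, c n * w n - ∑ n ∈ Finset.range M, c n * w n
      - (∑ n ∈ Finset.range N, c n - ∑ n ∈ Finset.range M, c n) * w N| ≤ 2 * C * (w M - w N) := by
    intro N hN
    induction N, hN using Nat.le_induction with
    | base => simp
    | succ N hN ih =>
      have h1 := hc (N+1)
      have h2 := hc M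
      have h3 : 0 ≤ w N - w (N+1) := sub_nonneg.2 (hw (Nat.le_succ N))
      rw [Finset.sum_range_succ] at h1
      rw [Finset.sum_range_succ, Finset.sum_range_succ]
      set A := ∑ n ∈ Finset.range N, c n
      set B := ∑ n ∈ Finset.range M, c n
      rw [abs_le] at *
      constructor <;> nlinarith
  have h1 := key N h
  have h2 := hc N
  have h3 := hc M
  have h4 := hw0 N
  rw [abs_le] at *
  constructor <;> nlinarith

lemma abel_tail (c w : ℕ → ℝ) (C : ℝ) (hc : ∀ N, |∑ n ∈ Finset.range N, c n| ≤ C)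
    (hw : Antitone w) (hw0 : ∀ n, 0 ≤ w n) (M : ℕ) (L : ℝ) (hL : HasSum (fun n => c n * w n) L) :
    |L - ∑ n ∈ Finset.range M, c n * w n| ≤ 2 * C * w M := by
  have := (hL.tendsto_sum_nat.sub_const (∑ n ∈ Finset.range M, c n * w n)).abs
  refine le_of_tendsto this ?_
  filter_upwards [eventually_ge_atTop M] with N hN
  exact abel_fin c w C hc hw hw0 M N hN

lemma partial_lower (c : ℕ → ℝ) (C : ℝ) (hc : ∀ N, |∑ n ∈ Finset.range N, c n| ≤ C)
    (hpos : ∀ s : ℝ, 1 < s → ∃ L, 0 ≤ L ∧ HasSum (fun n => c n * ((n:ℝ)+1) ^ (-s)) L) (M : ℕ) :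
    -(2 * C * ((M:ℝ)+1)⁻¹) ≤ ∑ n ∈ Finset.range M, c n * ((n:ℝ)+1)⁻¹ := by
  have cont : ∀ n : ℕ, Tendsto (fun s : ℝ => ((n:ℝ)+1) ^ (-s)) (𝓝[>] 1) (𝓝 (((n:ℝ)+1)⁻¹)) := by
    intro n
    have : ContinuousAt (fun s : ℝ => ((n:ℝ)+1) ^ (-s)) 1 := by
      apply ContinuousAt.rpow
      · fun_prop
      · fun_prop
      · left; positivity
    have h := this.tendsto
    simp only [Real.rpow_neg_one] at h
    exact h.mono_left nhdsWithin_le_nhds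
  have t1 : Tendsto (fun s : ℝ => -(2 * C * ((M:ℝ)+1)^(-s))) (𝓝[>] 1) (𝓝 (-(2 * C * ((M:ℝ)+1)⁻¹))) :=
    ((cont M).const_mul _).neg
  have t2 : Tendsto (fun s : ℝ => ∑ n ∈ Finset.range M, c n * ((n:ℝ)+1)^(-s)) (𝓝[>] 1)
      (𝓝 (∑ n ∈ Finset.range M, c n * ((n:ℝ)+1)⁻¹)) :=
    tendsto_finsetSum _ fun n _ => (cont n).const_mul _
  refine le_of_tendsto_of_tendsto t1 t2 ?_
  filter_upwards [self_mem_nhdsWithin] with s hs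
  obtain ⟨L, hL0, hL⟩ := hpos s hs
  have hs' : (1:ℝ) < s := hs
  have := abel_tail c (fun n => ((n:ℝ)+1)^(-s)) C hc ?_ (fun n => by positivity) M L hL
  · rw [abs_le] at this
    linarith [this.2]
  · intro a b hab
    apply Real.rpow_le_rpow_of_nonpos (by positivity) _ (by linarith)
    have : (a:ℝ) ≤ b := by exact_mod_cast hab
    linarith

lemma abel_limit_nonneg (c : ℕ → ℝ) (C : ℝ) (hc : ∀ N, |∑ n ∈ Finset.range N, c n| ≤ C)
    (hpos : ∀ s : ℝ, 1 < s → ∃ L, 0 ≤ L ∧ HasSum (fun n => c n * ((n:ℝ)+1) ^ (-s)) L)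
    (F : ℝ → ℝ) (ℓ : ℝ) (hF : Tendsto F (𝓝[<] 1) (𝓝 ℓ))
    (hsum : ∀ r : ℝ, 0 < r → r < 1 → HasSum (fun n : ℕ => c n * (r^(n+1) / ((n:ℝ)+1))) (F r)) :
    0 ≤ ℓ := by
  have key : ∀ M : ℕ, -(4 * C * ((M:ℝ)+1)⁻¹) ≤ ℓ := by
    intro M
    have hlow := partial_lower c C hc hpos M
    have cont : ∀ n : ℕ, Tendsto (fun r : ℝ => r^(n+1)/((n:ℝ)+1)) (𝓝[<] 1) (𝓝 (((n:ℝ)+1)⁻¹)) := by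
      intro n
      have : ContinuousAt (fun r : ℝ => r^(n+1)/((n:ℝ)+1)) 1 := by fun_prop
      have h := this.tendsto
      simp only [one_pow, one_div] at h
      exact h.mono_left nhdsWithin_le_nhds
    have t2 : Tendsto (fun r : ℝ => F r - ∑ n ∈ Finset.range M, c n * (r^(n+1)/((n:ℝ)+1))
        + 2 * C * (r^(M+1)/((M:ℝ)+1))) (𝓝[<] 1)
      (𝓝 (ℓ - ∑ n ∈ Finset.range M, c n * ((n:ℝ)+1)⁻¹ + 2 * C * ((M:ℝ)+1)⁻¹)) :=
      (hF.sub (tendsto_finsetSum _ fun n _ => (cont n).const_mul _)).add ((cont M).const_mul _)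
    have : 0 ≤ ℓ - ∑ n ∈ Finset.range M, c n * ((n:ℝ)+1)⁻¹ + 2 * C * ((M:ℝ)+1)⁻¹ := by
      refine ge_of_tendsto t2 ?_
      filter_upwards [Ioo_mem_nhdsLT (zero_lt_one' ℝ)] with r hr
      have := abel_tail c (fun n => r^(n+1)/((n:ℝ)+1)) C hc ?_ ?_ M _ (hsum r hr.1 hr.2)
      · rw [abs_le] at this
        linarith [this.1]
      · intro a b hab
        have : (a:ℝ) ≤ b := by exact_mod_cast hab
        have h2 : r^(b+1) ≤ r^(a+1) := pow_le_pow_of_le_one hr.1.le hr.2.le (by omega)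
        have := hr.1
        simp only
        gcongr
      · intro n
        have := hr.1
        positivity
    linarith
  have t : Tendsto (fun M : ℕ => -(4 * C * ((M:ℝ)+1)⁻¹)) atTop (𝓝 (-(4*C*0))) := by
    refine (Tendsto.const_mul _ ?_).neg
    simpa only [one_div] using tendsto_one_div_add_atTop_nhds_zero_nat (𝕜 := ℝ)
  simp at t
  exact le_of_tendsto t (Eventually.of_forall key)

open Filter Topology

lemma char_partial_bound (p : ℕ) [Fact p.Prime] (h3 : p % 4 = 3) (N : ℕ) :
    |∑ n ∈ Finset.range N, ((quadraticChar (ZMod p) ((n+1 : ℕ) : ZMod p) : ℤ) : ℝ)| ≤ p := by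
  have hp : p.Prime := Fact.out
  set A : ℕ → ℝ := fun N => ∑ n ∈ Finset.range N, ((quadraticChar (ZMod p) ((n+1 : ℕ) : ZMod p) : ℤ) : ℝ) with hA
  have hper : Function.Periodic A p := by
    intro N
    simp only [hA]
    rw [Finset.sum_range_add]
    have : ∑ x ∈ Finset.range p, ((quadraticChar (ZMod p) ((N + x +1 : ℕ) : ZMod p) : ℤ) : ℝ) = 0 := by
      rw [← Int.cast_sum]
      have h0 := quadraticChar_sum_zero (F := ZMod p) (by rw [ZMod.ringChar_zmod_n]; rintro rfl; omega)
      rw [← Int.cast_zero, ← h0]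
      congr 1
      rw [← Equiv.sum_comp (Equiv.addLeft ((N : ZMod p) + 1))]
      refine Finset.sum_bij' (fun x _ => (x : ZMod p)) (fun a _ => a.val) ?_ ?_ ?_ ?_ ?_
      · simp
      · intro a _; simpa using ZMod.val_lt a
      · intro x hx; exact ZMod.val_cast_of_lt (by simpa using hx)
      · intro a _; simp
      · intro x hx; simp; congr 1; ring
    rw [this, add_zero]
  have h1 : A (N % p) = A N := hper.map_mod_nat N
  change |A N| ≤ p
  rw [← h1]
  refine (Finset.abs_sum_le_sum_abs _ _).trans ?_
  have : ∀ n ∈ Finset.range (N % p), |((quadraticChar (ZMod p) ((n+1 : ℕ) : ZMod p) : ℤ) : ℝ)| ≤ 1 := by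
    intro n _
    rcases quadraticChar_isQuadratic (ZMod p) ((n+1 : ℕ) : ZMod p) with h | h | h <;> rw [h] <;> simp
  refine (Finset.sum_le_sum this).trans ?_
  simp
  exact (Nat.mod_lt _ hp.pos).le

open scoped ComplexOrder in
lemma char_dirichlet_nonneg (p : ℕ) [Fact p.Prime] (s : ℝ) (hs : 1 < s) :
    ∃ L : ℝ, 0 ≤ L ∧ HasSum (fun n : ℕ =>
      ((quadraticChar (ZMod p) ((n+1 : ℕ) : ZMod p) : ℤ) : ℝ) * ((n:ℝ)+1) ^ (-s)) L := by
  have hs' : 1 < (s : ℂ).re := by simpa using hs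
  refine ⟨(LSeries (fun n => chiC p n) s).re, ?_, ?_⟩
  · have : 0 ≤ LSeries (fun n => chiC p n) s := by
      refine ge_of_tendsto (DirichletCharacter.LSeries_eulerProduct (chiC p) hs') ?_
      refine Eventually.of_forall fun n => Finset.prod_nonneg fun q hq => ?_
      have hq : q.Prime := Nat.prime_of_mem_primesBelow hq
      have e : (1 - chiC p q * (q:ℂ) ^ (-(s:ℂ)))⁻¹ =
          (((1 - ((quadraticChar (ZMod p) (q : ZMod p) : ℤ) : ℝ) * (q:ℝ)^(-s))⁻¹ : ℝ) : ℂ) := by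
        rw [chiC_apply]
        push_cast
        rw [Complex.ofReal_cpow (by positivity)]
        push_cast; rfl
      rw [e, Complex.zero_le_real]
      apply inv_nonneg.2
      have h1 : (q:ℝ)^(-s) ≤ 1 := by
        apply Real.rpow_le_one_of_one_le_of_nonpos
        · exact_mod_cast hq.one_lt.le
        · linarith
      have h0 : 0 ≤ (q:ℝ)^(-s) := by positivity
      rcases quadraticChar_isQuadratic (ZMod p) (q : ZMod p) with h | h | h <;> rw [h] <;> simp <;> linarith
    exact (Complex.nonneg_iff.1 this).1
  · have h := (DirichletCharacter.LSeriesSummable_of_one_lt_re (chiC p) hs').hasSum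
    have h' := Complex.reCLM.hasSum h
    rw [← hasSum_nat_add_iff' 1] at h'
    simp only [Finset.range_one, Finset.sum_singleton, Function.comp, LSeries.term_zero, map_zero,
      sub_zero] at h'
    refine Eq.mpr (congrArg (fun f : ℕ → ℝ => HasSum f _) (funext fun n => ?_)) h'
    rw [LSeries.term_of_ne_zero (by omega), chiC_apply]
    have e : (((n+1 : ℕ)) : ℂ) ^ (s : ℂ) = ((((n:ℝ)+1) ^ s : ℝ) : ℂ) := by
      rw [Complex.ofReal_cpow (by positivity)]; push_cast; rfl
    rw [e, ← Complex.ofReal_intCast, ← Complex.ofReal_div, Complex.reCLM_apply, Complex.ofReal_re,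
      Real.rpow_neg (by positivity)]
    rfl

lemma gauss_shift (p : ℕ) [Fact p.Prime] (h3 : p % 4 = 3) (n : ℕ) :
    ∑ a : ZMod p, chiC p a * (ZMod.stdAddChar a : ℂ) ^ n =
      chiC p n * gaussSum (chiC p) ZMod.stdAddChar := by
  have e : ∀ a : ZMod p, (ZMod.stdAddChar a : ℂ) ^ n = ZMod.stdAddChar ((n : ZMod p) * a) := by
    intro a
    rw [← AddChar.map_nsmul_eq_pow, nsmul_eq_mul]
  simp only [e]
  by_cases hn : (n : ZMod p) = 0
  · simp only [hn, zero_mul, AddChar.map_zero_eq_one, mul_one]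
    rw [MulChar.sum_eq_zero_of_ne_one (chiC_ne_one p h3), MulChar.map_zero, zero_mul]
  · have h := gaussSum_mulShift (chiC p) ZMod.stdAddChar (Units.mk0 (n : ZMod p) hn)
    rw [Units.val_mk0] at h
    rw [← h, ← mul_assoc, ← sq]
    have h2 : chiC p n ^ 2 = 1 := by
      rw [chiC_apply]
      have := quadraticChar_sq_one hn
      exact_mod_cast this
    rw [h2, one_mul]
    rfl

lemma abs_one_sub_exp_arg (t : ℝ) (h0 : 0 < t) (h1 : t < 1) :
    (1 - Complex.exp (2 * Real.pi * Complex.I * t)).arg = Real.pi * t - Real.pi / 2 := by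
  have hπ := Real.pi_pos
  have hsin : 0 < Real.sin (Real.pi * t) :=
    Real.sin_pos_of_pos_of_lt_pi (by positivity) (by nlinarith)
  have := Complex.arg_mul_cos_add_sin_mul_I (r := 2 * Real.sin (Real.pi * t)) (by positivity)
    (θ := Real.pi * t - Real.pi / 2) ⟨by nlinarith, by nlinarith⟩
  rw [← this]
  congr 1
  rw [show 2 * (Real.pi:ℂ) * Complex.I * t = ((2 * (Real.pi * t) : ℝ) : ℂ) * Complex.I by push_cast; ring,
    Complex.exp_mul_I, ← Complex.ofReal_cos, ← Complex.ofReal_sin, ← Complex.ofReal_cos,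
    ← Complex.ofReal_sin, Real.sin_sub_pi_div_two, Real.cos_sub_pi_div_two, Real.sin_two_mul,
    Real.cos_two_mul]
  have h := Real.sin_sq_add_cos_sq (Real.pi * t)
  have h' : ((Real.sin (Real.pi * t) : ℝ) : ℂ)^2 + ((Real.cos (Real.pi * t) : ℝ) : ℂ)^2 = 1 := by
    exact_mod_cast h
  push_cast at h' ⊢
  linear_combination (-2) * h'

lemma std_eq (p : ℕ) [Fact p.Prime] (a : ZMod p) :
    (ZMod.stdAddChar a : ℂ) = Complex.exp (2 * Real.pi * Complex.I * ((a.val / p : ℝ) : ℂ)) := by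
  have := ZMod.stdAddChar_coe (N := p) (a.val : ℤ)
  rw [Int.cast_natCast, ZMod.natCast_zmod_val] at this
  rw [this]
  congr 1; push_cast; ring

lemma T_nonpos (p : ℕ) [Fact p.Prime] (h3 : p % 4 = 3) :
    ∑ a : ZMod p, ((quadraticChar (ZMod p) a : ℤ) : ℝ) * (a.val : ℝ) ≤ 0 := by
  have hp : p.Prime := Fact.out
  have hp0 : (0:ℝ) < p := by exact_mod_cast hp.pos
  obtain ⟨y, hy, hg⟩ := gauss_sign p h3
  set χ : ZMod p → ℝ := fun a => ((quadraticChar (ZMod p) a : ℤ) : ℝ) with hχ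
  have hχ0 : ∑ a, χ a = 0 := by
    have h0 := quadraticChar_sum_zero (F := ZMod p) (by rw [ZMod.ringChar_zmod_n]; rintro rfl; omega)
    simp only [hχ]; exact_mod_cast h0
  have hχz : χ 0 = 0 := by simp [hχ]
  have hχC : ∀ a, chiC p a = (χ a : ℂ) := by intro a; rw [chiC_apply]; simp [hχ]
  set ψ : ZMod p → ℂ := fun a => ZMod.stdAddChar a with hψ
  have hψn : ∀ a, ‖ψ a‖ = 1 := by intro a; simp [hψ]
  have hval : ∀ a : ZMod p, a ≠ 0 → 0 < (a.val / p : ℝ) ∧ (a.val / p : ℝ) < 1 := by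
    intro a ha
    have h1 : 0 < a.val := Nat.pos_of_ne_zero (by rwa [Ne, ZMod.val_eq_zero])
    have h2 := ZMod.val_lt a
    constructor
    · have : (0:ℝ) < a.val := by exact_mod_cast h1
      positivity
    · rw [div_lt_one hp0]; exact_mod_cast h2
  have harg : ∀ a, a ≠ 0 → (1 - ψ a).arg = Real.pi * (a.val / p) - Real.pi / 2 := by
    intro a ha
    simp only [hψ]
    rw [std_eq]
    exact abs_one_sub_exp_arg _ (hval a ha).1 (hval a ha).2
  have hslit : ∀ a, a ≠ 0 → 1 - ψ a ∈ Complex.slitPlane := by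
    intro a ha
    have hπ := Real.pi_pos
    have ⟨h1, h2⟩ := hval a ha
    rw [Complex.mem_slitPlane_iff_arg, harg a ha]
    refine ⟨by nlinarith, ?_⟩
    intro h0
    have h4 : ψ a = 1 := by linear_combination -h0
    have := ZMod.injective_stdAddChar (N := p) (a₁ := a) (a₂ := 0) (by rw [AddChar.map_zero_eq_one]; exact h4)
    exact ha this
  set F : ℝ → ℝ := fun r => -(∑ a, χ a * (1 - r * ψ a).arg) / y with hF
  have hT : Tendsto F (𝓝[<] 1) (𝓝 (-(∑ a, χ a * (1 - ψ a).arg) / y)) := by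
    refine ((tendsto_finsetSum _ fun a _ => ?_).neg).div_const y
    by_cases ha : a = 0
    · simp [ha, hχz]
    · refine Tendsto.const_mul _ ?_
      have c : ContinuousAt (fun r : ℝ => (1 - (r:ℂ) * ψ a).arg) 1 := by
        refine ContinuousAt.comp (g := Complex.arg) (f := fun r : ℝ => 1 - (r:ℂ) * ψ a) ?_ (by fun_prop)
        simpa using Complex.continuousAt_arg (hslit a ha)
      have := c.tendsto
      simp only [Complex.ofReal_one, one_mul] at this
      exact this.mono_left nhdsWithin_le_nhds
  have hlim : 0 ≤ -(∑ a, χ a * (1 - ψ a).arg) / y := by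
    refine abel_limit_nonneg (fun n => χ ((n+1 : ℕ) : ZMod p)) p (char_partial_bound p h3)
      (char_dirichlet_nonneg p) F _ hT ?_
    intro r hr0 hr1
    have h1 : HasSum (fun n : ℕ => ∑ a, chiC p a * ((r * ψ a)^n / n)) (∑ a, chiC p a * (-Complex.log (1 - r * ψ a))) := by
      refine hasSum_sum fun a _ => HasSum.mul_left _ (Complex.hasSum_taylorSeries_neg_log ?_)
      rw [norm_mul, hψn, mul_one, Complex.norm_real, Real.norm_of_nonneg hr0.le]; exact hr1
    have h2 : ∀ n : ℕ, ∑ a, chiC p a * ((r * ψ a)^n / n) = ((χ n * (r^n / n) * y : ℝ) : ℂ) * Complex.I := by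
      intro n
      have := gauss_shift p h3 n
      rw [hg] at this
      calc _ = (∑ a, chiC p a * ψ a ^ n) * (r ^ n / n) := by
            rw [Finset.sum_mul]; refine Finset.sum_congr rfl fun a _ => ?_
            rw [mul_pow]; ring
        _ = _ := by
            rw [this, hχC]; push_cast; ring
    simp only [h2] at h1
    have h3' := Complex.imCLM.hasSum h1
    rw [← hasSum_nat_add_iff' 1] at h3'
    have h4 := h3'.div_const y
    have hv : F r = (Complex.imCLM (∑ a, chiC p a * (-Complex.log (1 - r * ψ a))) -
        ∑ i ∈ Finset.range 1, (Complex.imCLM ∘ fun n : ℕ => ((χ n * (r^n / n) * y : ℝ) : ℂ) * Complex.I) i) / y := by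
      simp only [hF, Finset.range_one, Finset.sum_singleton, Function.comp, Complex.imCLM_apply, Complex.im_ofReal_mul, Complex.I_im,
        Nat.cast_zero, hχz, zero_mul, sub_zero, Complex.im_sum, hχC, Complex.neg_im, Complex.log_im, mul_neg,
        Finset.sum_neg_distrib]
    rw [hv]
    refine Eq.mpr (congrArg (fun f : ℕ → ℝ => HasSum f _) (funext fun n => ?_)) h4
    · simp only [Function.comp, Complex.imCLM_apply, Complex.im_ofReal_mul, Complex.I_im]
      field_simp
      push_cast
      ring
  have hfin : ∑ a, χ a * (1 - ψ a).arg = Real.pi / p * ∑ a, χ a * (a.val : ℝ) := by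
    have : ∀ a, χ a * (1 - ψ a).arg = Real.pi / p * (χ a * (a.val : ℝ)) - Real.pi / 2 * χ a := by
      intro a
      by_cases ha : a = 0
      · simp [ha, hχz]
      · rw [harg a ha]; ring
    rw [Finset.sum_congr rfl fun a _ => this a, Finset.sum_sub_distrib, ← Finset.mul_sum,
      ← Finset.mul_sum, hχ0]; ring
  rw [hfin] at hlim
  by_contra hcon
  push Not at hcon
  have hpos : 0 < Real.pi / p * ∑ a, χ a * (a.val : ℝ) := mul_pos (div_pos Real.pi_pos hp0) hcon
  have : -(Real.pi / p * ∑ a, χ a * (a.val : ℝ)) / y < 0 := div_neg_of_neg_of_pos (by linarith) hy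
  linarith

lemma sum_split_sym {f : ℕ → ℝ} (m : ℕ) : ∑ n ∈ Finset.range (2*m+1), f n =
    f 0 + ∑ j ∈ Finset.range m, (f (j+1) + f (2*m+1-(j+1))) := by
  rw [Finset.sum_range_succ', add_comm, Finset.sum_add_distrib]
  congr 1
  rw [two_mul, Finset.sum_range_add]
  congr 1
  rw [← Finset.sum_range_reflect]
  refine Finset.sum_congr rfl fun j hj => ?_
  rw [Finset.mem_range] at hj
  congr 1; omega

lemma sum_split_par {f : ℕ → ℝ} (m : ℕ) : ∑ n ∈ Finset.range (2*m+1), f n =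
    f 0 + ∑ j ∈ Finset.range m, (f (2*(j+1)) + f (2*m+1-2*(j+1))) := by
  have h1 : ∑ n ∈ Finset.range (2*m+1), f n =
      f 0 + (∑ j ∈ Finset.range m, f (2*(j+1)) + ∑ j ∈ Finset.range m, f (2*j+1)) := by
    induction m with
    | zero => simp
    | succ k ih =>
      rw [show 2*(k+1)+1 = 2*k+1+1+1 by ring, Finset.sum_range_succ, Finset.sum_range_succ, ih,
        Finset.sum_range_succ, Finset.sum_range_succ, show 2*(k+1) = 2*k+1+1 by ring]
      ring
  rw [h1, Finset.sum_add_distrib, ← Finset.sum_range_reflect (fun j => f (2*j+1))]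
  congr 2
  refine Finset.sum_congr rfl fun j hj => ?_
  rw [Finset.mem_range] at hj
  congr 1; omega

lemma S_nonneg (p m : ℕ) [Fact p.Prime] (h3 : p % 4 = 3) (hm : p = 2*m+1) :
    0 ≤ ∑ j ∈ Finset.range m, ((quadraticChar (ZMod p) ((j+1 : ℕ) : ZMod p) : ℤ) : ℝ) := by
  have hp : p.Prime := Fact.out
  have hp0 : (0:ℝ) < p := by exact_mod_cast hp.pos
  have hT := T_nonpos p h3
  set χ : ℕ → ℝ := fun n => ((quadraticChar (ZMod p) (n : ZMod p) : ℤ) : ℝ) with hχ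
  have hneg : ∀ n, n ≤ p → χ (p - n) = - χ n := by
    intro n hn
    simp only [hχ]
    rw [Nat.cast_sub hn, ZMod.natCast_self, zero_sub, neg_eq_neg_one_mul, map_mul,
      quadraticChar_neg_one_three p h3]
    push_cast; ring
  have hmul : ∀ n, χ (2*n) = χ 2 * χ n := by
    intro n; simp only [hχ]; push_cast; rw [map_mul]; push_cast; rfl
  have h2 : χ 2 = 1 ∨ χ 2 = -1 := by
    have h0 : ((2:ℕ) : ZMod p) ≠ 0 := by
      rw [Ne, ZMod.natCast_eq_zero_iff]
      intro h
      have h5 := Nat.le_of_dvd (by norm_num) h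
      omega
    rcases quadraticChar_dichotomy h0 with h | h <;> simp only [hχ, h] <;> simp
  set f : ℕ → ℝ := fun n => χ n * n with hf
  have hTf : ∑ a : ZMod p, ((quadraticChar (ZMod p) a : ℤ) : ℝ) * (a.val : ℝ) = ∑ n ∈ Finset.range p, f n := by
    refine Finset.sum_bij' (fun a _ => a.val) (fun x _ => (x : ZMod p)) ?_ ?_ ?_ ?_ ?_
    · intro a _; simpa using ZMod.val_lt a
    · simp
    · intro a _; simp
    · intro x hx; exact ZMod.val_cast_of_lt (by simpa using hx)
    · intro x hx; simp [hf, hχ]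
  rw [hTf] at hT
  set T := ∑ n ∈ Finset.range p, f n with hTd
  set S := ∑ j ∈ Finset.range m, χ (j+1) with hS
  set A := ∑ j ∈ Finset.range m, χ (j+1) * ((j+1 : ℕ) : ℝ) with hA
  have hf0 : f 0 = 0 := by simp [hf]
  have e1 : T = 2 * A - p * S := by
    rw [hTd, hm, sum_split_sym, hf0, zero_add, ← hm, hA, hS, Finset.mul_sum, Finset.mul_sum,
      ← Finset.sum_sub_distrib]
    refine Finset.sum_congr rfl fun j hj => ?_
    rw [Finset.mem_range] at hj
    simp only [hf]
    rw [hneg _ (by omega), Nat.cast_sub (by omega)]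
    ring
  have e2 : T = χ 2 * (4 * A - p * S) := by
    rw [hTd, hm, sum_split_par, hf0, zero_add, ← hm, hA, hS, Finset.mul_sum, Finset.mul_sum,
      ← Finset.sum_sub_distrib, Finset.mul_sum]
    refine Finset.sum_congr rfl fun j hj => ?_
    rw [Finset.mem_range] at hj
    simp only [hf]
    rw [hneg _ (by omega), Nat.cast_sub (by omega), hmul]
    push_cast
    ring
  change 0 ≤ S
  have : 0 ≤ p * S := by
    rcases h2 with h | h <;> rw [h] at e2 <;> linarith
  exact nonneg_of_mul_nonneg_right this hp0

end ResidueHelpers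

open scoped Classical in
/-- For a prime `p ≡ 3 (mod 4)`, there are strictly more quadratic residues of `p`
in `[1, (p-1)/2]` than non-residues of `p` in `[1, (p-1)/2]`. -/
theorem small_residues_card_gt_small_nonresidues_card_of_prime_mod_four_eq_three
    (p : ℕ) (hp : p.Prime) (hmod : p % 4 = 3) :
    ((Finset.Icc 1 ((p - 1) / 2)).filter
        (fun y => ¬ ∃ x : ℤ, x ^ 2 ≡ (y : ℤ) [ZMOD (p : ℤ)])).card <
      ((Finset.Icc 1 ((p - 1) / 2)).filter
        (fun y => ∃ x : ℤ, x ^ 2 ≡ (y : ℤ) [ZMOD (p : ℤ)])).card := by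
  have : Fact p.Prime := ⟨hp⟩
  obtain ⟨m, hm⟩ : ∃ m, p = 2*m+1 := ⟨p/2, by omega⟩
  have hS := ResidueHelpers.S_nonneg p m hmod hm
  rw [show (p-1)/2 = m by omega]
  have hcast : ∀ (Q : ℤ → Prop) [DecidablePred Q], ((do let a ← Finset.Icc 1 m; pure (a : ℤ)) : Finset ℤ).filter Q =
      ((Finset.Icc 1 m).filter (fun y : ℕ => Q (y : ℤ))).image (fun y : ℕ => (y : ℤ)) := by
    intro Q _
    ext z
    simp only [Finset.bind_def, Finset.pure_def, Finset.mem_filter, Finset.mem_image, Finset.mem_sup,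
      Finset.mem_singleton]
    constructor
    · rintro ⟨⟨a, ha, rfl⟩, h⟩
      exact ⟨a, ⟨ha, h⟩, rfl⟩
    · rintro ⟨a, ⟨ha, h⟩, rfl⟩
      exact ⟨⟨a, ha, rfl⟩, h⟩
  rw [hcast, hcast, Finset.card_image_of_injective _ Nat.cast_injective,
    Finset.card_image_of_injective _ Nat.cast_injective]
  have hcard := Finset.card_filter_add_card_filter_not (s := Finset.Icc 1 m)
    (fun y => ∃ x : ℤ, x ^ 2 ≡ (y : ℤ) [ZMOD (p : ℤ)])
  rw [Nat.card_Icc] at hcard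
  set R := (Finset.Icc 1 m).filter (fun y : ℕ => ∃ x : ℤ, x ^ 2 ≡ (y : ℤ) [ZMOD (p : ℤ)]) with hR
  set N := (Finset.Icc 1 m).filter (fun y : ℕ => ¬ ∃ x : ℤ, x ^ 2 ≡ (y : ℤ) [ZMOD (p : ℤ)]) with hN
  have hiff : ∀ y : ℕ, (∃ x : ℤ, x ^ 2 ≡ (y : ℤ) [ZMOD (p : ℤ)]) ↔ IsSquare (y : ZMod p) := by
    intro y
    constructor
    · rintro ⟨x, hx⟩
      rw [← ZMod.intCast_eq_intCast_iff] at hx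
      push_cast at hx
      exact ⟨x, by rw [← hx, sq]⟩
    · rintro ⟨z, hz⟩
      obtain ⟨x, rfl⟩ := ZMod.intCast_surjective z
      refine ⟨x, ?_⟩
      rw [← ZMod.intCast_eq_intCast_iff]
      push_cast
      rw [hz, sq]
  have hne : ∀ y ∈ Finset.Icc 1 m, (y : ZMod p) ≠ 0 := by
    intro y hy
    rw [Finset.mem_Icc] at hy
    rw [Ne, ZMod.natCast_eq_zero_iff]
    intro h
    have := Nat.le_of_dvd (by omega) h
    omega
  have hsum : ∑ j ∈ Finset.range m, ((quadraticChar (ZMod p) ((j+1 : ℕ) : ZMod p) : ℤ) : ℝ) =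
      (R.card : ℝ) - N.card := by
    have h1 : ∑ j ∈ Finset.range m, ((quadraticChar (ZMod p) ((j+1 : ℕ) : ZMod p) : ℤ) : ℝ) =
        ∑ y ∈ Finset.Icc 1 m, ((quadraticChar (ZMod p) (y : ZMod p) : ℤ) : ℝ) := by
      refine Finset.sum_bij' (fun j _ => j+1) (fun y _ => y-1) ?_ ?_ ?_ ?_ ?_
      · intro j hj; rw [Finset.mem_range] at hj; rw [Finset.mem_Icc]; omega
      · intro j hj; rw [Finset.mem_Icc] at hj; rw [Finset.mem_range]; omega
      · intro j hj; rfl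
      · intro j hj; rw [Finset.mem_Icc] at hj; omega
      · intro j hj; rfl
    rw [h1, ← Finset.sum_filter_add_sum_filter_not (Finset.Icc 1 m)
      (fun y => ∃ x : ℤ, x ^ 2 ≡ (y : ℤ) [ZMOD (p : ℤ)])]
    have h2 : ∑ y ∈ R, ((quadraticChar (ZMod p) (y : ZMod p) : ℤ) : ℝ) = R.card := by
      rw [Finset.card_eq_sum_ones, Nat.cast_sum]
      refine Finset.sum_congr rfl fun y hy => ?_
      rw [hR, Finset.mem_filter, hiff] at hy
      rw [(quadraticChar_one_iff_isSquare (hne y hy.1)).2 hy.2]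
      simp
    have h3 : ∑ y ∈ N, ((quadraticChar (ZMod p) (y : ZMod p) : ℤ) : ℝ) = -N.card := by
      rw [Finset.card_eq_sum_ones, Nat.cast_sum, ← Finset.sum_neg_distrib]
      refine Finset.sum_congr rfl fun y hy => ?_
      rw [hN, Finset.mem_filter, hiff] at hy
      rw [quadraticChar_neg_one_iff_not_isSquare.2 hy.2]
      simp
    rw [h2, h3]; ring
  rw [hsum] at hS
  have hle : N.card ≤ R.card := by
    have : (N.card : ℝ) ≤ R.card := by linarith
    exact_mod_cast this
  omega
end

section
/- Let p be a prime with p ≡ 3 (mod 4). Then 4·R_b(p) > p, i.e. the number of quadratic residues of p in [1, (p−1)/2] exceeds p/4. -/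
namespace QR

/-- Part 1 -/
lemma card_aux (p : ℕ) [Fact p.Prime] (hmod : p % 4 = 3)
    (hS : 0 ≤ ∑ y ∈ Finset.Icc 1 ((p-1)/2), quadraticChar (ZMod p) (y : ZMod p))
    [DecidablePred (fun y : ℕ => ∃ x : ℤ, x ^ 2 ≡ (y : ℤ) [ZMOD (p : ℤ)])] :
    4 * ((Finset.Icc 1 ((p - 1) / 2)).filter
        (fun y : ℕ => ∃ x : ℤ, x ^ 2 ≡ (y : ℤ) [ZMOD (p : ℤ)])).card > p := by
  have key : ∀ y ∈ Finset.Icc 1 ((p-1)/2), quadraticChar (ZMod p) (y : ZMod p)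
      = 2 * (if (∃ x : ℤ, x ^ 2 ≡ (y : ℤ) [ZMOD (p : ℤ)]) then 1 else 0) - 1 := by
    intro y hy
    rw [Finset.mem_Icc] at hy
    have hy0 : (y : ZMod p) ≠ 0 := by
      rw [Ne, ZMod.natCast_eq_zero_iff]
      intro h
      have := Nat.le_of_dvd (by omega) h
      omega
    have hiff : (∃ x : ℤ, x ^ 2 ≡ (y : ℤ) [ZMOD (p : ℤ)]) ↔ IsSquare (y : ZMod p) := by
      constructor
      · rintro ⟨x, hx⟩
        rw [← ZMod.intCast_eq_intCast_iff] at hx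
        refine ⟨(x : ZMod p), ?_⟩
        push_cast at hx
        rw [← hx]; ring
      · rintro ⟨x, hx⟩
        refine ⟨(x.val : ℤ), ?_⟩
        rw [← ZMod.intCast_eq_intCast_iff]
        push_cast
        rw [ZMod.natCast_val, ZMod.cast_id, hx]; ring
    by_cases h : ∃ x : ℤ, x ^ 2 ≡ (y : ℤ) [ZMOD (p : ℤ)]
    · rw [if_pos h, (quadraticChar_one_iff_isSquare hy0).2 (hiff.1 h)]; norm_num
    · rw [if_neg h, quadraticChar_neg_one_iff_not_isSquare.2 (fun h' => h (hiff.2 h'))]; norm_num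
  rw [Finset.sum_congr rfl key, Finset.sum_sub_distrib, ← Finset.mul_sum, Finset.sum_boole] at hS
  simp at hS
  omega

lemma T_aux (p : ℕ) [Fact p.Prime] (hmod : p % 4 = 3)
    (hT : ∑ a ∈ Finset.range p, (a : ℤ) * quadraticChar (ZMod p) (a : ZMod p) ≤ 0) :
    0 ≤ ∑ y ∈ Finset.Icc 1 ((p-1)/2), quadraticChar (ZMod p) (y : ZMod p) := by
  set χ := quadraticChar (ZMod p) with hχ
  obtain ⟨m, rfl⟩ : ∃ m, p = 2 * m + 1 := ⟨p / 2, by omega⟩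
  have hm : (2 * m + 1 - 1) / 2 = m := by omega
  rw [hm]
  have hneg : χ (-1) = -1 := by
    rw [hχ, quadraticChar_neg_one_iff_not_isSquare, ZMod.exists_sq_eq_neg_one_iff]
    omega
  have hneg' : ∀ k, k ≤ 2*m+1 → χ ((2*m+1-k : ℕ) : ZMod (2*m+1)) = - χ (k : ZMod (2*m+1)) := by
    intro k hk
    rw [Nat.cast_sub hk, ZMod.natCast_self, zero_sub, neg_eq_neg_one_mul, map_mul, hneg]
    ring
  set S := ∑ y ∈ Finset.Icc 1 m, χ (y : ZMod (2*m+1)) with hS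
  set U := ∑ y ∈ Finset.Icc 1 m, (y:ℤ) * χ (y : ZMod (2*m+1)) with hU
  set T := ∑ a ∈ Finset.range (2*m+1), (a : ℤ) * χ (a : ZMod (2*m+1)) with hTd
  have h1 : T = 2 * U - (2*m+1) * S := by
    have split : Finset.range (2*m+1) = {0} ∪ (Finset.Icc 1 m ∪ (Finset.Icc 1 m).image (fun k => 2*m+1-k)) := by
      ext a
      simp only [Finset.mem_range, Finset.mem_union, Finset.mem_singleton, Finset.mem_Icc, Finset.mem_image]
      constructor
      · intro h
        by_cases h0 : a = 0
        · left; exact h0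
        · right
          by_cases h2 : a ≤ m
          · left; omega
          · right; exact ⟨2*m+1-a, by omega, by omega⟩
      · rintro (h | h | ⟨k, h, h'⟩) <;> omega
    rw [hTd, split, Finset.sum_union, Finset.sum_union, Finset.sum_image, Finset.sum_singleton]
    · rw [hU, hS, Finset.mul_sum, Finset.mul_sum, ← Finset.sum_sub_distrib, ← Finset.sum_add_distrib]
      simp only [Nat.cast_zero, zero_mul, zero_add]
      refine Finset.sum_congr rfl fun k hk => ?_
      rw [Finset.mem_Icc] at hk
      rw [hneg' k (by omega), Nat.cast_sub (by omega)]
      push_cast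
      ring
    · intro a ha b hb hab
      simp only [Finset.coe_Icc, Set.mem_Icc] at ha hb hab
      omega
    · rw [Finset.disjoint_left]
      intro a ha hb
      simp only [Finset.mem_Icc, Finset.mem_image] at ha hb
      obtain ⟨k, h, h'⟩ := hb
      omega
    · rw [Finset.disjoint_left]
      intro a ha hb
      simp only [Finset.mem_Icc, Finset.mem_image, Finset.mem_union, Finset.mem_singleton] at ha hb
      rcases hb with hb | ⟨k, h, h'⟩ <;> omega
  have h2 : T = χ 2 * (4 * U - (2*m+1) * S) := by
    have split : Finset.range (2*m+1) = {0} ∪ ((Finset.Icc 1 m).image (fun k => 2*k) ∪ (Finset.Icc 1 m).image (fun k => 2*m+1-2*k)) := by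
      ext a
      simp only [Finset.mem_range, Finset.mem_union, Finset.mem_singleton, Finset.mem_Icc, Finset.mem_image]
      constructor
      · intro h
        by_cases h0 : a = 0
        · left; exact h0
        · right
          by_cases h2 : a % 2 = 0
          · left; exact ⟨a/2, by omega, by omega⟩
          · right; exact ⟨(2*m+1-a)/2, by omega, by omega⟩
      · rintro (h | ⟨k, h, h'⟩ | ⟨k, h, h'⟩) <;> omega
    rw [hTd, split, Finset.sum_union, Finset.sum_union, Finset.sum_image, Finset.sum_image, Finset.sum_singleton]
    · rw [hU, hS, Finset.mul_sum, Finset.mul_sum, ← Finset.sum_sub_distrib, ← Finset.sum_add_distrib, Finset.mul_sum]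
      simp only [Nat.cast_zero, zero_mul, zero_add]
      refine Finset.sum_congr rfl fun k hk => ?_
      rw [Finset.mem_Icc] at hk
      rw [hneg' (2*k) (by omega), Nat.cast_sub (by omega)]
      push_cast
      rw [map_mul]
      ring
    · intro a ha b hb hab
      simp only [Finset.coe_Icc, Set.mem_Icc] at ha hb hab
      omega
    · intro a ha b hb hab
      simp only at hab
      omega
    · rw [Finset.disjoint_left]
      intro a ha hb
      simp only [Finset.mem_Icc, Finset.mem_image] at ha hb
      obtain ⟨k, h, h'⟩ := hb
      obtain ⟨k', hh, hh'⟩ := ha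
      omega
    · rw [Finset.disjoint_left]
      intro a ha hb
      simp only [Finset.mem_Icc, Finset.mem_image, Finset.mem_union, Finset.mem_singleton] at ha hb
      rcases hb with ⟨k, h, h'⟩ | ⟨k, h, h'⟩ <;> omega
  have h20 : (2 : ZMod (2*m+1)) ≠ 0 := by
    have : ((2:ℕ) : ZMod (2*m+1)) ≠ 0 := by
      rw [Ne, ZMod.natCast_eq_zero_iff]
      intro h
      have := Nat.le_of_dvd (by omega) h
      omega
    exact_mod_cast this
  have hm0 : (0:ℤ) ≤ m := by positivity
  rcases quadraticChar_dichotomy h20 with h | h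
  · rw [← hχ] at h
    rw [h] at h2
    nlinarith
  · rw [← hχ] at h
    rw [h] at h2
    nlinarith

open Polynomial in
/-- The Euler operator `X d/dX`. -/
noncomputable def eulerOp (R : Type) [CommRing R] : R[X] →ₗ[R] R[X] :=
  (LinearMap.mulLeft R (X : R[X])) ∘ₗ derivative

open Polynomial in
lemma eulerOp_pow_X (R : Type) [CommRing R] (j a : ℕ) :
    ((eulerOp R) ^ j) (X ^ a) = C ((a : R) ^ j) * X ^ a := by
  induction j with
  | zero => simp
  | succ j ih =>
    rw [pow_succ', Module.End.mul_apply, ih]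
    simp only [eulerOp, LinearMap.comp_apply, LinearMap.mulLeft_apply, derivative_C_mul_X_pow]
    rcases a with _ | a
    · simp
    · simp only [map_mul, map_pow, map_natCast, Nat.add_sub_cancel]
      ring

open Polynomial in
lemma eulerOp_pow_mul (R : Type) [CommRing R] (k : ℕ) (q : R[X]) (j : ℕ) (hj : j ≤ k) :
    ∃ q' : R[X], ((eulerOp R) ^ j) ((X - 1) ^ k * q) = (X - 1) ^ (k - j) * q' ∧
      q'.eval 1 = (k.descFactorial j : R) * q.eval 1 := by
  induction j with
  | zero => exact ⟨q, by simp, by simp⟩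
  | succ j ih =>
    obtain ⟨q', h1, h2⟩ := ih (by omega)
    obtain ⟨n, hn⟩ : ∃ n, k - j = n + 1 := ⟨k - j - 1, by omega⟩
    have hn' : k - (j+1) = n := by omega
    refine ⟨(n + 1 : R[X]) * X * q' + (X - 1) * X * derivative q', ?_, ?_⟩
    · rw [pow_succ', Module.End.mul_apply, h1, hn, hn']
      simp only [eulerOp, LinearMap.comp_apply, LinearMap.mulLeft_apply, derivative_mul,
        derivative_pow, derivative_sub, derivative_X, derivative_one]
      simp only [Nat.add_sub_cancel, Nat.cast_add, Nat.cast_one, map_add, map_natCast, map_one]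
      ring
    · rw [Nat.descFactorial_succ, hn]
      simp [h2]
      ring

lemma sum_zmod {M : Type} [AddCommMonoid M] (p : ℕ) [NeZero p] (f : ZMod p → M) :
    ∑ a, f a = ∑ a ∈ Finset.range p, f (a:ZMod p) := by
  symm
  refine Finset.sum_bij' (fun a _ => (a : ZMod p)) (fun a _ => a.val) ?_ ?_ ?_ ?_ ?_
  · simp
  · intro a _; simpa using ZMod.val_lt a
  · intro a ha; exact ZMod.val_cast_of_lt (by simpa using ha)
  · intro a _; simp
  · simp

lemma quadraticChar_pow' (p : ℕ) [Fact p.Prime] (hmod : p % 4 = 3) (a : ZMod p) :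
    ((quadraticChar (ZMod p) a : ℤ) : ZMod p) = a ^ ((p-1)/2) := by
  rw [quadraticChar_eq_pow_of_char_ne_two' (by rw [ZMod.ringChar_zmod_n]; omega), ZMod.card]
  congr 1; omega

open Polynomial in
/-- The sign congruence -/
lemma sign_cong (p : ℕ) [Fact p.Prime] (hmod : p % 4 = 3) (ε : ℤ) (ζ : ℂ)
    (hζ : IsPrimitiveRoot ζ p)
    (h : ∑ a ∈ Finset.range p, ((quadraticChar (ZMod p) (a : ZMod p) : ℤ) : ℂ) * ζ ^ a
      = ε * ∏ k ∈ Finset.Icc 1 ((p-1)/2), (ζ ^ k - ζ ^ (p - k))) :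
    (-1 : ZMod p) = ε * ((((p-1)/2).factorial : ZMod p) * (2 ^ ((p-1)/2) * (((p-1)/2).factorial : ZMod p))) := by
  have hp : p.Prime := Fact.out
  set m := (p-1)/2 with hm
  have hpm : p = 2 * m + 1 := by omega
  let f : ℤ[X] := ∑ a ∈ Finset.range p, C (quadraticChar (ZMod p) (a : ZMod p)) * X ^ a
      - C ε * ∏ k ∈ Finset.Icc 1 m, (X ^ k - X ^ (p - k))
  have hf : aeval ζ f = 0 := by
    simp only [f, map_sub, map_sum, map_mul, map_prod, map_pow, aeval_X, aeval_C]
    simp only [algebraMap_int_eq, eq_intCast]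
    rw [h, sub_self]
  have hdvd : cyclotomic p ℤ ∣ f := by
    rw [cyclotomic_eq_minpoly hζ hp.pos]
    exact minpoly.isIntegrallyClosed_dvd (hζ.isIntegral hp.pos) hf
  obtain ⟨g, hg⟩ := hdvd
  have hmap : f.map (Int.castRingHom (ZMod p)) = (X - 1) ^ (p - 1) * g.map (Int.castRingHom (ZMod p)) := by
    rw [hg, Polynomial.map_mul, map_cyclotomic]
    congr 1
    have := cyclotomic_mul_prime_pow_eq (ZMod p) (p := p) (m := 1) (by simpa using hp.one_lt.ne') (k := 1) one_pos
    simpa using this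
  have hq : ∀ k ∈ Finset.Icc 1 m, ∃ q : (ZMod p)[X], (X ^ k - X ^ (p - k) : (ZMod p)[X]) = (X - 1) * q ∧ q.eval 1 = 2 * (k : ZMod p) := by
    intro k hk
    rw [Finset.mem_Icc] at hk
    refine ⟨∑ i ∈ Finset.range k, X ^ i - ∑ i ∈ Finset.range (p-k), X ^ i, ?_, ?_⟩
    · rw [mul_sub, mul_geom_sum, mul_geom_sum]; ring
    · simp only [eval_sub, eval_finsetSum, eval_pow, eval_X, one_pow, Finset.sum_const, Finset.card_range, nsmul_eq_mul, mul_one]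
      rw [Nat.cast_sub (by omega), ZMod.natCast_self]; ring
  choose! q hq1 hq2 using hq
  have hmap2 : f.map (Int.castRingHom (ZMod p)) = ∑ a ∈ Finset.range p, C ((a : ZMod p) ^ m) * X ^ a - C (ε : ZMod p) * ((X - 1) ^ m * ∏ k ∈ Finset.Icc 1 m, q k) := by
    simp only [f, Polynomial.map_sub, Polynomial.map_sum, Polynomial.map_mul, Polynomial.map_prod, Polynomial.map_pow, map_X, map_C]
    congr 1
    · refine Finset.sum_congr rfl fun a _ => ?_
      rw [eq_intCast, quadraticChar_pow' p hmod]
    · rw [Finset.prod_congr rfl hq1, Finset.prod_mul_distrib]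
      simp
  have e1 : (((eulerOp (ZMod p)) ^ m) (f.map (Int.castRingHom (ZMod p)))).eval 1 = 0 := by
    obtain ⟨q', h1, h2⟩ := eulerOp_pow_mul (ZMod p) (p-1) (g.map (Int.castRingHom (ZMod p))) m (by omega)
    rw [hmap, h1, eval_mul, eval_pow]
    have : p - 1 - m ≠ 0 := by have := hp.two_le; omega
    simp [this]
  rw [hmap2, map_sub, map_sum, eval_sub, eval_finsetSum] at e1
  have e2 : ∀ a ∈ Finset.range p, (((eulerOp (ZMod p)) ^ m) (C ((a : ZMod p) ^ m) * X ^ a)).eval 1 = if a = 0 then 0 else 1 := by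
    intro a ha
    rw [← smul_eq_C_mul, map_smul, eulerOp_pow_X]
    simp only [eval_smul, eval_mul, eval_C, eval_pow, eval_X, one_pow, mul_one, smul_eq_mul]
    rw [← pow_add]
    split_ifs with h0
    · subst h0
      have := hp.two_le
      simp; omega
    · have : m + m = p - 1 := by omega
      rw [this, ZMod.pow_card_sub_one_eq_one]
      rw [Ne, ZMod.natCast_eq_zero_iff]
      intro h
      have := Nat.le_of_dvd (by omega) h
      simp at ha
      omega
  rw [Finset.sum_congr rfl e2] at e1
  have e3 : ∑ a ∈ Finset.range p, (if a = 0 then (0 : ZMod p) else 1) = -1 := by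
    rw [show Finset.range p = Finset.range (2*m+1) from congrArg _ hpm, Finset.sum_range_succ']
    have : (((2 * m + 1 : ℕ)) : ZMod p) = 0 := by rw [← hpm]; simp
    push_cast at this
    simp
    linear_combination this
  rw [e3] at e1
  obtain ⟨q', h1, h2⟩ := eulerOp_pow_mul (ZMod p) m (∏ k ∈ Finset.Icc 1 m, q k) m le_rfl
  rw [← smul_eq_C_mul, map_smul, h1, eval_smul, eval_mul, h2, eval_prod, Finset.prod_congr rfl hq2,
    Finset.prod_mul_distrib, ← Nat.cast_prod, ← Finset.Ico_add_one_right_eq_Icc, Finset.prod_Ico_id_eq_factorial, Nat.descFactorial_self] at e1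
  simp at e1
  linear_combination e1

lemma gauss_sq (p : ℕ) [Fact p.Prime] (hmod : p % 4 = 3) :
    (∑ a ∈ Finset.range p, ((quadraticChar (ZMod p) (a : ZMod p) : ℤ) : ℂ) *
      Complex.exp (2 * Real.pi * Complex.I / p) ^ a) ^ 2 = -p := by
  have hinj : Function.Injective (Int.castRingHom ℂ) := Int.cast_injective
  have h2 : ringChar (ZMod p) ≠ 2 := by rw [ZMod.ringChar_zmod_n]; omega
  have := gaussSum_sq ((MulChar.ringHomComp_ne_one_iff hinj).2 (quadraticChar_ne_one h2))
    ((quadraticChar_isQuadratic (ZMod p)).comp (Int.castRingHom ℂ)) (ZMod.isPrimitive_stdAddChar p)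
  have hneg : quadraticChar (ZMod p) (-1) = -1 := by
    rw [quadraticChar_neg_one_iff_not_isSquare, ZMod.exists_sq_eq_neg_one_iff]
    omega
  rw [gaussSum, sum_zmod, ZMod.card, MulChar.ringHomComp_apply, hneg] at this
  simp only [MulChar.ringHomComp_apply, eq_intCast, Int.cast_neg, Int.cast_one, neg_mul, one_mul] at this
  rw [← this]
  congr 1
  refine Finset.sum_congr rfl fun a _ => ?_
  congr 1
  have h := ZMod.stdAddChar_coe (N := p) (a : ℤ)
  simp only [Int.cast_natCast] at h
  rw [h, ← Complex.exp_nat_mul]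
  congr 1
  ring

lemma prod_sq (p : ℕ) [Fact p.Prime] (hmod : p % 4 = 3) (ζ : ℂ) (hζ : IsPrimitiveRoot ζ p) :
    (∏ k ∈ Finset.Icc 1 ((p-1)/2), (ζ ^ k - ζ ^ (p - k))) ^ 2 = -p := by
  set m := (p-1)/2 with hm
  have hpm : p = 2 * m + 1 := by omega
  have hζ2 : IsPrimitiveRoot (ζ ^ 2) (2 * m + 1) := by
    rw [← hpm]
    refine hζ.pow_of_coprime 2 ?_
    rw [Nat.coprime_two_left]
    exact ⟨m, hpm⟩
  have h1 := hζ2.prod_one_sub_pow_eq_order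
  have hsplit : ∏ k ∈ Finset.range (2 * m), (1 - (ζ ^ 2) ^ (k + 1)) =
      ∏ k ∈ Finset.range m, ((1 - (ζ ^ 2) ^ (k + 1)) * (1 - (ζ ^ 2) ^ (2 * m - k))) := by
    rw [two_mul, Finset.prod_range_add, Finset.prod_mul_distrib]
    congr 1
    rw [← Finset.prod_range_reflect]
    refine Finset.prod_congr rfl fun k hk => ?_
    rw [Finset.mem_range] at hk
    congr 2
    omega
  have hP : ∏ k ∈ Finset.Icc 1 m, (ζ ^ k - ζ ^ (p - k)) =
      ∏ k ∈ Finset.range m, (ζ ^ (k+1) - ζ ^ (2 * m - k)) := by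
    rw [← Finset.Ico_add_one_right_eq_Icc, Finset.prod_Ico_eq_prod_range]
    refine Finset.prod_congr rfl fun k _ => ?_
    rw [add_comm 1 k]
    congr 2
    omega
  have hmo : Odd m := by rw [Nat.odd_iff]; omega
  have hzp : ζ ^ (2*m+1) = 1 := by rw [← hpm]; exact hζ.pow_eq_one
  have hterm : ∀ k ∈ Finset.range m, ((1 - (ζ ^ 2) ^ (k + 1)) * (1 - (ζ ^ 2) ^ (2 * m - k))) =
      -1 * (ζ ^ (k+1) - ζ ^ (2 * m - k)) ^ 2 := by
    intro k hk
    rw [Finset.mem_range] at hk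
    have : ζ ^ (k+1) * ζ ^ (2 * m - k) = 1 := by
      rw [← pow_add, ← hzp]; congr 1; omega
    rw [← pow_mul, ← pow_mul, mul_comm 2, mul_comm 2, pow_mul, pow_mul]
    linear_combination (ζ ^ (k+1) * ζ ^ (2 * m - k) - 1) * this
  rw [hsplit, Finset.prod_congr rfl hterm, Finset.prod_mul_distrib, Finset.prod_const,
    Finset.card_range, hmo.neg_one_pow, Finset.prod_pow] at h1
  rw [hP, hpm]
  push_cast at h1 ⊢
  linear_combination -h1

theorem gauss_sign (p : ℕ) [Fact p.Prime] (hmod : p % 4 = 3) :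
    (∑ a ∈ Finset.range p, ((quadraticChar (ZMod p) (a : ZMod p) : ℤ) : ℂ) *
      Complex.exp (2 * Real.pi * Complex.I / p) ^ a) = (√p : ℝ) * Complex.I := by
  have hp : p.Prime := Fact.out
  have hsq := gauss_sq p hmod
  have hζ := Complex.isPrimitiveRoot_exp p hp.ne_zero
  have hPsq := prod_sq p hmod _ hζ
  set ζ := Complex.exp (2 * Real.pi * Complex.I / p) with hζd
  have hcong := fun ε => sign_cong p hmod ε ζ hζ
  set g := ∑ a ∈ Finset.range p, ((quadraticChar (ZMod p) (a : ZMod p) : ℤ) : ℂ) * ζ ^ a with hg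
  set m := (p-1)/2 with hm
  have hpm : p = 2 * m + 1 := by omega
  obtain ⟨j, hj⟩ : ∃ j, m = 2 * j + 1 := ⟨m / 2, by omega⟩
  -- product as sines
  have hterm : ∀ k ∈ Finset.Icc 1 m, ζ ^ k - ζ ^ (p - k) = Complex.I * ((2 * Real.sin (2 * Real.pi * k / p) : ℝ) : ℂ) := by
    intro k hk
    rw [Finset.mem_Icc] at hk
    have h1 : ζ ^ k = Complex.exp (((2 * Real.pi * k / p : ℝ) : ℂ) * Complex.I) := by
      rw [hζd, ← Complex.exp_nat_mul]; congr 1; push_cast; ring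
    have h2 : ζ ^ (p - k) = Complex.exp (-((2 * Real.pi * k / p : ℝ) : ℂ) * Complex.I) := by
      have : ζ ^ (p - k) * ζ ^ k = 1 := by
        rw [← pow_add, Nat.sub_add_cancel (by omega), hζ.pow_eq_one]
      rw [neg_mul, Complex.exp_neg, ← h1]
      exact eq_inv_of_mul_eq_one_left this
    rw [h1, h2]
    push_cast
    rw [Complex.sin]
    linear_combination (Complex.exp (2 * Real.pi * k / p * Complex.I) - Complex.exp (-(2 * Real.pi * k / p) * Complex.I)) * Complex.I_sq
  have hpos : ∀ k ∈ Finset.Icc 1 m, 0 < 2 * Real.sin (2 * Real.pi * k / p) := by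
    intro k hk
    rw [Finset.mem_Icc] at hk
    have hp0 : (0:ℝ) < p := by exact_mod_cast hp.pos
    have hk0 : (0:ℝ) < k := by exact_mod_cast hk.1
    have := Real.pi_pos
    refine mul_pos two_pos (Real.sin_pos_of_pos_of_lt_pi (by positivity) ?_)
    rw [div_lt_iff₀ hp0]
    have : (2 * k : ℝ) < p := by exact_mod_cast (by omega : 2 * k < p)
    nlinarith
  set r := ∏ k ∈ Finset.Icc 1 m, (2 * Real.sin (2 * Real.pi * k / p)) with hr
  have hrpos : 0 < r := Finset.prod_pos hpos
  have hP : ∏ k ∈ Finset.Icc 1 m, (ζ ^ k - ζ ^ (p - k)) = Complex.I * (-1) ^ j * r := by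
    rw [Finset.prod_congr rfl hterm, Finset.prod_mul_distrib, Finset.prod_const, Nat.card_Icc, hr,
      Complex.ofReal_prod]
    congr 1
    rw [Nat.add_sub_cancel, hj, pow_succ, pow_mul, Complex.I_sq]; ring
  rw [hP] at hPsq hcong
  have hr2 : r = √p := by
    have h1 : ((-1 : ℂ) ^ j) ^ 2 = 1 := by rw [← pow_mul, mul_comm, pow_mul]; simp
    have : ((r ^ 2 : ℝ) : ℂ) = ((p : ℝ) : ℂ) := by
      push_cast
      linear_combination (-1 : ℂ) * hPsq + (Complex.I ^ 2 * r ^ 2) * h1 + (r:ℂ) ^ 2 * Complex.I_sq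
    have h3 : r ^ 2 = p := by exact_mod_cast this
    rw [← h3, Real.sqrt_sq hrpos.le]
  have hgg : ∃ ε : ℤ, (ε = 1 ∨ ε = -1) ∧ g = ε * (Complex.I * (-1) ^ j * r) := by
    rcases sq_eq_sq_iff_eq_or_eq_neg.1 (hsq.trans hPsq.symm) with h | h
    · exact ⟨1, Or.inl rfl, by rw [h]; simp⟩
    · exact ⟨-1, Or.inr rfl, by rw [h]; simp⟩
  obtain ⟨ε, hε, hge⟩ := hgg
  have hc := hcong ε hge
  set χ := quadraticChar (ZMod p) with hχ
  have hneg : χ (-1) = -1 := by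
    rw [hχ, quadraticChar_neg_one_iff_not_isSquare, ZMod.exists_sq_eq_neg_one_iff]
    omega
  have hfac : (m.factorial : ZMod p) ≠ 0 := by
    rw [Ne, ZMod.natCast_eq_zero_iff, hp.dvd_factorial]; omega
  have hc' : (-1 : ZMod p) = ε * (m.factorial ^ 2 * 2 ^ m) := by rw [hc]; ring
  have hχc := congrArg χ hc'
  rw [hneg, map_mul, map_mul, hχ, quadraticChar_sq_one' hfac, ← hχ, one_mul, map_pow] at hχc
  have hχε : χ (ε : ZMod p) = ε := by
    rcases hε with rfl | rfl
    · simp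
    · simp [hneg]
  rw [hχε, hχ, quadraticChar_two (by rw [ZMod.ringChar_zmod_n]; omega), ZMod.card] at hχc
  have hεj : (ε : ℂ) * (-1) ^ j = 1 := by
    have h8 : p % 8 = 3 ∨ p % 8 = 7 := by omega
    have hmo : Odd m := ⟨j, hj⟩
    rcases h8 with h8 | h8
    · have e : (p : ZMod 8) = 3 := by
        have := ZMod.natCast_mod p 8
        rw [h8] at this; exact_mod_cast this.symm
      have e2 : ZMod.χ₈ (3 : ZMod 8) = -1 := by decide
      rw [e, e2, hmo.neg_one_pow] at hχc
      have : ε = 1 := by omega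
      have hje : Even j := by rw [Nat.even_iff]; omega
      rw [this, hje.neg_one_pow]; simp
    · have e : (p : ZMod 8) = 7 := by
        have := ZMod.natCast_mod p 8
        rw [h8] at this; exact_mod_cast this.symm
      have e2 : ZMod.χ₈ (7 : ZMod 8) = 1 := by decide
      rw [e, e2, one_pow] at hχc
      have : ε = -1 := by omega
      have hje : Odd j := by rw [Nat.odd_iff]; omega
      rw [this, hje.neg_one_pow]; simp
  rw [hge, hr2]
  linear_combination (Complex.I * (√p : ℝ)) * hεj

lemma abel_bound (u z : ℕ → ℝ) (C : ℝ) (hu : Antitone u) (hu0 : ∀ n, 0 ≤ u n)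
    (hz : ∀ n, |∑ i ∈ Finset.range n, z i| ≤ C) (n : ℕ) :
    |∑ i ∈ Finset.range n, u i * z i| ≤ C * u 0 := by
  have hC : 0 ≤ C := (abs_nonneg _).trans (hz 0)
  rcases n with _ | n
  · simpa using mul_nonneg hC (hu0 0)
  have h := Finset.sum_range_by_parts u z (n+1)
  simp only [smul_eq_mul, Nat.add_sub_cancel] at h
  rw [h]
  have h2 : |∑ i ∈ Finset.range n, (u (i + 1) - u i) * ∑ i ∈ Finset.range (i + 1), z i| ≤
      ∑ i ∈ Finset.range n, (u i - u (i+1)) * C := by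
    refine (Finset.abs_sum_le_sum_abs _ _).trans (Finset.sum_le_sum fun i _ => ?_)
    have := hu (Nat.le_succ i)
    simp only [Nat.succ_eq_add_one] at this
    rw [abs_mul, abs_sub_comm, abs_of_nonneg (by linarith)]
    exact mul_le_mul_of_nonneg_left (hz _) (by linarith)
  rw [← Finset.sum_mul, Finset.sum_range_sub'] at h2
  have h3 : |u n * ∑ i ∈ Finset.range (n + 1), z i| ≤ u n * C := by
    rw [abs_mul, abs_of_nonneg (hu0 n)]
    exact mul_le_mul_of_nonneg_left (hz _) (hu0 n)
  calc _ ≤ _ := abs_sub _ _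
    _ ≤ u n * C + (u 0 - u n) * C := add_le_add h3 h2
    _ = _ := by ring

lemma q_aux (q : ℝ) (h0 : 0 ≤ q) (h1 : q ≤ 1) (N : ℕ) : (N+1) * q ^ N ≤ 1 + N * q ^ (N+1) := by
  induction N with
  | zero => simp
  | succ N ih =>
    have a := mul_le_mul_of_nonneg_left ih h0
    have b : q ^ (N+1) ≤ 1 := pow_le_one₀ h0 h1
    have c := mul_nonneg (sub_nonneg.2 h1) (sub_nonneg.2 b)
    push_cast
    rw [pow_succ] at *
    rw [pow_succ, pow_succ] at *
    nlinarith

lemma q_aux2 (q : ℝ) (h0 : 0 ≤ q) (h1 : q ≤ 1) (N : ℕ) :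
    (N+1) * q ^ N ≤ ∑ i ∈ Finset.range (N+1), (q^2) ^ i := by
  induction N with
  | zero => simp
  | succ N ih =>
    rw [geom_sum_succ]
    have a := mul_le_mul_of_nonneg_left ih (sq_nonneg q)
    have b := q_aux q h0 h1 (N+1)
    push_cast at *
    have e : q ^ 2 * ((N+1) * q ^ N) = (N+1) * q ^ (N+1+1) := by ring
    linarith

/-- The weight in the Lambert-series argument. -/
noncomputable def wt (r : ℝ) (n : ℕ) : ℝ :=
  1 / ((n : ℝ) + 1) - r ^ (n+1) / ∑ i ∈ Finset.range (n+1), r ^ i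

lemma geom_pos (r : ℝ) (h0 : 0 < r) (n : ℕ) : 0 < ∑ i ∈ Finset.range (n+1), r ^ i :=
  Finset.sum_pos (fun i _ => pow_pos h0 i) ⟨0, by simp⟩

lemma wt_nonneg (r : ℝ) (h0 : 0 < r) (h1 : r < 1) (n : ℕ) : 0 ≤ wt r n := by
  rw [wt, sub_nonneg, div_le_div_iff₀ (geom_pos r h0 n) (by positivity), one_mul]
  have : ∑ i ∈ Finset.range (n+1), r ^ (n+1) ≤ ∑ i ∈ Finset.range (n+1), r ^ i := by
    refine Finset.sum_le_sum fun i hi => ?_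
    rw [Finset.mem_range] at hi
    exact pow_le_pow_of_le_one h0.le h1.le hi.le
  simp at this
  linarith

lemma wt_antitone (r : ℝ) (h0 : 0 < r) (h1 : r < 1) : Antitone (wt r) := by
  refine antitone_nat_of_succ_le fun n => ?_
  have hq : (√r) ^ 2 = r := Real.sq_sqrt h0.le
  have hq0 := Real.sqrt_nonneg r
  have hq1 : √r ≤ 1 := Real.sqrt_le_one.2 h1.le
  have a := q_aux2 (√r) hq0 hq1 n
  have b := q_aux2 (√r) hq0 hq1 (n+1)
  rw [hq] at a b
  have g1 := geom_pos r h0 n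
  have g2 := geom_pos r h0 (n+1)
  have hG : ∑ i ∈ Finset.range (n+1+1), r ^ i = r * ∑ i ∈ Finset.range (n+1), r ^ i + 1 := geom_sum_succ
  unfold wt
  set G := ∑ i ∈ Finset.range (n+1), r ^ i
  set H := ∑ i ∈ Finset.range (n+1+1), r ^ i
  have c : ((n:ℝ)+1) * (n+2) * r ^ (n+1) ≤ G * H := by
    have d := mul_le_mul a b (by positivity) g1.le
    refine le_trans ?_ d
    have e : r ^ (n+1) ≤ √r ^ n * √r ^ (n+1) := by
      have : r ^ (n+1) = (√r ^ n * √r ^ (n+1)) * √r := by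
        conv_lhs => rw [← hq]
        ring
      rw [this]
      exact mul_le_of_le_one_right (by positivity) hq1
    have e2 := mul_le_mul_of_nonneg_left e (by positivity : (0:ℝ) ≤ ((n:ℝ)+1) * (n+2))
    push_cast
    refine e2.trans (le_of_eq ?_)
    ring
  have k1 : r ^ (n+1) / G - r ^ (n+1+1) / H = r ^ (n+1) / (G * H) := by
    field_simp
    rw [hG]; ring
  have k2 : 1 / ((n:ℝ)+1) - 1 / (((n+1 : ℕ):ℝ)+1) = 1 / (((n:ℝ)+1) * (n+2)) := by
    push_cast
    field_simp
    ring
  have k3 : r ^ (n+1) / (G * H) ≤ 1 / (((n:ℝ)+1) * (n+2)) := by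
    rw [div_le_div_iff₀ (by positivity) (by positivity)]
    linarith
  linarith

lemma divisor_sum_nonneg (p : ℕ) [Fact p.Prime] (n : ℕ) :
    0 ≤ ∑ d ∈ n.divisors, ((quadraticChar (ZMod p) (d : ZMod p) : ℤ) : ℝ) := by
  have hsq : ((quadraticChar (ZMod p)).ringHomComp (Int.castRingHom ℂ)) ^ 2 = 1 :=
    ((quadraticChar_isQuadratic (ZMod p)).comp (Int.castRingHom ℂ)).sq_eq_one
  have h := DirichletCharacter.zetaMul_nonneg (N := p) hsq n
  rw [DirichletCharacter.zetaMul, ArithmeticFunction.coe_zeta_mul_apply] at h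
  have e : ∑ d ∈ n.divisors, (toArithmeticFunction (fun n : ℕ => (((quadraticChar (ZMod p)).ringHomComp (Int.castRingHom ℂ)) : DirichletCharacter ℂ p) (n : ZMod p))) d
      = ((∑ d ∈ n.divisors, ((quadraticChar (ZMod p) (d : ZMod p) : ℤ) : ℝ) : ℝ) : ℂ) := by
    push_cast
    refine Finset.sum_congr rfl fun d hd => ?_
    have : d ≠ 0 := (Nat.pos_of_mem_divisors hd).ne'
    simp [toArithmeticFunction, this]
  rw [e] at h
  exact_mod_cast h

lemma abs_qc_le (p : ℕ) [Fact p.Prime] (a : ZMod p) :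
    |((quadraticChar (ZMod p) a : ℤ) : ℝ)| ≤ 1 := by
  rcases quadraticChar_isQuadratic (ZMod p) a with h | h | h <;> rw [h] <;> simp

lemma lambert_nonneg (p : ℕ) [Fact p.Prime] (r : ℝ) (h0 : 0 < r) (h1 : r < 1) :
    Summable (fun n : ℕ+ => ((quadraticChar (ZMod p) (n : ZMod p) : ℤ) : ℝ) * (r ^ (n:ℕ) / (1 - r ^ (n:ℕ)))) ∧
    0 ≤ ∑' n : ℕ+, ((quadraticChar (ZMod p) ((n : ℕ) : ZMod p) : ℤ) : ℝ) * (r ^ (n:ℕ) / (1 - r ^ (n:ℕ))) := by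
  set c : ℕ → ℝ := fun n => ((quadraticChar (ZMod p) (n : ZMod p) : ℤ) : ℝ) with hc
  have hr : ‖r‖ < 1 := by rw [Real.norm_eq_abs, abs_of_pos h0]; exact h1
  have hs0 := summable_prod_mul_pow (𝕜 := ℝ) 0 hr
  have hs : Summable fun x : ℕ+ × ℕ+ => c x.1 * r ^ (x.1 * x.2 : ℕ) := by
    refine Summable.of_norm_bounded hs0 fun x => ?_
    rw [norm_mul, pow_zero, one_mul, Real.norm_eq_abs, Real.norm_eq_abs, abs_of_pos (pow_pos h0 _)]
    exact mul_le_of_le_one_left (pow_pos h0 _).le (abs_qc_le p _)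
  have hinner : ∀ n : ℕ+, HasSum (fun k : ℕ+ => c n * r ^ (n * k : ℕ)) (c n * (r ^ (n:ℕ) / (1 - r ^ (n:ℕ)))) := by
    intro n
    refine HasSum.mul_left _ ?_
    have hrn : r ^ (n:ℕ) < 1 := pow_lt_one₀ h0.le h1 n.ne_zero
    have := (hasSum_geometric_of_lt_one (pow_pos h0 (n:ℕ)).le hrn).mul_left (r ^ (n:ℕ))
    have h' := (Equiv.pnatEquivNat.hasSum_iff (f := fun i : ℕ => r ^ (n:ℕ) * (r ^ (n:ℕ)) ^ i)).2 this
    rw [div_eq_mul_inv]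
    refine (congrArg (fun F => HasSum F (r ^ (n:ℕ) * (1 - r ^ (n:ℕ))⁻¹)) (funext fun k => ?_)).mpr h'
    have hk : Equiv.pnatEquivNat k + 1 = (k : ℕ) := PNat.natPred_add_one k
    change r ^ ((n:ℕ) * (k:ℕ)) = r ^ (n:ℕ) * (r ^ (n:ℕ)) ^ (Equiv.pnatEquivNat k)
    rw [← pow_succ', ← pow_mul, hk]
  refine ⟨(hs.hasSum.prod_fiberwise hinner).summable, ?_⟩
  rw [(hs.hasSum.prod_fiberwise hinner).tsum_eq, ← sigmaAntidiagonalEquivProd.tsum_eq]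
  have hs2 := (sigmaAntidiagonalEquivProd.summable_iff).2 hs
  rw [Summable.tsum_sigma (by exact hs2)]
  refine tsum_nonneg fun e => ?_
  rw [tsum_fintype]
  have : ∀ x : {x // x ∈ Nat.divisorsAntidiagonal (e:ℕ)}, c ((sigmaAntidiagonalEquivProd ⟨e, x⟩).1 : ℕ) * r ^ ((sigmaAntidiagonalEquivProd ⟨e, x⟩).1 * (sigmaAntidiagonalEquivProd ⟨e, x⟩).2 : ℕ) = c x.1.1 * r ^ (e:ℕ) := by
    intro x
    have hx := (Nat.mem_divisorsAntidiagonal.1 x.2).1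
    have hx2 : r ^ (e:ℕ) = r ^ (x.1.1 * x.1.2) := congrArg (fun t => r ^ t) hx.symm
    exact (congrArg (fun t => c x.1.1 * t) hx2).symm
  rw [Finset.sum_congr rfl fun x _ => this x, ← Finset.sum_mul]
  refine mul_nonneg ?_ (pow_pos h0 _).le
  rw [Finset.univ_eq_attach, Finset.sum_attach (Nat.divisorsAntidiagonal (e:ℕ)) (fun x => c x.1)]
  have h := Nat.sum_divisorsAntidiagonal (n := (e:ℕ)) (fun x _ => c x)
  exact (divisor_sum_nonneg p e).trans_eq h.symm

lemma qc_sum_zero (p : ℕ) [Fact p.Prime] (hmod : p % 4 = 3) :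
    ∑ i ∈ Finset.range p, ((quadraticChar (ZMod p) (i : ZMod p) : ℤ) : ℝ) = 0 := by
  have h2 : ringChar (ZMod p) ≠ 2 := by rw [ZMod.ringChar_zmod_n]; omega
  have h := MulChar.sum_eq_zero_of_ne_one (quadraticChar_ne_one h2)
  rw [sum_zmod] at h
  exact_mod_cast h

lemma partial_bound (p : ℕ) [Fact p.Prime] (hmod : p % 4 = 3) (n : ℕ) :
    |∑ i ∈ Finset.range n, ((quadraticChar (ZMod p) (i : ZMod p) : ℤ) : ℝ)| ≤ p := by
  induction n using Nat.strong_induction_on with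
  | _ n ih =>
    rcases lt_or_ge n p with hn | hn
    · refine (Finset.abs_sum_le_sum_abs _ _).trans ?_
      refine (Finset.sum_le_sum fun i _ => abs_qc_le p _).trans ?_
      simpa using hn.le
    · obtain ⟨k, rfl⟩ := Nat.exists_eq_add_of_le hn
      have hp : p.Prime := Fact.out
      rw [Finset.sum_range_add, qc_sum_zero p hmod, zero_add]
      have := ih k (by have := hp.pos; omega)
      simpa using this

lemma partial_bound_succ (p : ℕ) [Fact p.Prime] (hmod : p % 4 = 3) (n : ℕ) :
    |∑ i ∈ Finset.range n, ((quadraticChar (ZMod p) ((i + 1 : ℕ) : ZMod p) : ℤ) : ℝ)| ≤ p := by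
  have h := partial_bound p hmod (n+1)
  rw [Finset.sum_range_succ'] at h
  simpa using h

lemma exists_limit (p : ℕ) [Fact p.Prime] (hmod : p % 4 = 3) :
    ∃ l : ℝ, Filter.Tendsto (fun n => ∑ i ∈ Finset.range n,
      (1 / ((i:ℝ) + 1)) * ((quadraticChar (ZMod p) ((i + 1 : ℕ) : ZMod p) : ℤ) : ℝ)) Filter.atTop (nhds l) := by
  have ha : Antitone (fun i : ℕ => 1 / ((i:ℝ) + 1)) := fun a b hab => Nat.one_div_le_one_div hab
  have h := ha.cauchySeq_series_mul_of_tendsto_zero_of_bounded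
    tendsto_one_div_add_atTop_nhds_zero_nat (fun n => by
      rw [Real.norm_eq_abs]; exact partial_bound_succ p hmod n)
  exact cauchySeq_tendsto_of_complete h

lemma limit_ge (p : ℕ) [Fact p.Prime] (hmod : p % 4 = 3) (l : ℝ)
    (hl : Filter.Tendsto (fun n => ∑ i ∈ Finset.range n,
      (1 / ((i:ℝ) + 1)) * ((quadraticChar (ZMod p) ((i + 1 : ℕ) : ZMod p) : ℤ) : ℝ)) Filter.atTop (nhds l))
    (r : ℝ) (h0 : 0 < r) (h1 : r < 1) : -(p * (1 - r)) ≤ l := by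
  obtain ⟨hs, hn⟩ := lambert_nonneg p r h0 h1
  set F : ℕ → ℝ := fun n => ((quadraticChar (ZMod p) (n : ZMod p) : ℤ) : ℝ) * (r ^ n / (1 - r ^ n)) with hF
  have hs' : Summable (fun n : ℕ => F (n+1)) := by
    have := (Equiv.pnatEquivNat.symm.summable_iff).2 hs
    exact this
  have hn' : 0 ≤ ∑' n : ℕ, F (n+1) := by
    rw [← tsum_pnat_eq_tsum_succ (f := F)]; exact hn
  have ht := hs'.hasSum.tendsto_sum_nat.const_mul (1 - r)
  have hlim := hl.sub ht
  have hb : -(p * (1 - r)) ≤ l - (1 - r) * ∑' n : ℕ, F (n+1) := by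
    refine ge_of_tendsto' hlim fun n => ?_
    have h := abel_bound (wt r) _ p (wt_antitone r h0 h1) (wt_nonneg r h0 h1) (partial_bound_succ p hmod) n
    have hw0 : wt r 0 = 1 - r := by simp [wt]
    rw [hw0] at h
    refine (neg_le_of_abs_le h).trans (le_of_eq ?_)
    rw [Finset.mul_sum, ← Finset.sum_sub_distrib]
    refine Finset.sum_congr rfl fun i _ => ?_
    have hr : r ^ (i+1) < 1 := pow_lt_one₀ h0.le h1 (by omega)
    have hg : ∑ j ∈ Finset.range (i+1), r ^ j = (1 - r ^ (i+1)) / (1 - r) := by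
      rw [eq_div_iff (by linarith)]; exact geom_sum_mul_neg r (i+1)
    have a1 : (1 - r ^ (i+1)) ≠ 0 := by linarith
    have a2 : (1 - r) ≠ 0 := by linarith
    simp only [wt, hg, hF]
    field_simp
  have := mul_nonneg (by linarith : 0 ≤ 1 - r) hn'
  linarith

lemma limit_nonneg (p : ℕ) [Fact p.Prime] (hmod : p % 4 = 3) (l : ℝ)
    (hl : Filter.Tendsto (fun n => ∑ i ∈ Finset.range n,
      (1 / ((i:ℝ) + 1)) * ((quadraticChar (ZMod p) ((i + 1 : ℕ) : ZMod p) : ℤ) : ℝ)) Filter.atTop (nhds l)) :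
    0 ≤ l := by
  by_contra hneg
  push Not at hneg
  have hp : p.Prime := Fact.out
  have hp0 : (0:ℝ) < p := by exact_mod_cast hp.pos
  obtain ⟨e, he0, he⟩ : ∃ e : ℝ, 0 < e ∧ e < min 1 (-l / p) := exists_between (lt_min one_pos (div_pos (by linarith) hp0))
  have he1 := he.trans_le (min_le_left _ _)
  have he2 := he.trans_le (min_le_right _ _)
  rw [lt_div_iff₀ hp0] at he2
  have := limit_ge p hmod l hl (1 - e) (by linarith) (by linarith)
  nlinarith

lemma std_eq (p : ℕ) [Fact p.Prime] (a : ℕ) :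
    ZMod.stdAddChar (a : ZMod p) = Complex.exp (2 * Real.pi * Complex.I / p) ^ a := by
  have h := ZMod.stdAddChar_coe (N := p) (a : ℤ)
  simp only [Int.cast_natCast] at h
  rw [h, ← Complex.exp_nat_mul]
  congr 1
  ring

lemma gauss_twist (p : ℕ) [Fact p.Prime] (hmod : p % 4 = 3) (n : ℕ) :
    (∑ a ∈ Finset.range p, ((quadraticChar (ZMod p) (a : ZMod p) : ℤ) : ℂ) *
      (Complex.exp (2 * Real.pi * Complex.I / p) ^ a) ^ n) =
    ((quadraticChar (ZMod p) (n : ZMod p) : ℤ) : ℂ) * ((√p : ℝ) * Complex.I) := by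
  rw [← gauss_sign p hmod]
  have key : ∀ b : ZMod p, ∑ a : ZMod p, ((quadraticChar (ZMod p) a : ℤ) : ℂ) * ZMod.stdAddChar (b * a) =
      ((quadraticChar (ZMod p) b : ℤ) : ℂ) * ∑ a : ZMod p, ((quadraticChar (ZMod p) a : ℤ) : ℂ) * ZMod.stdAddChar a := by
    intro b
    rcases eq_or_ne b 0 with rfl | hb
    · have h2 : ringChar (ZMod p) ≠ 2 := by rw [ZMod.ringChar_zmod_n]; omega
      have h := MulChar.sum_eq_zero_of_ne_one (quadraticChar_ne_one h2)
      have h' : ∑ a : ZMod p, ((quadraticChar (ZMod p) a : ℤ) : ℂ) = 0 := by exact_mod_cast h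
      simp only [zero_mul, AddChar.map_zero_eq_one, mul_one, h', MulChar.map_zero, Int.cast_zero]
    · have h := gaussSum_mulShift ((quadraticChar (ZMod p)).ringHomComp (Int.castRingHom ℂ)) (ZMod.stdAddChar (N := p)) (Units.mk0 b hb)
      simp only [gaussSum, MulChar.ringHomComp_apply, eq_intCast, AddChar.mulShift_apply, Units.val_mk0] at h
      rw [← h, ← mul_assoc, ← Int.cast_mul, ← pow_two, quadraticChar_sq_one hb]
      simp
  have h := key n
  rw [sum_zmod, sum_zmod] at h
  calc _ = ∑ a ∈ Finset.range p, ((quadraticChar (ZMod p) (a : ZMod p) : ℤ) : ℂ) * ZMod.stdAddChar ((n : ZMod p) * (a : ZMod p)) := by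
        refine Finset.sum_congr rfl fun a _ => ?_
        rw [← pow_mul, mul_comm a n, ← std_eq p (n * a), Nat.cast_mul]
    _ = _ := by
        rw [h]
        congr 1
        exact Finset.sum_congr rfl fun a _ => by rw [std_eq p a]

lemma arg_root (p : ℕ) (a : ℕ) (h0 : 0 < a) (h1 : a < p) :
    (1 - Complex.exp (2 * Real.pi * Complex.I / p) ^ a) ∈ Complex.slitPlane ∧
    (1 - Complex.exp (2 * Real.pi * Complex.I / p) ^ a).arg = Real.pi * a / p - Real.pi / 2 := by
  have hp0 : (0:ℝ) < p := by exact_mod_cast h0.trans h1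
  have ha0 : (0:ℝ) < a := by exact_mod_cast h0
  have ha1 : (a:ℝ) < p := by exact_mod_cast h1
  set t : ℝ := Real.pi * a / p with ht
  have ht0 : 0 < t := by have := Real.pi_pos; positivity
  have ht1 : t < Real.pi := by
    rw [ht, div_lt_iff₀ hp0]; exact mul_lt_mul_of_pos_left ha1 Real.pi_pos
  have hs : 0 < Real.sin t := Real.sin_pos_of_pos_of_lt_pi ht0 ht1
  have e : 1 - Complex.exp (2 * Real.pi * Complex.I / p) ^ a =
      ((2 * Real.sin t : ℝ) : ℂ) * (Complex.cos ((t - Real.pi / 2 : ℝ) : ℂ) + Complex.sin ((t - Real.pi / 2 : ℝ) : ℂ) * Complex.I) := by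
    have e1 : Complex.exp (2 * Real.pi * Complex.I / p) ^ a = Complex.exp (((2 * t : ℝ) : ℂ) * Complex.I) := by
      rw [← Complex.exp_nat_mul, ht]
      congr 1
      push_cast
      ring
    rw [e1, Complex.exp_mul_I, ← Complex.ofReal_cos, ← Complex.ofReal_sin, ← Complex.ofReal_cos, ← Complex.ofReal_sin,
      Real.cos_sub_pi_div_two, Real.sin_sub_pi_div_two, Real.cos_two_mul, Real.sin_two_mul]
    have hcs := Real.sin_sq_add_cos_sq t
    apply Complex.ext
    · simp [-Complex.ofReal_cos, -Complex.ofReal_sin]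
      simp only [← Complex.ofReal_pow, Complex.ofReal_re]
      nlinarith
    · simp [-Complex.ofReal_cos, -Complex.ofReal_sin]
      simp only [← Complex.ofReal_pow, Complex.ofReal_im]
  have harg : (1 - Complex.exp (2 * Real.pi * Complex.I / p) ^ a).arg = t - Real.pi / 2 := by
    rw [e]
    exact Complex.arg_mul_cos_add_sin_mul_I (by positivity) ⟨by linarith [Real.pi_pos], by linarith [Real.pi_pos]⟩
  refine ⟨?_, harg⟩
  rw [Complex.mem_slitPlane_iff_arg, harg]
  refine ⟨by linarith [Real.pi_pos], fun h => ?_⟩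
  rw [h] at e
  have h2 : ((2 * Real.sin t : ℝ) : ℂ) ≠ 0 := by exact_mod_cast (by positivity : (2 * Real.sin t) ≠ 0)
  have h3 := (mul_eq_zero.1 e.symm).resolve_left h2
  rw [← Complex.exp_mul_I] at h3
  exact Complex.exp_ne_zero _ h3

lemma log_identity (p : ℕ) [Fact p.Prime] (hmod : p % 4 = 3) (x : ℝ) (h0 : 0 < x) (h1 : x < 1) :
    √p * ∑' n : ℕ, (((quadraticChar (ZMod p) (n : ZMod p) : ℤ) : ℝ) / n) * x ^ n =
    -∑ a ∈ Finset.range p, ((quadraticChar (ZMod p) (a : ZMod p) : ℤ) : ℝ) *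
      (1 - (x:ℂ) * Complex.exp (2 * Real.pi * Complex.I / p) ^ a).arg := by
  have hp : p.Prime := Fact.out
  set ζ := Complex.exp (2 * Real.pi * Complex.I / p) with hζ
  have hnorm : ‖ζ‖ = 1 := (Complex.isPrimitiveRoot_exp p hp.ne_zero).norm'_eq_one hp.ne_zero
  have hz : ∀ a : ℕ, ‖(x:ℂ) * ζ ^ a‖ < 1 := by
    intro a
    rw [norm_mul, norm_pow, hnorm, one_pow, mul_one, Complex.norm_real, Real.norm_eq_abs, abs_of_pos h0]
    exact h1
  have hsum := hasSum_sum (s := Finset.range p) (fun a _ =>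
    (Complex.hasSum_taylorSeries_neg_log (hz a)).mul_left (((quadraticChar (ZMod p) (a : ZMod p) : ℤ) : ℂ)))
  have hterm : ∀ n : ℕ, ∑ a ∈ Finset.range p, ((quadraticChar (ZMod p) (a : ZMod p) : ℤ) : ℂ) * (((x:ℂ) * ζ ^ a) ^ n / n)
      = ((√p * ((((quadraticChar (ZMod p) (n : ZMod p) : ℤ) : ℝ) / n) * x ^ n) : ℝ) : ℂ) * Complex.I := by
    intro n
    have h := gauss_twist p hmod n
    rw [← hζ] at h
    push_cast
    calc _ = (x:ℂ) ^ n / n * ∑ a ∈ Finset.range p, ((quadraticChar (ZMod p) (a : ZMod p) : ℤ) : ℂ) * (ζ ^ a) ^ n := by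
          rw [Finset.mul_sum]
          refine Finset.sum_congr rfl fun a _ => ?_
          rw [mul_pow]; ring
      _ = _ := by rw [h]; ring
  have him := Complex.hasSum_im hsum
  have e1 : (fun n : ℕ => (∑ a ∈ Finset.range p, ((quadraticChar (ZMod p) (a : ZMod p) : ℤ) : ℂ) * (((x:ℂ) * ζ ^ a) ^ n / n)).im)
      = fun n : ℕ => √p * ((((quadraticChar (ZMod p) (n : ZMod p) : ℤ) : ℝ) / n) * x ^ n) := by
    funext n
    rw [hterm, Complex.im_ofReal_mul, Complex.I_im, mul_one]
  rw [e1] at him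
  rw [← tsum_mul_left, him.tsum_eq, Complex.im_sum, ← Finset.sum_neg_distrib]
  refine Finset.sum_congr rfl fun a _ => ?_
  rw [← Complex.ofReal_intCast, Complex.im_ofReal_mul, Complex.neg_im, Complex.log_im]
  ring

lemma T_nonpos (p : ℕ) [Fact p.Prime] (hmod : p % 4 = 3) :
    ∑ a ∈ Finset.range p, (a : ℤ) * quadraticChar (ZMod p) (a : ZMod p) ≤ 0 := by
  have hp : p.Prime := Fact.out
  have hp0 : (0:ℝ) < p := by exact_mod_cast hp.pos
  obtain ⟨l, hl⟩ := exists_limit p hmod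
  have hl0 := limit_nonneg p hmod l hl
  have hl2 : Filter.Tendsto (fun n => ∑ i ∈ Finset.range n,
      ((quadraticChar (ZMod p) (i : ZMod p) : ℤ) : ℝ) / (i:ℝ)) Filter.atTop (nhds l) := by
    rw [← Filter.tendsto_add_atTop_iff_nat 1]
    refine hl.congr fun n => ?_
    rw [Finset.sum_range_succ']
    simp only [Nat.cast_zero, div_zero, add_zero]
    refine Finset.sum_congr rfl fun i _ => ?_
    push_cast
    ring
  have hA := (Real.tendsto_tsum_powerSeries_nhdsWithin_lt hl2).const_mul (√p)
  have hB : Filter.Tendsto (fun x : ℝ => -∑ a ∈ Finset.range p, ((quadraticChar (ZMod p) (a : ZMod p) : ℤ) : ℝ) *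
      (1 - (x:ℂ) * Complex.exp (2 * Real.pi * Complex.I / p) ^ a).arg) (nhdsWithin 1 (Set.Iio 1))
      (nhds (-∑ a ∈ Finset.range p, ((quadraticChar (ZMod p) (a : ZMod p) : ℤ) : ℝ) * (Real.pi * a / p - Real.pi / 2))) := by
    refine Filter.Tendsto.neg (tendsto_finsetSum _ fun a ha => ?_)
    rcases Nat.eq_zero_or_pos a with rfl | ha0
    · simp
    · obtain ⟨hs, harg⟩ := arg_root p a ha0 (Finset.mem_range.1 ha)
      rw [← harg]
      refine Filter.Tendsto.const_mul _ (Filter.Tendsto.mono_left ?_ nhdsWithin_le_nhds)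
      have hc : ContinuousAt (fun x : ℝ => (1 - (x:ℂ) * Complex.exp (2 * Real.pi * Complex.I / p) ^ a)) 1 := by
        fun_prop
      have hs' : (1 - ((1:ℝ):ℂ) * Complex.exp (2 * Real.pi * Complex.I / p) ^ a) ∈ Complex.slitPlane := by simpa using hs
      have := ContinuousAt.comp (f := fun x : ℝ => (1 - (x:ℂ) * Complex.exp (2 * Real.pi * Complex.I / p) ^ a)) (Complex.continuousAt_arg hs') hc
      simpa [ContinuousAt, Function.comp_def] using this
  have hev : (fun x : ℝ => √p * ∑' n : ℕ, (((quadraticChar (ZMod p) (n : ZMod p) : ℤ) : ℝ) / n) * x ^ n)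
      =ᶠ[nhdsWithin 1 (Set.Iio 1)] (fun x : ℝ => -∑ a ∈ Finset.range p, ((quadraticChar (ZMod p) (a : ZMod p) : ℤ) : ℝ) *
      (1 - (x:ℂ) * Complex.exp (2 * Real.pi * Complex.I / p) ^ a).arg) := by
    have : Set.Ioo (0:ℝ) 1 ∈ nhdsWithin (1:ℝ) (Set.Iio 1) := Ioo_mem_nhdsLT one_pos
    filter_upwards [this] with x hx
    exact log_identity p hmod x hx.1 hx.2
  have heq := tendsto_nhds_unique (hA.congr' hev) hB
  have hsplit : ∑ a ∈ Finset.range p, ((quadraticChar (ZMod p) (a : ZMod p) : ℤ) : ℝ) * (Real.pi * a / p - Real.pi / 2)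
      = Real.pi / p * ∑ a ∈ Finset.range p, (a:ℝ) * ((quadraticChar (ZMod p) (a : ZMod p) : ℤ) : ℝ) := by
    have hz := qc_sum_zero p hmod
    have : ∑ a ∈ Finset.range p, ((quadraticChar (ZMod p) (a : ZMod p) : ℤ) : ℝ) * (Real.pi * a / p - Real.pi / 2)
      = Real.pi / p * ∑ a ∈ Finset.range p, (a:ℝ) * ((quadraticChar (ZMod p) (a : ZMod p) : ℤ) : ℝ)
        - Real.pi / 2 * ∑ a ∈ Finset.range p, ((quadraticChar (ZMod p) (a : ZMod p) : ℤ) : ℝ) := by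
      rw [Finset.mul_sum, Finset.mul_sum, ← Finset.sum_sub_distrib]
      refine Finset.sum_congr rfl fun a _ => ?_
      ring
    rw [this, hz]; ring
  rw [hsplit] at heq
  have hpos : 0 < Real.pi / p := div_pos Real.pi_pos hp0
  have hl3 := mul_nonneg (Real.sqrt_nonneg p) hl0
  have hfin : ∑ a ∈ Finset.range p, (a:ℝ) * ((quadraticChar (ZMod p) (a : ZMod p) : ℤ) : ℝ) ≤ 0 := by
    by_contra hcon
    push Not at hcon
    have := mul_pos hpos hcon
    linarith
  exact_mod_cast hfin

end QR

open scoped Classical in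
/-- For a prime `p ≡ 3 (mod 4)`, the number of quadratic residues of `p`
in `[1, (p-1)/2]` exceeds `p/4`, i.e. `4 * R_b(p) > p`. -/
theorem four_mul_small_residues_card_gt_of_prime_mod_four_eq_three
    (p : ℕ) (hp : p.Prime) (hmod : p % 4 = 3) :
    4 * ((Finset.Icc 1 ((p - 1) / 2)).filter
        (fun y => ∃ x : ℤ, x ^ 2 ≡ (y : ℤ) [ZMOD (p : ℤ)])).card > p := by
  have := Fact.mk hp
  have h := QR.card_aux p hmod (QR.T_aux p hmod (QR.T_nonpos p hmod))
  refine lt_of_lt_of_le h (Nat.mul_le_mul_left 4 ?_)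
  refine Finset.card_le_card_of_injOn (fun y : ℕ => (y : ℤ)) ?_ (fun a _ b _ hab => Int.ofNat.inj hab)
  intro y hy
  rw [Finset.mem_coe, Finset.mem_filter] at hy
  rw [Finset.mem_coe, Finset.mem_filter]
  refine ⟨?_, hy.2⟩
  refine (@Finset.mem_sup _ _ (fun a b => Classical.propDecidable (a = b)) _ _ _).2 ?_
  exact ⟨y, hy.1, Finset.mem_singleton_self _⟩
end

section
/- Let p be a prime with p ≡ 7 (mod 8). Then the sum of all non-residues of p in [1, p−1] is strictly greater than the sum of all quadratic residues of p in [1, p−1], i.e. ΣN > ΣR. -/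
/-- Gaussian binomial coefficients evaluated at `q`. -/
noncomputable def qbin (q : ℂ) : ℕ → ℕ → ℂ
  | _, 0 => 1
  | 0, _ + 1 => 0
  | m + 1, j + 1 => qbin q m j + q ^ (j + 1) * qbin q m (j + 1)

lemma qbin_zero_right (q : ℂ) (m : ℕ) : qbin q m 0 = 1 := by cases m <;> simp [qbin]

lemma qbin_succ (q : ℂ) (m j : ℕ) :
    qbin q (m + 1) (j + 1) = qbin q m j + q ^ (j + 1) * qbin q m (j + 1) := by simp [qbin]

lemma qbin_big (q : ℂ) (m : ℕ) : ∀ j, m < j → qbin q m j = 0 := by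
  induction m with
  | zero => intro j hj; obtain ⟨j, rfl⟩ := Nat.exists_eq_succ_of_ne_zero hj.ne'; simp [qbin]
  | succ m ih =>
    intro j hj
    obtain ⟨j, rfl⟩ := Nat.exists_eq_succ_of_ne_zero (by omega : j ≠ 0)
    rw [Nat.succ_eq_add_one, qbin_succ, ih j (by omega), ih (j + 1) (by omega)]; simp

lemma qbin_absorb (q : ℂ) (m : ℕ) : ∀ j,
    (1 - q ^ (j + 1)) * qbin q (m + 1) (j + 1) = (1 - q ^ (m + 1)) * qbin q m j := by
  induction m with
  | zero =>
    intro j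
    cases j <;> simp [qbin]
  | succ m ih =>
    intro j
    rw [qbin_succ q (m + 1) j]
    have h1 := ih j
    cases j with
    | zero =>
      simp only [qbin_zero_right] at *
      linear_combination q ^ (0 + 1) * h1
    | succ j =>
      have h2 := ih j
      have h3 := qbin_succ q m j
      linear_combination q ^ (j + 1 + 1) * h1 - q * (1 - q ^ (m + 1)) * h3 + q * h2

lemma qbin_step (q : ℂ) (m j : ℕ) :
    q ^ j * (1 - q ^ (j + 1)) * qbin q m (j + 1) = (q ^ j - q ^ m) * qbin q m j := by
  cases m with
  | zero => cases j <;> simp [qbin]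
  | succ m =>
    rw [mul_assoc, qbin_absorb]
    cases j with
    | zero => simp [qbin_zero_right]
    | succ j =>
      have h2 := qbin_absorb q m j
      have h3 := qbin_succ q m j
      linear_combination (-(1 - q ^ (m + 1))) * h3 + h2

lemma gauss_rec (q : ℂ) (m : ℕ) :
    ∑ j ∈ Finset.range (m + 3), (-1) ^ j * qbin q (m + 2) j =
      (1 - q ^ (m + 1)) * ∑ j ∈ Finset.range (m + 1), (-1) ^ j * qbin q m j := by
  have e1 : ∑ j ∈ Finset.range (m + 3), (-1) ^ j * qbin q (m + 2) j =
      1 - ∑ j ∈ Finset.range (m + 2), (-1) ^ j * qbin q (m + 1) j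
       + ∑ j ∈ Finset.range (m + 2), (-1) ^ (j + 1) * (q ^ (j + 1) * qbin q (m + 1) (j + 1)) := by
    rw [Finset.sum_range_succ', qbin_zero_right, sub_add_eq_add_sub, add_sub_assoc,
      ← Finset.sum_sub_distrib]
    rw [add_comm]
    simp only [pow_zero, one_mul]
    congr 1
    refine Finset.sum_congr rfl fun j _ => ?_
    rw [qbin_succ q (m + 1) j]; ring
  have e2 : ∑ j ∈ Finset.range (m + 2), (-1) ^ j * qbin q (m + 1) j =
     1 + ∑ j ∈ Finset.range (m + 1), (-1) ^ (j + 1) * qbin q (m + 1) (j + 1) := by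
    rw [Finset.sum_range_succ', qbin_zero_right]; ring
  rw [e1, e2, Finset.sum_range_succ _ (m + 1), qbin_big q (m + 1) (m + 1 + 1) (by omega),
    Finset.mul_sum]
  have : ∀ j ∈ Finset.range (m + 1), (1 - q ^ (m + 1)) * ((-1) ^ j * qbin q m j) =
     (-1) ^ (j + 1) * (q ^ (j + 1) * qbin q (m + 1) (j + 1))
      - (-1) ^ (j + 1) * qbin q (m + 1) (j + 1) := by
    intro j _
    have := qbin_absorb q m j
    linear_combination (-(-1) ^ j) * this
  rw [Finset.sum_congr rfl this, Finset.sum_sub_distrib]; ring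

lemma gauss_prod (q : ℂ) (n : ℕ) :
    ∑ j ∈ Finset.range (2 * n + 1), (-1) ^ j * qbin q (2 * n) j =
      ∏ k ∈ Finset.range n, (1 - q ^ (2 * k + 1)) := by
  induction n with
  | zero => simp [qbin]
  | succ n ih => rw [Finset.prod_range_succ, ← ih, mul_comm _ (1 - _), ← gauss_rec]; rfl

lemma gauss_root (z : ℂ) (n : ℕ) (hz : IsPrimitiveRoot z (2 * n + 1)) :
    ∑ j ∈ Finset.range (2 * n + 1), z ^ (j * (j + 1)) =
      ∏ k ∈ Finset.range n, (1 - ((z ^ 2)⁻¹) ^ (2 * k + 1)) := by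
  have hz0 : z ≠ 0 := hz.ne_zero (by omega)
  rw [← gauss_prod]
  have hq : IsPrimitiveRoot ((z ^ 2)⁻¹) (2 * n + 1) :=
    (hz.pow_of_coprime 2 (by simp)).inv
  set q := (z ^ 2)⁻¹ with hqd
  have key : ∀ j, j ≤ 2 * n → (-1) ^ j * qbin q (2 * n) j = z ^ (j * (j + 1)) := by
    intro j
    induction j with
    | zero => simp [qbin_zero_right]
    | succ j ih =>
      intro hj
      have ih := ih (by omega)
      have h := qbin_step q (2 * n) j
      have h1 : q ^ (2 * n) * q = 1 := by rw [← pow_succ]; exact hq.pow_eq_one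
      have h2 : q ^ (j + 1) ≠ 1 := hq.pow_ne_one_of_pos_of_lt (by omega) (by omega)
      have h3 : q ^ (j + 1) * qbin q (2 * n) (j + 1) = - qbin q (2 * n) j := by
        apply mul_left_cancel₀ (sub_ne_zero.2 h2.symm)
        linear_combination q * h - qbin q (2 * n) j * h1
      have h4 : (z ^ 2) ^ (j + 1) * q ^ (j + 1) = 1 := by
        rw [← mul_pow, hqd, mul_inv_cancel₀ (pow_ne_zero _ hz0), one_pow]
      have h5 : z ^ ((j + 1) * (j + 1 + 1)) = (z ^ 2) ^ (j + 1) * z ^ (j * (j + 1)) := by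
        rw [← pow_mul, ← pow_add]; congr 1; ring
      rw [h5, ← ih]
      linear_combination ((-1) ^ (j + 1) * (z ^ 2) ^ (j + 1)) * h3 - (-1) ^ (j + 1) * qbin q (2 * n) (j + 1) * h4
  exact Finset.sum_congr rfl fun j hj => (key j (by simp at hj; omega)).symm

open Complex in
lemma gauss_pos_s13 (p r : ℕ) (hr : p = 8 * r + 7) :
    0 < (∑ j ∈ Finset.range p, (exp (2 * Real.pi * I / p)) ^ ((j + (4 * r + 4)) ^ 2)).im := by
  have hp0 : (0 : ℝ) < p := by exact_mod_cast (by omega : 0 < p)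
  have hpC : (p : ℂ) ≠ 0 := by exact_mod_cast (by omega : p ≠ 0)
  set z := exp (2 * Real.pi * I / p) with hz
  have hprim : IsPrimitiveRoot z p := isPrimitiveRoot_exp p (by omega)
  have hz0 : z ≠ 0 := exp_ne_zero _
  have hzp : z ^ p = 1 := hprim.pow_eq_one
  have hg := gauss_root z (4 * r + 3) (by convert hprim using 1; omega)
  rw [show 2 * (4 * r + 3) + 1 = p by omega] at hg
  have e1 : ∑ j ∈ Finset.range p, z ^ ((j + (4 * r + 4)) ^ 2) =
      z ^ ((4 * r + 4) ^ 2) * ∑ j ∈ Finset.range p, z ^ (j * (j + 1)) := by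
    rw [Finset.mul_sum]
    refine Finset.sum_congr rfl fun j _ => ?_
    rw [show (j + (4 * r + 4)) ^ 2 = (4 * r + 4) ^ 2 + j * (j + 1) + p * j by subst hr; ring,
      pow_add, pow_mul z p, hzp, one_pow, mul_one, pow_add]
  have e2 : ∀ k : ℕ, z ^ (2 * k + 1) * (1 - ((z ^ 2)⁻¹) ^ (2 * k + 1)) =
      I * ((2 * Real.sin (2 * Real.pi * (2 * k + 1) / p) : ℝ) : ℂ) := by
    intro k
    have h1 : z ^ (2 * k + 1) = exp ((2 * Real.pi * (2 * k + 1) / p : ℝ) * I) := by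
      rw [hz, ← exp_nat_mul]; congr 1; push_cast; ring
    have h2 : z ^ (2 * k + 1) * ((z ^ 2)⁻¹) ^ (2 * k + 1) = exp (-(2 * Real.pi * (2 * k + 1) / p : ℝ) * I) := by
      rw [neg_mul, exp_neg, ← h1, inv_pow, ← pow_mul, mul_comm 2, pow_mul]
      field_simp
      ring
    rw [mul_sub, mul_one, h2, h1]
    push_cast
    rw [Complex.sin]
    ring_nf
    simp only [I_sq]
    ring
  have e3 : ∀ n : ℕ, ∏ k ∈ Finset.range n, z ^ (2 * k + 1) = z ^ (n ^ 2) := by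
    intro n
    induction n with
    | zero => simp
    | succ n ih => rw [Finset.prod_range_succ, ih, ← pow_add]; congr 1; ring
  have e4 : z ^ ((4 * r + 4) ^ 2) = z ^ ((4 * r + 3) ^ 2) := by
    rw [show (4 * r + 4) ^ 2 = (4 * r + 3) ^ 2 + p by subst hr; ring, pow_add, hzp, mul_one]
  rw [e1, hg, e4, ← e3, ← Finset.prod_mul_distrib, Finset.prod_congr rfl fun k _ => e2 k,
    Finset.prod_mul_distrib, Finset.prod_const, Finset.card_range, ← ofReal_prod]
  have hI : I ^ (4 * r + 3) = -I := by
    rw [pow_add, pow_mul, I_pow_four, one_pow, one_mul, I_pow_three]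
  rw [hI]
  simp only [mul_im, neg_re, I_re, ofReal_im, neg_im, I_im, ofReal_re]
  have hpr : (p : ℝ) = 8 * r + 7 := by exact_mod_cast hr
  have hneg : ∏ k ∈ Finset.range (4 * r + 3), (2 * Real.sin (2 * Real.pi * (2 * k + 1) / p)) < 0 := by
    rw [show 4 * r + 3 = (2 * r + 2) + (2 * r + 1) by ring, Finset.prod_range_add]
    apply mul_neg_of_pos_of_neg
    · refine Finset.prod_pos fun k hk => ?_
      simp only [Finset.mem_range] at hk
      have hk' : (k : ℝ) ≤ 2 * r + 1 := by exact_mod_cast (by omega : k ≤ 2 * r + 1)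
      refine mul_pos two_pos (Real.sin_pos_of_pos_of_lt_pi ?_ ?_)
      · have := Real.pi_pos; positivity
      · rw [div_lt_iff₀ hp0]; nlinarith [Real.pi_pos]
    · have : ∀ i ∈ Finset.range (2 * r + 1), 2 * Real.sin (2 * Real.pi * (2 * ((2 * r + 2 + i : ℕ) : ℝ) + 1) / p)
          = (-1) * (2 * Real.sin (2 * Real.pi * (2 * ((2 * r + 2 + i : ℕ) : ℝ) + 1) / p - Real.pi)) := by
        intro i _; rw [Real.sin_sub_pi]; ring
      rw [Finset.prod_congr rfl this, Finset.prod_mul_distrib, Finset.prod_const, Finset.card_range,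
        Odd.neg_one_pow ⟨r, rfl⟩, neg_one_mul, neg_neg_iff_pos]
      refine Finset.prod_pos fun k hk => ?_
      simp only [Finset.mem_range] at hk
      have hk' : (k : ℝ) ≤ 2 * r := by exact_mod_cast (by omega : k ≤ 2 * r)
      have hk0 : (0 : ℝ) ≤ k := by positivity
      refine mul_pos two_pos (Real.sin_pos_of_pos_of_lt_pi ?_ ?_)
      · rw [sub_pos, lt_div_iff₀ hp0]; push_cast; nlinarith [Real.pi_pos]
      · rw [sub_lt_iff_lt_add, div_lt_iff₀ hp0]; push_cast; nlinarith [Real.pi_pos]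
  linarith

section analytic
open Filter Topology


lemma abel_upper (c w : ℕ → ℝ) (B : ℝ) (hw : Antitone w) (hw0 : ∀ n, 0 ≤ w n)
    (hB : ∀ n, ∑ i ∈ Finset.range n, c i ≤ B) (n : ℕ) :
    ∑ i ∈ Finset.range n, c i * w i ≤ B * w 0 := by
  have e : ∀ n, ∑ i ∈ Finset.range n, c i * w i = (∑ i ∈ Finset.range n, c i) * w n +
      ∑ i ∈ Finset.range n, (∑ k ∈ Finset.range (i + 1), c k) * (w i - w (i + 1)) := by
    intro n
    induction n with
    | zero => simp
    | succ n ih =>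
      rw [Finset.sum_range_succ, ih, Finset.sum_range_succ
        (fun i => (∑ k ∈ Finset.range (i + 1), c k) * (w i - w (i + 1))), Finset.sum_range_succ c n]
      ring
  rw [e]
  have h1 : ∑ i ∈ Finset.range n, (∑ k ∈ Finset.range (i + 1), c k) * (w i - w (i + 1)) ≤
      ∑ i ∈ Finset.range n, B * (w i - w (i + 1)) :=
    Finset.sum_le_sum fun i _ => mul_le_mul_of_nonneg_right (hB _)
      (sub_nonneg.2 (hw (Nat.le_succ i)))
  rw [← Finset.mul_sum, Finset.sum_range_sub'] at h1
  have := mul_le_mul_of_nonneg_right (hB n) (hw0 n)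
  linarith

lemma euler_nonneg (c : ℕ →*₀ ℝ) (hc : ∀ n, |c n| ≤ 1) (s : ℝ) (hs : 1 < s) :
    Summable (fun n : ℕ => c n * (n : ℝ) ^ (-s)) ∧ 0 ≤ ∑' n : ℕ, c n * (n : ℝ) ^ (-s) := by
  let f : ℕ →*₀ ℝ :=
    { toFun := fun n => c n * (n : ℝ) ^ (-s)
      map_zero' := by simp
      map_one' := by simp
      map_mul' := fun m n => by
        rw [map_mul, Nat.cast_mul, Real.mul_rpow (by positivity) (by positivity)]; ring }
  have hb : ∀ n, ‖f n‖ ≤ (n : ℝ) ^ (-s) := by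
    intro n
    have h0 : (0 : ℝ) ≤ (n : ℝ) ^ (-s) := by positivity
    change |c n * (n : ℝ) ^ (-s)| ≤ _
    rw [abs_mul, abs_of_nonneg h0]
    exact mul_le_of_le_one_left h0 (hc n)
  have hsum : Summable (fun n => ‖f n‖) :=
    Summable.of_nonneg_of_le (fun _ => norm_nonneg _) hb
      (Real.summable_nat_rpow.2 (by linarith))
  refine ⟨hsum.of_norm, ?_⟩
  refine ge_of_tendsto' (EulerProduct.eulerProduct_completely_multiplicative hsum) fun n => ?_
  refine Finset.prod_nonneg fun q hq => inv_nonneg.2 ?_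
  have hq1 : (1 : ℝ) ≤ q := by
    exact_mod_cast (Nat.prime_of_mem_primesBelow hq).one_le
  have h1 : (q : ℝ) ^ (-s) ≤ 1 := Real.rpow_le_one_of_one_le_of_nonpos hq1 (by linarith)
  have := (le_abs_self (f q)).trans ((hb q).trans h1)
  linarith

lemma L_one_nonneg (c : ℕ →*₀ ℝ) (hc : ∀ n, |c n| ≤ 1) (B : ℝ)
    (hB : ∀ n, |∑ i ∈ Finset.range n, c i| ≤ B) :
    ∃ l : ℝ, 0 ≤ l ∧ Tendsto (fun n => ∑ i ∈ Finset.range n, c i / i) atTop (𝓝 l) := by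
  have hconv : CauchySeq fun n => ∑ i ∈ Finset.range n, (1 / ((i : ℝ) + 1)) • c (i + 1) := by
    refine Antitone.cauchySeq_series_mul_of_tendsto_zero_of_bounded (b := B) ?_ ?_ ?_
    · intro a b hab
      have : (a : ℝ) ≤ b := by exact_mod_cast hab
      exact one_div_le_one_div_of_le (by positivity) (by linarith)
    · exact tendsto_one_div_add_atTop_nhds_zero_nat
    · intro n
      have := hB (n + 1)
      rw [Finset.sum_range_succ'] at this
      simpa using this
  obtain ⟨l, hl⟩ := cauchySeq_tendsto_of_complete hconv
  have hl' : Tendsto (fun n => ∑ i ∈ Finset.range n, c i / i) atTop (𝓝 l) := by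
    rw [← tendsto_add_atTop_iff_nat 1]
    refine hl.congr fun n => ?_
    rw [Finset.sum_range_succ']
    simp only [map_zero, zero_div, add_zero]
    refine Finset.sum_congr rfl fun i _ => ?_
    simp only [smul_eq_mul]; push_cast; ring
  refine ⟨l, ?_, hl'⟩
  have hS : ∀ N : ℕ, -(2 * B) * (1 / ((N : ℝ) + 1)) ≤ ∑ i ∈ Finset.range (N + 1), c i / i := by
    intro N
    have h1 : ∀ s : ℝ, 1 < s → -(2 * B) * ((N : ℝ) + 1) ^ (-s) ≤
        ∑ i ∈ Finset.range (N + 1), c i * (i : ℝ) ^ (-s) := by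
      intro s hs
      obtain ⟨hsum, hpos⟩ := euler_nonneg c hc s hs
      have ht := hsum.hasSum.tendsto_sum_nat
      have ht' := (tendsto_add_atTop_iff_nat (N + 1)).2 ht
      have hle : ∑' n : ℕ, c n * (n : ℝ) ^ (-s) ≤
          ∑ i ∈ Finset.range (N + 1), c i * (i : ℝ) ^ (-s) + 2 * B * ((N : ℝ) + 1) ^ (-s) := by
        refine le_of_tendsto' ht' fun M => ?_
        rw [add_comm M, Finset.sum_range_add]
        gcongr
        have := abel_upper (fun i => c (N + 1 + i)) (fun i => ((N + 1 + i : ℕ) : ℝ) ^ (-s)) (2 * B)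
          ?_ ?_ ?_ M
        · simpa using this
        · intro a b hab
          have : (a : ℝ) ≤ b := by exact_mod_cast hab
          refine Real.rpow_le_rpow_of_nonpos ?_ ?_ (by linarith) <;> push_cast
          · positivity
          · linarith
        · intro n; positivity
        · intro n
          have e := Finset.sum_range_add (fun i => c i) (N + 1) n
          have b1 := (abs_le.1 (hB (N + 1))).1
          have b2 := (abs_le.1 (hB (N + 1 + n))).2
          linarith
      linarith
    have hr : ∀ x : ℝ, x ≠ 0 → Tendsto (fun s : ℝ => x ^ (-s)) (𝓝[>] 1) (𝓝 (x ^ (-1 : ℝ))) := by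
      intro x hx
      have : ContinuousAt (fun s : ℝ => x ^ (-s)) 1 :=
        (Real.continuousAt_const_rpow hx).comp continuousAt_neg
      exact this.tendsto.mono_left nhdsWithin_le_nhds
    have hN : ((N : ℝ) + 1) ≠ 0 := by positivity
    have t1 : Tendsto (fun s : ℝ => -(2 * B) * ((N : ℝ) + 1) ^ (-s)) (𝓝[>] 1)
        (𝓝 (-(2 * B) * (1 / ((N : ℝ) + 1)))) := by
      have := (hr _ hN).const_mul (-(2 * B))
      rwa [Real.rpow_neg_one, ← one_div] at this
    have t2 : Tendsto (fun s : ℝ => ∑ i ∈ Finset.range (N + 1), c i * (i : ℝ) ^ (-s)) (𝓝[>] 1)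
        (𝓝 (∑ i ∈ Finset.range (N + 1), c i / i)) := by
      refine tendsto_finsetSum _ fun i _ => ?_
      rcases Nat.eq_zero_or_pos i with rfl | hi
      · simp
      · have := (hr (i : ℝ) (by positivity)).const_mul (c i)
        rwa [Real.rpow_neg_one, ← div_eq_mul_inv] at this
    exact le_of_tendsto_of_tendsto t1 t2 (eventually_nhdsWithin_of_forall fun s hs => h1 s hs)
  have t3 : Tendsto (fun N : ℕ => -(2 * B) * (1 / ((N : ℝ) + 1))) atTop (𝓝 0) := by
    simpa using (tendsto_one_div_add_atTop_nhds_zero_nat (𝕜 := ℝ)).const_mul (-(2 * B))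
  exact le_of_tendsto_of_tendsto' t3 ((tendsto_add_atTop_iff_nat 1).2 hl') hS

open Complex in
lemma hasSum_sin (t r : ℝ) (hr0 : 0 ≤ r) (hr1 : r < 1) :
    HasSum (fun n : ℕ => Real.sin (2 * Real.pi * t * n) / n * r ^ n)
      (-(log (1 - r * exp ((2 * Real.pi * t : ℝ) * I))).im) := by
  have h := hasSum_taylorSeries_neg_log (z := r * exp ((2 * Real.pi * t : ℝ) * I))
    (by rw [norm_mul, norm_exp_ofReal_mul_I, norm_real, mul_one]; rwa [Real.norm_of_nonneg hr0])
  have h2 := Complex.hasSum_im h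
  rw [neg_im] at h2
  refine h2.congr_fun fun n => ?_
  rw [mul_pow, ← exp_nat_mul, ← mul_assoc, ← ofReal_natCast, ← ofReal_mul, ← ofReal_pow,
    mul_div_right_comm, ← ofReal_div, im_ofReal_mul, exp_ofReal_mul_I_im,
    mul_comm (n : ℝ) (2 * Real.pi * t)]
  ring

open Complex in
lemma tendsto_log_im (t : ℝ) (ht0 : 0 < t) (ht1 : t < 1) :
    Tendsto (fun r : ℝ => -(log (1 - r * exp ((2 * Real.pi * t : ℝ) * I))).im) (𝓝[<] 1)
      (𝓝 (Real.pi * (1 / 2 - t))) := by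
  have hpi := Real.pi_pos
  have hs : 0 < Real.sin (Real.pi * t) :=
    Real.sin_pos_of_pos_of_lt_pi (by positivity) (by nlinarith)
  have e1 : (1 : ℂ) - exp ((2 * Real.pi * t : ℝ) * I) = ((2 * Real.sin (Real.pi * t) : ℝ) : ℂ) *
      (cos ((Real.pi * t - Real.pi / 2 : ℝ)) + sin ((Real.pi * t - Real.pi / 2 : ℝ)) * I) := by
    rw [← ofReal_cos, ← ofReal_sin, Real.cos_sub_pi_div_two, Real.sin_sub_pi_div_two]
    rw [show (2 * Real.pi * t) = 2 * (Real.pi * t) by ring, exp_mul_I, ← ofReal_cos, ← ofReal_sin,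
      Real.cos_two_mul, Real.sin_two_mul]
    have := Real.sin_sq_add_cos_sq (Real.pi * t)
    have h : ((Real.sin (Real.pi * t) : ℝ) : ℂ) ^ 2 + ((Real.cos (Real.pi * t) : ℝ) : ℂ) ^ 2 = 1 := by
      exact_mod_cast this
    push_cast at h ⊢
    linear_combination -2 * h
  have earg : (log ((1 : ℂ) - exp ((2 * Real.pi * t : ℝ) * I))).im = Real.pi * t - Real.pi / 2 := by
    rw [log_im, e1]
    exact arg_mul_cos_add_sin_mul_I (by positivity) ⟨by nlinarith, by nlinarith⟩
  have hslit : (1 : ℂ) - (1 : ℝ) * exp ((2 * Real.pi * t : ℝ) * I) ∈ slitPlane := by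
    left
    rw [ofReal_one, one_mul, sub_re, one_re, exp_ofReal_mul_I_re,
      show (2 * Real.pi * t) = 2 * (Real.pi * t) by ring, Real.cos_two_mul]
    nlinarith [Real.sin_sq_add_cos_sq (Real.pi * t)]
  have hc : ContinuousAt (fun r : ℝ => -(log (1 - r * exp ((2 * Real.pi * t : ℝ) * I))).im) 1 := by
    have h1 : ContinuousAt (fun r : ℝ => log (1 - r * exp ((2 * Real.pi * t : ℝ) * I))) 1 := by
      refine ContinuousAt.clog ?_ hslit
      fun_prop
    have h2 := continuous_im.continuousAt.comp h1
    exact h2.neg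
  have := hc.tendsto.mono_left (nhdsWithin_le_nhds (s := Set.Iio 1))
  rw [ofReal_one, one_mul, earg] at this
  convert this using 2
  ring

lemma sum_range_zmod {M : Type*} [AddCommMonoid M] (p : ℕ) [NeZero p] (f : ZMod p → M) :
    ∑ y ∈ Finset.range p, f (y : ZMod p) = ∑ x : ZMod p, f x := by
  refine Finset.sum_nbij' (fun y => (y : ZMod p)) (fun x => x.val) ?_ ?_ ?_ ?_ ?_
  · simp
  · intro x _; simpa using ZMod.val_lt x
  · intro y hy; exact ZMod.val_cast_of_lt (by simpa using hy)
  · intro x _; simp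
  · simp

section main
variable (p : ℕ) [Fact p.Prime]

/-- The quadratic character modulo `p` as a real-valued function on the natural numbers. -/
noncomputable def qc : ℕ →*₀ ℝ where
  toFun n := ((quadraticChar (ZMod p) (n : ZMod p) : ℤ) : ℝ)
  map_zero' := by simp
  map_one' := by simp
  map_mul' m n := by rw [Nat.cast_mul, map_mul, Int.cast_mul]

lemma qc_apply (n : ℕ) : qc p n = ((quadraticChar (ZMod p) (n : ZMod p) : ℤ) : ℝ) := rfl

lemma qc_abs (n : ℕ) : |qc p n| ≤ 1 := by
  rw [qc_apply]
  by_cases h : (n : ZMod p) = 0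
  · simp [h]
  · rcases quadraticChar_dichotomy h with h | h <;> simp [h]

lemma qc_sum_zero (hp2 : p ≠ 2) : ∑ y ∈ Finset.range p, qc p y = 0 := by
  have h := quadraticChar_sum_zero (F := ZMod p) (by rwa [ZMod.ringChar_zmod_n])
  have h2 := sum_range_zmod p (fun x => ((quadraticChar (ZMod p) x : ℤ) : ℝ))
  simp only [qc_apply]
  rw [h2]
  exact_mod_cast h

lemma qc_bound (hp2 : p ≠ 2) (n : ℕ) : |∑ i ∈ Finset.range n, qc p i| ≤ p := by
  induction n using Nat.strong_induction_on with
  | _ n ih =>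
    by_cases hn : n < p
    · calc |∑ i ∈ Finset.range n, qc p i| ≤ ∑ i ∈ Finset.range n, |qc p i| :=
            Finset.abs_sum_le_sum_abs _ _
        _ ≤ ∑ i ∈ Finset.range n, 1 := Finset.sum_le_sum fun i _ => qc_abs p i
        _ = n := by simp
        _ ≤ p := by exact_mod_cast hn.le
    · obtain ⟨m, rfl⟩ := Nat.exists_eq_add_of_le (not_lt.1 hn)
      have hpos : 0 < p := (Fact.out : p.Prime).pos
      rw [Finset.sum_range_add, qc_sum_zero p hp2, zero_add]
      have : ∀ i, qc p (p + i) = qc p i := fun i => by simp [qc_apply]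
      simp only [this]
      exact ih m (by omega)

/-- The quadratic character with complex values. -/
noncomputable def qcC : MulChar (ZMod p) ℂ :=
  (quadraticChar (ZMod p)).ringHomComp (Int.castRingHom ℂ)

lemma qcC_apply (x : ZMod p) : qcC p x = ((quadraticChar (ZMod p) x : ℤ) : ℂ) := rfl

lemma gauss_shift_s13 (hp2 : p ≠ 2) (n : ZMod p) :
    gaussSum (qcC p) (ZMod.stdAddChar.mulShift n) =
      qcC p n * gaussSum (qcC p) ZMod.stdAddChar := by
  by_cases hn : n = 0
  · subst hn
    have h := quadraticChar_sum_zero (F := ZMod p) (by rwa [ZMod.ringChar_zmod_n])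
    simp only [gaussSum, AddChar.mulShift_apply, zero_mul, AddChar.map_zero_eq_one, mul_one,
      MulChar.map_zero]
    simp only [qcC_apply]
    exact_mod_cast h
  · have h := gaussSum_mulShift (qcC p) ZMod.stdAddChar (Units.mk0 n hn)
    rw [Units.val_mk0] at h
    rw [← h, ← mul_assoc]
    have : qcC p n * qcC p n = 1 := by
      rw [qcC_apply]
      have := quadraticChar_sq_one hn
      rw [sq] at this
      exact_mod_cast this
    rw [this, one_mul]

lemma char_nat (k : ℕ) : (ZMod.stdAddChar (k : ZMod p) : ℂ) =
    Complex.exp (2 * Real.pi * Complex.I / p) ^ k := by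
  have := ZMod.stdAddChar_coe (N := p) (k : ℤ)
  rw [Int.cast_natCast] at this
  rw [this, ← Complex.exp_nat_mul]
  congr 1; push_cast; ring

lemma T_im (n : ℕ) : ∑ y ∈ Finset.range p, qc p y * Real.sin (2 * Real.pi * (y / p : ℝ) * n) =
    (gaussSum (qcC p) (ZMod.stdAddChar.mulShift (n : ZMod p))).im := by
  rw [gaussSum, ← sum_range_zmod p, Complex.im_sum]
  refine Finset.sum_congr rfl fun y _ => ?_
  rw [AddChar.mulShift_apply, ← Nat.cast_mul, char_nat, ← Complex.exp_nat_mul, qcC_apply, qc_apply,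
    ← Complex.ofReal_intCast, Complex.im_ofReal_mul]
  congr 1
  rw [← Complex.exp_ofReal_mul_I_im]
  congr 2
  push_cast; ring

lemma T_mul (hp2 : p ≠ 2) (n : ℕ) :
    ∑ y ∈ Finset.range p, qc p y * Real.sin (2 * Real.pi * (y / p : ℝ) * n) =
    qc p n * (gaussSum (qcC p) ZMod.stdAddChar).im := by
  rw [T_im, gauss_shift_s13 p hp2, qcC_apply, qc_apply, ← Complex.ofReal_intCast, Complex.im_ofReal_mul]

lemma gaussSum_im_pos (hmod : p % 8 = 7) : 0 < (gaussSum (qcC p) ZMod.stdAddChar).im := by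
  have hp2 : p ≠ 2 := by omega
  have h := gauss_pos_s13 p (p / 8) (by omega)
  convert h using 2
  set ψ : AddChar (ZMod p) ℂ := ZMod.stdAddChar
  have e1 : ∑ j ∈ Finset.range p, Complex.exp (2 * Real.pi * Complex.I / p) ^
      ((j + (4 * (p / 8) + 4)) ^ 2) = ∑ x : ZMod p, ψ (x ^ 2) := by
    simp only [← char_nat]
    push_cast
    rw [sum_range_zmod p (fun x => ψ ((x + (4 * ((p / 8 : ℕ) : ZMod p) + 4)) ^ 2))]
    exact Equiv.sum_comp (Equiv.addRight (4 * ((p / 8 : ℕ) : ZMod p) + 4)) (fun x => ψ (x ^ 2))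
  have e2 : ∑ x : ZMod p, ψ (x ^ 2) = ∑ a : ZMod p, (qcC p a + 1) * ψ a := by
    rw [← Finset.sum_fiberwise' Finset.univ (fun x : ZMod p => x ^ 2) (fun a => ψ a)]
    refine Finset.sum_congr rfl fun a _ => ?_
    rw [Finset.sum_const, nsmul_eq_mul, qcC_apply]
    congr 1
    have := quadraticChar_card_sqrts (F := ZMod p) (by rwa [ZMod.ringChar_zmod_n]) a
    rw [Set.toFinset_ofPred] at this
    exact_mod_cast this
  have e3 : ∑ a : ZMod p, ψ a = 0 := by
    have hp1 : Nontrivial (ZMod p) := inferInstance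
    have := (ZMod.isPrimitive_stdAddChar p) (one_ne_zero)
    rw [AddChar.mulShift_one] at this
    exact AddChar.sum_eq_zero_of_ne_one this
  rw [e1, e2, gaussSum]
  simp only [add_mul, one_mul]
  rw [Finset.sum_add_distrib, e3, add_zero]

lemma qc_weighted (hmod : p % 8 = 7) : ∑ y ∈ Finset.range p, qc p y * y ≤ 0 := by
  have hp2 : p ≠ 2 := by omega
  have hp0 : (0 : ℝ) < p := by exact_mod_cast (by omega : 0 < p)
  obtain ⟨l, hl0, hl⟩ := L_one_nonneg (qc p) (qc_abs p) p (qc_bound p hp2)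
  have hA := Real.tendsto_tsum_powerSeries_nhdsWithin_lt hl
  set G := (gaussSum (qcC p) ZMod.stdAddChar).im with hG
  have hGpos : 0 < G := gaussSum_im_pos p hmod
  let V : ℝ → ℝ := fun r => ∑ y ∈ Finset.range p, qc p y *
    (-(Complex.log (1 - r * Complex.exp ((2 * Real.pi * (y / p : ℝ) : ℝ) * Complex.I))).im)
  have hV1 : Tendsto V (𝓝[<] 1)
      (𝓝 (∑ y ∈ Finset.range p, qc p y * (Real.pi * (1 / 2 - (y / p : ℝ))))) := by
    refine tendsto_finsetSum _ fun y hy => ?_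
    rcases Nat.eq_zero_or_pos y with rfl | hy0
    · simp
    · have hyp : (y : ℝ) < p := by exact_mod_cast Finset.mem_range.1 hy
      exact (tendsto_log_im (y / p : ℝ) (by positivity) ((div_lt_one hp0).2 hyp)).const_mul _
  have hV2 : Tendsto V (𝓝[<] 1) (𝓝 (G * l)) := by
    refine (hA.const_mul G).congr' ?_
    have hmem : Set.Ioo (0 : ℝ) 1 ∈ 𝓝[<] (1 : ℝ) := Ioo_mem_nhdsLT one_pos
    filter_upwards [hmem] with r hr
    have h1 : HasSum (fun n : ℕ => ∑ y ∈ Finset.range p,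
        qc p y * (Real.sin (2 * Real.pi * (y / p : ℝ) * n) / n * r ^ n)) (V r) :=
      hasSum_sum fun y _ => (hasSum_sin (y / p : ℝ) r hr.1.le hr.2).mul_left _
    rw [← h1.tsum_eq, ← tsum_mul_left]
    refine tsum_congr fun n => ?_
    have := T_mul p hp2 n
    rw [← hG] at this
    calc G * (qc p n / n * r ^ n) = (qc p n * G) * (r ^ n / n) := by ring
      _ = _ := by
        rw [← this, Finset.sum_mul]
        exact Finset.sum_congr rfl fun y _ => by ring
  have he := tendsto_nhds_unique hV1 hV2
  have hsum : ∑ y ∈ Finset.range p, qc p y * (Real.pi * (1 / 2 - (y / p : ℝ))) =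
      -(Real.pi / p) * ∑ y ∈ Finset.range p, qc p y * y := by
    have : ∀ y ∈ Finset.range p, qc p y * (Real.pi * (1 / 2 - (y / p : ℝ))) =
        Real.pi / 2 * qc p y + -(Real.pi / p) * (qc p y * y) := fun y _ => by ring
    rw [Finset.sum_congr rfl this, Finset.sum_add_distrib, ← Finset.mul_sum, ← Finset.mul_sum,
      qc_sum_zero p hp2]
    ring
  rw [hsum] at he
  by_contra hcon
  push Not at hcon
  have h1 : 0 < Real.pi / p * ∑ y ∈ Finset.range p, qc p y * y :=
    mul_pos (div_pos Real.pi_pos hp0) hcon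
  have h2 : 0 ≤ G * l := mul_nonneg hGpos.le hl0
  linarith

end main

end analytic

open scoped Classical in
/-- For a prime `p ≡ 7 (mod 8)`, the sum of all non-residues of `p` in `[1, p-1]`
is strictly greater than the sum of all quadratic residues of `p` in `[1, p-1]`. -/
theorem sum_nonresidues_gt_sum_residues_of_prime_mod_eight_eq_seven
    (p : ℕ) (hp : p.Prime) (hmod : p % 8 = 7) :
    ∑ y ∈ (Finset.Icc 1 (p - 1)).filter
        (fun y => ∃ x : ℤ, x ^ 2 ≡ (y : ℤ) [ZMOD (p : ℤ)]), y <
      ∑ y ∈ (Finset.Icc 1 (p - 1)).filter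
        (fun y => ¬ ∃ x : ℤ, x ^ 2 ≡ (y : ℤ) [ZMOD (p : ℤ)]), y := by
  have : Fact p.Prime := ⟨hp⟩
  have hw := qc_weighted p hmod
  have hR : Finset.range p = insert 0 (Finset.Icc 1 (p - 1)) := by
    ext y; simp only [Finset.mem_range, Finset.mem_insert, Finset.mem_Icc]; omega
  rw [hR, Finset.sum_insert (by simp)] at hw
  have hadd := Finset.sum_filter_add_sum_filter_not (Finset.Icc 1 (p - 1))
    (fun y : ℕ => ∃ x : ℤ, x ^ 2 ≡ (y : ℤ) [ZMOD (p : ℤ)]) (fun y => y)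
  have htot : ∑ y ∈ Finset.Icc 1 (p - 1), y = p * (p - 1) / 2 := by
    rw [← Finset.sum_range_id, hR, Finset.sum_insert (by simp), zero_add]
  have hodd : (p * (p - 1) / 2) % 2 = 1 := by
    obtain ⟨k, hk⟩ : ∃ k, p = 8 * k + 7 := ⟨p / 8, by omega⟩
    have : p * (p - 1) = 2 * (2 * (16 * k ^ 2 + 26 * k + 10) + 1) := by
      rw [hk, show 8 * k + 7 - 1 = 8 * k + 6 by omega]; ring
    rw [this, Nat.mul_div_cancel_left _ two_pos]
    omega
  have hdiff : ((∑ y ∈ (Finset.Icc 1 (p - 1)).filter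
        (fun y : ℕ => ∃ x : ℤ, x ^ 2 ≡ (y : ℤ) [ZMOD (p : ℤ)]), y : ℕ) : ℝ) -
      ((∑ y ∈ (Finset.Icc 1 (p - 1)).filter
        (fun y : ℕ => ¬ ∃ x : ℤ, x ^ 2 ≡ (y : ℤ) [ZMOD (p : ℤ)]), y : ℕ) : ℝ) =
      ∑ y ∈ Finset.Icc 1 (p - 1), qc p y * y := by
    rw [Finset.sum_filter, Finset.sum_filter]
    push_cast
    rw [← Finset.sum_sub_distrib]
    refine Finset.sum_congr rfl fun y hy => ?_
    rw [Finset.mem_Icc] at hy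
    have hy0 : (y : ZMod p) ≠ 0 := by
      rw [Ne, ZMod.natCast_eq_zero_iff]
      exact Nat.not_dvd_of_pos_of_lt (by omega) (by omega)
    have hiff : (∃ x : ℤ, x ^ 2 ≡ (y : ℤ) [ZMOD (p : ℤ)]) ↔ IsSquare (y : ZMod p) := by
      constructor
      · rintro ⟨x, hx⟩
        rw [← ZMod.intCast_eq_intCast_iff] at hx
        push_cast at hx
        exact ⟨x, by rw [← hx, sq]⟩
      · rintro ⟨a, ha⟩
        obtain ⟨x, rfl⟩ := ZMod.intCast_surjective a
        refine ⟨x, ?_⟩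
        rw [← ZMod.intCast_eq_intCast_iff]
        push_cast
        rw [ha, sq]
    rw [qc_apply]
    by_cases h : ∃ x : ℤ, x ^ 2 ≡ (y : ℤ) [ZMOD (p : ℤ)]
    · rw [(quadraticChar_one_iff_isSquare hy0).2 (hiff.1 h)]
      simp [h]
    · rw [quadraticChar_neg_one_iff_not_isSquare.2 (fun h' => h (hiff.2 h'))]
      simp [h]
  rw [htot] at hadd
  have hlt : (∑ y ∈ (Finset.Icc 1 (p - 1)).filter
        (fun y : ℕ => ∃ x : ℤ, x ^ 2 ≡ (y : ℤ) [ZMOD (p : ℤ)]), y) <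
      ∑ y ∈ (Finset.Icc 1 (p - 1)).filter
        (fun y : ℕ => ¬ ∃ x : ℤ, x ^ 2 ≡ (y : ℤ) [ZMOD (p : ℤ)]), y := by
    generalize (∑ y ∈ (Finset.Icc 1 (p - 1)).filter
        (fun y : ℕ => ∃ x : ℤ, x ^ 2 ≡ (y : ℤ) [ZMOD (p : ℤ)]), y) = A at *
    generalize (∑ y ∈ (Finset.Icc 1 (p - 1)).filter
        (fun y : ℕ => ¬ ∃ x : ℤ, x ^ 2 ≡ (y : ℤ) [ZMOD (p : ℤ)]), y) = C at *
    have hle : (A : ℝ) ≤ C := by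
      rw [← hdiff] at hw
      simp only [CharP.cast_eq_zero, mul_zero, zero_add] at hw
      linarith
    have hle' : A ≤ C := by exact_mod_cast hle
    omega
  -- the sums in the statement range over the image of `[1, p - 1]` in `ℤ`
  have htrans : ∀ (P : ℤ → Prop) [DecidablePred P],
      ∑ y ∈ ((Finset.Icc 1 (p - 1)).map (Nat.castEmbedding (R := ℤ))).filter P, y =
      ((∑ y ∈ (Finset.Icc 1 (p - 1)).filter (fun y : ℕ => P (y : ℤ)), y : ℕ) : ℤ) := by
    intro P _
    rw [Finset.sum_filter, Finset.sum_map, Finset.sum_filter]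
    simp
  have key : ∀ S : Finset ℤ, S = (Finset.Icc 1 (p - 1)).map (Nat.castEmbedding (R := ℤ)) →
      ∑ y ∈ S.filter (fun y => ∃ x : ℤ, x ^ 2 ≡ y [ZMOD (p : ℤ)]), y <
      ∑ y ∈ S.filter (fun y => ¬ ∃ x : ℤ, x ^ 2 ≡ y [ZMOD (p : ℤ)]), y := by
    rintro S rfl
    rw [htrans, htrans]
    rw [Int.ofNat_lt]
    convert hlt
  refine key _ ?_
  simp only [Finset.bind_def, Finset.pure_def]
  ext y
  refine (@Finset.mem_sup _ _ (fun a b => Classical.propDecidable (a = b)) _ _ _).trans ?_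
  simp only [Finset.mem_map, Finset.mem_singleton, Nat.castEmbedding_apply]
  exact ⟨fun ⟨a, h1, h2⟩ => ⟨a, h1, h2.symm⟩, fun ⟨a, h1, h2⟩ => ⟨a, h1, h2.symm⟩⟩
end
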